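/- Pumping theorem for 2-VASS: there exists a polynomial p with natural-number coefficients such that for every 2-VASS V with n control states and norm M, every (0,0)-run τ of V of length greater than p(nM)ⁿ factors into τ = τ₀τ₁⋯τ_k for some k ≥ 1, such that there exist non-empty cycles α₁,…,α_k, each of length at most p(nM)ⁿ, for which the path τ₀ α₁ⁱ τ₁ α₂ⁱ ⋯ α_kⁱ τ_k is a (0,0)-run for every i ∈ ℕ; furthermore, the lengths of τ₀ and τ_k are at most p(nM)ⁿ. -/

import Mathlib

/-- Integer vectors in the plane. -/
abbrev Vec2 : Type := ℤ × ℤ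

/-- The norm of a vector: the maximum of the absolute values of its coordinates. -/
def vnorm (v : Vec2) : ℕ := max v.1.natAbs v.2.natAbs

/-- A vector is positive if both coordinates are positive. -/
def Pos (v : Vec2) : Prop := 0 < v.1 ∧ 0 < v.2

/-- A vector is semi-positive if both coordinates are nonnegative and one is positive. -/
def SemiPos (v : Vec2) : Prop := 0 ≤ v.1 ∧ 0 ≤ v.2 ∧ (0 < v.1 ∨ 0 < v.2)

/-- A vector is vertical if it is of the form (0, a) with a > 0. -/
def Vert (v : Vec2) : Prop := v.1 = 0 ∧ 0 < v.2

/-- A vector is horizontal if it is of the form (a, 0) with a > 0. -/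
def Horiz (v : Vec2) : Prop := 0 < v.1 ∧ v.2 = 0

/-- Embedding of integer vectors into the rational plane. -/
def toQ (v : Vec2) : ℚ × ℚ := ((v.1 : ℚ), (v.2 : ℚ))

/-- The half-line (ray) ℚ≥0 · x generated by a rational vector x. -/
def rayQ (x : ℚ × ℚ) : Set (ℚ × ℚ) := {z | ∃ a : ℚ, 0 ≤ a ∧ z = a • x}

/-- The cone of a finite list of integer vectors: all nonnegative rational
linear combinations. -/
def Cone (vs : List Vec2) : Set (ℚ × ℚ) :=
  {x | ∃ a : Fin vs.length → ℚ, (∀ i, 0 ≤ a i) ∧ x = ∑ i, a i • toQ (vs.get i)}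

/-- The sequential cone: nonnegative rational combinations all of whose
partial sums are in the nonnegative orthant. -/
def SeqCone (vs : List Vec2) : Set (ℚ × ℚ) :=
  {x | ∃ a : Fin vs.length → ℚ, (∀ i, 0 ≤ a i) ∧
    (∀ k : ℕ, k ≤ vs.length →
      0 ≤ ∑ i : Fin vs.length, if (i : ℕ) < k then a i • toQ (vs.get i) else 0) ∧
    x = ∑ i, a i • toQ (vs.get i)}

/-- Two integer vectors are colinear if they generate the same half-line. -/
def Colinear (v w : Vec2) : Prop := rayQ (toQ v) = rayQ (toQ w)

/-- The clockwise relation on nonnegative vectors: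
`Clk v u` iff u lies strictly clockwise from v. -/
def Clk (v u : Vec2) : Prop := 0 < v.2 * u.1 - v.1 * u.2

/-- Projection of a vector on coordinate `j` (`Fin 2` indexes the two coordinates). -/
def proj (j : Fin 2) (v : Vec2) : ℤ := if j = 0 then v.1 else v.2

/-! ### 2-dimensional vector addition systems with states (2-VASS) -/

/-- A transition of a 2-VASS with control states `Fin n`:
a source state, an effect vector, and a target state. -/
abbrev Transition (n : ℕ) : Type := Fin n × Vec2 × Fin n

/-- A 2-VASS with control states `Fin n` is a finite set of transitions. -/
abbrev VASS (n : ℕ) : Type := Finset (Transition n)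

/-- The norm of a 2-VASS: the largest norm of an effect of a transition. -/
def vassNorm {n : ℕ} (V : VASS n) : ℕ := V.sup (fun t => vnorm t.2.1)

/-- The effect of a sequence of transitions: the sum of the individual effects. -/
def effect {n : ℕ} (π : List (Transition n)) : Vec2 := (π.map (fun t => t.2.1)).sum

/-- A path of `V`: a sequence of transitions of `V` in which
consecutive control states match. -/
def IsPath {n : ℕ} (V : VASS n) (π : List (Transition n)) : Prop :=
  (∀ t ∈ π, t ∈ V) ∧ π.Chain' (fun s t => s.2.2 = t.1)

/-- The path `π` starts at control state `q` (vacuously true for the empty path). -/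
def startsAt {n : ℕ} (π : List (Transition n)) (q : Fin n) : Prop :=
  ∀ t ∈ π.head?, t.1 = q

/-- The control state after the first `i` transitions of `π`, for a path
starting at control state `q`. -/
def stateAt {n : ℕ} (π : List (Transition n)) (q : Fin n) (i : ℕ) : Fin n :=
  (((π.take i).getLast?).map (fun t => t.2.2)).getD q

/-- The final control state of a path `π` starting at control state `q`. -/
def endState {n : ℕ} (π : List (Transition n)) (q : Fin n) : Fin n := stateAt π q π.length

/-- The counter values after the first `i` transitions of `π`, starting from
counter values `u`. -/
def vecAt {n : ℕ} (π : List (Transition n)) (u : Vec2) (i : ℕ) : Vec2 :=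
  u + effect (π.take i)

/-- The path `π` is enabled in the configuration `(q, u)`: it starts at `q`
and all intermediate counter values are nonnegative. -/
def Enabled {n : ℕ} (π : List (Transition n)) (q : Fin n) (u : Vec2) : Prop :=
  startsAt π q ∧ ∀ i ≤ π.length, 0 ≤ vecAt π u i

/-- For `j ∈ {1,2}`, the path `π` is `{j}`-enabled in the configuration `(q, u)`:
it starts at `q` and the `j`-th coordinate of all intermediate counter values is
nonnegative. -/
def JEnabled {n : ℕ} (π : List (Transition n)) (q : Fin n) (u : Vec2) (j : Fin 2) : Prop :=
  startsAt π q ∧ ∀ i ≤ π.length, 0 ≤ proj j (vecAt π u i)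

/-- A run of `V`: a path of `V` enabled in the configuration `(q, u)`.
Its source is `(q, u)`, its target is `(endState π q, vecAt π u π.length)`,
and its configurations are `(stateAt π q i, vecAt π u i)` for `i ≤ π.length`. -/
def IsRun {n : ℕ} (V : VASS n) (π : List (Transition n)) (q : Fin n) (u : Vec2) : Prop :=
  IsPath V π ∧ Enabled π q u

/-- A (0,0)-run of `V`: a run whose source and target counter values are `(0,0)`. -/
def IsZeroRun {n : ℕ} (V : VASS n) (π : List (Transition n)) (q : Fin n) : Prop :=
  IsRun V π q 0 ∧ effect π = 0

/-- A cycle of `V`: a nonempty path of `V` whose starting and ending control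
states coincide. -/
def IsCycle {n : ℕ} (V : VASS n) (γ : List (Transition n)) : Prop :=
  IsPath V γ ∧ γ ≠ [] ∧ γ.head?.map (fun t => t.1) = γ.getLast?.map (fun t => t.2.2)

/-- `pumped i τs αs` is the path `τ₀ α₁ⁱ τ₁ α₂ⁱ ⋯ α_kⁱ τ_k`, where
`τs = [τ₀, …, τ_k]` and `αs = [α₁, …, α_k]` and `αⱼⁱ` denotes `αⱼ`
repeated `i` times. -/
def pumped {n : ℕ} (i : ℕ) : List (List (Transition n)) → List (List (Transition n)) →
    List (Transition n)
  | [], _ => []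
  | τs, [] => τs.flatten
  | τ :: τs, α :: αs => τ ++ (List.replicate i α).flatten ++ pumped i τs αs

namespace TwoVASS

/-! ### Walks in a labelled multigraph -/

section Walks

variable {E S : Type*} {src tgt : E → S}

/-- `GWalk src tgt p l q`: the edges of `l` form a walk from `p` to `q`. -/
def GWalk (src tgt : E → S) : S → List E → S → Prop
  | p, [], q => p = q
  | p, e :: l, q => src e = p ∧ GWalk src tgt (tgt e) l q

theorem gwalk_append {p q : S} {a b : List E} :
    GWalk src tgt p (a ++ b) q ↔ ∃ r, GWalk src tgt p a r ∧ GWalk src tgt r b q := by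
  induction a generalizing p with
  | nil => simp [GWalk]
  | cons e l ih => simp [GWalk, ih, and_assoc]

theorem GWalk.append {p q r : S} {a b : List E} (ha : GWalk src tgt p a r)
    (hb : GWalk src tgt r b q) : GWalk src tgt p (a ++ b) q :=
  gwalk_append.2 ⟨r, ha, hb⟩

theorem GWalk.flatten_replicate {p : S} {a : List E} (ha : GWalk src tgt p a p) (k : ℕ) :
    GWalk src tgt p (List.replicate k a).flatten p := by
  induction k with
  | zero => simp [GWalk]
  | succ k ih => simpa [List.replicate_succ] using ha.append ih

theorem GWalk.split {p q : S} {l : List E} (h : GWalk src tgt p l q) (i : ℕ)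
    (hi : i < l.length) :
    GWalk src tgt p (l.take i) (src l[i]) ∧ GWalk src tgt (src l[i]) (l.drop i) q := by
  have h' := h
  rw [← List.take_append_drop i l, gwalk_append] at h'
  obtain ⟨r, h1, h2⟩ := h'
  have : r = src l[i] := by
    rw [List.drop_eq_getElem_cons hi] at h2
    exact h2.1.symm
  subst this
  exact ⟨h1, h2⟩

/-- A walk visiting more edges than there are available vertices contains a short closed
subwalk. -/
theorem GWalk.exists_closed {p q : S} {l : List E} (h : GWalk src tgt p l q) (F : Finset S)
    (hF : ∀ e ∈ l, src e ∈ F) (hl : F.card < l.length) :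
    ∃ a b c r, l = a ++ b ++ c ∧ b ≠ [] ∧ b.length ≤ F.card ∧ GWalk src tgt p a r ∧
      GWalk src tgt r b r ∧ GWalk src tgt r c q := by
  obtain ⟨i, j, hij, he⟩ : ∃ i j : Fin (F.card + 1), i < j ∧
      src (l[(i : ℕ)]'(by omega)) = src (l[(j : ℕ)]'(by omega)) := by
    let f : Fin (F.card + 1) → F := fun i => ⟨src (l[(i : ℕ)]'(by omega)),
      hF _ (List.getElem_mem _)⟩
    obtain ⟨i, j, hne, hf⟩ := Fintype.exists_ne_map_eq_of_card_lt f (by simp)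
    have hf' := congrArg Subtype.val hf
    rcases lt_or_gt_of_ne hne with hlt | hlt
    · exact ⟨i, j, hlt, hf'⟩
    · exact ⟨j, i, hlt, hf'.symm⟩
  have hi : (i : ℕ) < l.length := by omega
  have hj : (j : ℕ) < l.length := by omega
  have hij' : (i : ℕ) < j := hij
  obtain ⟨h1, h2⟩ := h.split i hi
  have hlen : (j : ℕ) - i < (l.drop i).length := by simp; omega
  obtain ⟨h3, h4⟩ := h2.split (j - i) hlen
  have hg : (l.drop i)[(j : ℕ) - i]'hlen = l[(j : ℕ)] := by
    rw [List.getElem_drop]; congr 1; omega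
  rw [hg, ← he] at h3 h4
  refine ⟨l.take i, (l.drop i).take (j - i), (l.drop i).drop (j - i), _, ?_, ?_, ?_, h1, h3, h4⟩
  · rw [List.append_assoc, List.take_append_drop, List.take_append_drop]
  · intro hc
    have := congrArg List.length hc
    simp at this; omega
  · simp; omega

/-- A walk can be shortened without losing weight if short closed walks have nonpositive
weight. -/
theorem GWalk.shorten {p q : S} {l : List E} (h : GWalk src tgt p l q) (F : Finset S)
    (hF : ∀ e ∈ l, src e ∈ F) (w : E → ℤ)
    (hw : ∀ b r, b ⊆ l → b.length ≤ F.card → GWalk src tgt r b r → (b.map w).sum ≤ 0) :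
    ∃ l', l' ⊆ l ∧ l'.length ≤ F.card ∧ GWalk src tgt p l' q ∧
      (l.map w).sum ≤ (l'.map w).sum := by
  induction hk : l.length using Nat.strong_induction_on generalizing l with
  | _ k ih =>
    by_cases hl : F.card < l.length
    · obtain ⟨a, b, c, r, rfl, hb, hbl, ha, hbb, hc⟩ := h.exists_closed F hF hl
      have hsub : a ++ c ⊆ a ++ b ++ c := by
        intro e he; simp at he ⊢; tauto
      have hbpos : 0 < b.length := List.length_pos_iff.2 hb
      obtain ⟨l', h1, h2, h3, h4⟩ := ih (a ++ c).length (by subst hk; simp; omega)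
        (ha.append hc) (fun e he => hF e (hsub he))
        (fun b' r' hb' => hw b' r' (List.Subset.trans hb' hsub)) rfl
      refine ⟨l', List.Subset.trans h1 hsub, h2, h3, le_trans ?_ h4⟩
      have := hw b r (by intro e he; simp; tauto) hbl hbb
      simp only [List.map_append, List.sum_append]
      linarith
    · exact ⟨l, List.Subset.refl _, not_lt.1 hl, h, le_rfl⟩

/-- A closed walk of positive weight yields a short closed walk of positive weight. -/
theorem GWalk.exists_short_pos {p : S} {l : List E} (h : GWalk src tgt p l p) (F : Finset S)
    (hF : ∀ e ∈ l, src e ∈ F) (w : E → ℤ) (hw : 0 < (l.map w).sum) :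
    ∃ l' r, l' ⊆ l ∧ l'.length ≤ F.card ∧ GWalk src tgt r l' r ∧ 0 < (l'.map w).sum := by
  by_contra! hcon
  obtain ⟨l', h1, h2, h3, h4⟩ := h.shorten F hF w
    (fun b r hb hbl hbb => hcon b r hb hbl hbb)
  have := hcon l' p h1 h2 h3
  omega

end Walks

/-! ### Walks of a vector addition system -/

section Effects

variable {n : ℕ}

theorem effect_append (a b : List (Transition n)) : effect (a ++ b) = effect a + effect b := by
  simp [effect]

theorem effect_nil : effect ([] : List (Transition n)) = 0 := rfl

theorem effect_cons (e : Transition n) (l : List (Transition n)) :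
    effect (e :: l) = e.2.1 + effect l := by
  simp [effect]

theorem effect_linear (α β : ℤ) (l : List (Transition n)) :
    (l.map (fun e => α * e.2.1.1 + β * e.2.1.2)).sum = α * (effect l).1 + β * (effect l).2 := by
  induction l with
  | nil => simp [effect_nil]
  | cons e l ih => simp [effect_cons, ih]; ring

theorem effect_flatten_replicate (k : ℕ) (l : List (Transition n)) :
    effect (List.replicate k l).flatten = k • effect l := by
  induction k with
  | zero => simp [effect_nil]
  | succ k ih =>
    rw [List.replicate_succ, List.flatten_cons, effect_append, ih, succ_nsmul']

/-- The transitions of `l` form a walk of `V` from `p` to `q`. -/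
def TW (V : Set (Transition n)) (p : Fin n) (l : List (Transition n)) (q : Fin n) : Prop :=
  (∀ e ∈ l, e ∈ V) ∧ GWalk (fun e => e.1) (fun e => e.2.2) p l q

variable {V : Set (Transition n)}

theorem TW.nil (p : Fin n) : TW V p [] p := ⟨by simp, rfl⟩

theorem TW.append {p q r : Fin n} {a b : List (Transition n)} (ha : TW V p a r)
    (hb : TW V r b q) : TW V p (a ++ b) q :=
  ⟨fun e he => (List.mem_append.1 he).elim (ha.1 e) (hb.1 e), ha.2.append hb.2⟩

theorem TW.flatten_replicate {p : Fin n} {a : List (Transition n)} (ha : TW V p a p) (k : ℕ) :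
    TW V p (List.replicate k a).flatten p :=
  ⟨fun e he => by
    obtain ⟨l, hl, hel⟩ := List.mem_flatten.1 he
    rw [List.eq_of_mem_replicate hl] at hel
    exact ha.1 e hel, ha.2.flatten_replicate k⟩

theorem TW.shorten {p q : Fin n} {l : List (Transition n)} (h : TW V p l q) :
    ∃ l', l'.length ≤ n ∧ TW V p l' q := by
  obtain ⟨l', h1, h2, h3, -⟩ := h.2.shorten Finset.univ (by simp) (fun _ => 0) (by simp)
  exact ⟨l', by simpa using h2, fun e he => h.1 e (h1 he), h3⟩

/-- All transition effects of `V` have norm at most `M`. -/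
def NormLe (V : Set (Transition n)) (M : ℕ) : Prop :=
  ∀ e ∈ V, |e.2.1.1| ≤ (M : ℤ) ∧ |e.2.1.2| ≤ (M : ℤ)

theorem NormLe.effect {M : ℕ} (hM : NormLe V M) {l : List (Transition n)}
    (hl : ∀ e ∈ l, e ∈ V) :
    |(effect l).1| ≤ (l.length * M : ℕ) ∧ |(effect l).2| ≤ (l.length * M : ℕ) := by
  induction l with
  | nil => simp [effect_nil]
  | cons e l ih =>
    obtain ⟨h1, h2⟩ := ih (fun e he => hl e (List.mem_cons_of_mem _ he))
    obtain ⟨h3, h4⟩ := hM e (hl e List.mem_cons_self)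
    rw [effect_cons]
    push_cast [List.length_cons] at *
    constructor
    · refine (abs_add_le _ _).trans ?_
      linarith
    · refine (abs_add_le _ _).trans ?_
      linarith

theorem NormLe.effect_le {M B : ℕ} (hM : NormLe V M) {l : List (Transition n)}
    (hl : ∀ e ∈ l, e ∈ V) (hB : l.length ≤ B) :
    |(_root_.effect l).1| ≤ (B * M : ℕ) ∧ |(_root_.effect l).2| ≤ (B * M : ℕ) := by
  have h : ((l.length * M : ℕ) : ℤ) ≤ (B * M : ℕ) := by
    exact_mod_cast Nat.mul_le_mul_right M hB
  exact ⟨(hM.effect hl).1.trans h, (hM.effect hl).2.trans h⟩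

end Effects

/-! ### Runs -/

/-- A run starting with zero counters, with its configurations indexed by time. -/
structure Run (n : ℕ) where
  V : Set (Transition n)
  M : ℕ
  normLe : NormLe V M
  len : ℕ
  st : ℕ → Fin n
  x : ℕ → Vec2
  step : ∀ t < len, (st t, x (t + 1) - x t, st (t + 1)) ∈ V
  nonneg : ∀ t ≤ len, 0 ≤ x t
  start : x 0 = 0

namespace Run

variable {n : ℕ} (ρ : Run n)

theorem nonneg_fst {t : ℕ} (ht : t ≤ ρ.len) : 0 ≤ (ρ.x t).1 := (ρ.nonneg t ht).1

theorem nonneg_snd {t : ℕ} (ht : t ≤ ρ.len) : 0 ≤ (ρ.x t).2 := (ρ.nonneg t ht).2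

theorem step_fst {t : ℕ} (ht : t < ρ.len) : |(ρ.x (t + 1)).1 - (ρ.x t).1| ≤ ρ.M :=
  (ρ.normLe _ (ρ.step t ht)).1

theorem step_snd {t : ℕ} (ht : t < ρ.len) : |(ρ.x (t + 1)).2 - (ρ.x t).2| ≤ ρ.M :=
  (ρ.normLe _ (ρ.step t ht)).2

/-- The transition taken at time `t`. -/
def tr (t : ℕ) : Transition n := (ρ.st t, ρ.x (t + 1) - ρ.x t, ρ.st (t + 1))

/-- The part of the run between times `a` and `b`. -/
def seg (a b : ℕ) : List (Transition n) := (List.range' a (b - a)).map ρ.tr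

theorem seg_self (a : ℕ) : ρ.seg a a = [] := by simp [seg]

theorem seg_length (a b : ℕ) : (ρ.seg a b).length = b - a := by simp [seg]

theorem seg_cons {a b : ℕ} (h : a < b) : ρ.seg a b = ρ.tr a :: ρ.seg (a + 1) b := by
  obtain ⟨k, rfl⟩ := Nat.exists_eq_add_of_lt h
  rw [seg, show a + k + 1 - a = k + 1 by omega, List.range'_succ, List.map_cons, seg,
    show a + k + 1 - (a + 1) = k by omega]

theorem seg_append {a b c : ℕ} (hab : a ≤ b) (hbc : b ≤ c) :
    ρ.seg a b ++ ρ.seg b c = ρ.seg a c := by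
  obtain ⟨k, rfl⟩ := Nat.exists_eq_add_of_le hab
  obtain ⟨m, rfl⟩ := Nat.exists_eq_add_of_le hbc
  simp only [seg, ← List.map_append]
  rw [show a + k - a = k by omega, show a + k + m - (a + k) = m by omega,
    show a + k + m - a = k + m by omega, List.range'_append_1]

theorem take_seg {a b : ℕ} (k : ℕ) (hk : a + k ≤ b) : (ρ.seg a b).take k = ρ.seg a (a + k) := by
  rw [← ρ.seg_append (Nat.le_add_right a k) hk]
  exact List.take_left' (by simp [seg_length])

theorem mem_seg {a b : ℕ} {e : Transition n} : e ∈ ρ.seg a b ↔ ∃ t, a ≤ t ∧ t < b ∧ e = ρ.tr t := by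
  simp only [seg, List.mem_map, List.mem_range'_1]
  constructor
  · rintro ⟨t, ht, rfl⟩; exact ⟨t, by omega, by omega, rfl⟩
  · rintro ⟨t, h1, h2, rfl⟩; exact ⟨t, by omega, rfl⟩

theorem seg_walk {a b : ℕ} (hab : a ≤ b) (hb : b ≤ ρ.len) :
    TW ρ.V (ρ.st a) (ρ.seg a b) (ρ.st b) := by
  refine ⟨fun e he => ?_, ?_⟩
  · obtain ⟨t, h1, h2, rfl⟩ := ρ.mem_seg.1 he
    exact ρ.step t (by omega)
  · clear hb
    obtain ⟨k, rfl⟩ := Nat.exists_eq_add_of_le hab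
    clear hab
    induction k generalizing a with
    | zero => simp [seg, GWalk]
    | succ k ih =>
      rw [ρ.seg_cons (by omega)]
      refine ⟨rfl, ?_⟩
      have := ih (a := a + 1)
      rwa [show a + 1 + k = a + (k + 1) by omega] at this

theorem effect_seg {a b : ℕ} (hab : a ≤ b) : effect (ρ.seg a b) = ρ.x b - ρ.x a := by
  obtain ⟨k, rfl⟩ := Nat.exists_eq_add_of_le hab
  clear hab
  induction k generalizing a with
  | zero => simp [seg, effect_nil]
  | succ k ih =>
    rw [ρ.seg_cons (by omega), effect_cons]
    have := ih (a := a + 1)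
    rw [show a + 1 + k = a + (k + 1) by omega] at this
    rw [this, tr]
    exact (add_comm _ _).trans (sub_add_sub_cancel _ _ _)

/-- A linear functional that is nonpositive on short cycles at the visited states increases
by a bounded amount only. -/
theorem linear_le {a b : ℕ} (hab : a ≤ b) (hb : b ≤ ρ.len) (α β K : ℤ)
    (hK : |α| * ρ.M + |β| * ρ.M ≤ K)
    (hc : ∀ s, a ≤ s → s < b → ∀ c, TW ρ.V (ρ.st s) c (ρ.st s) → c.length ≤ n →
      α * (effect c).1 + β * (effect c).2 ≤ 0) :
    α * (ρ.x b).1 + β * (ρ.x b).2 ≤ α * (ρ.x a).1 + β * (ρ.x a).2 + n * K := by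
  have hw := ρ.seg_walk hab hb
  obtain ⟨l', h1, h2, h3, h4⟩ := hw.2.shorten Finset.univ (by simp)
    (fun e => α * e.2.1.1 + β * e.2.1.2) (by
      intro c r hcs hcl hcw
      rw [effect_linear]
      cases c with
      | nil => simp [effect_nil]
      | cons e l =>
        obtain ⟨s, hs1, hs2, he⟩ := ρ.mem_seg.1 (hcs List.mem_cons_self)
        have hr : r = ρ.st s := by rw [← hcw.1, he]; rfl
        subst hr
        exact hc s hs1 hs2 _ ⟨fun e he => hw.1 e (hcs he), hcw⟩ (by simpa using hcl))
  rw [effect_linear, ρ.effect_seg hab] at h4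
  have h5 : ∀ l : List (Transition n), (∀ e ∈ l, e ∈ ρ.V) →
      (l.map (fun e => α * e.2.1.1 + β * e.2.1.2)).sum ≤ l.length * K := by
    intro l hl
    have := List.sum_le_card_nsmul (l.map (fun e => α * e.2.1.1 + β * e.2.1.2)) K (by
      intro z hz
      obtain ⟨e, he, rfl⟩ := List.mem_map.1 hz
      obtain ⟨h6, h7⟩ := ρ.normLe e (hl e he)
      have h8 : α * e.2.1.1 ≤ |α| * ρ.M := (le_abs_self _).trans (by rw [abs_mul]; gcongr)
      have h9 : β * e.2.1.2 ≤ |β| * ρ.M := (le_abs_self _).trans (by rw [abs_mul]; gcongr)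
      linarith)
    simpa using this
  have h6 := h5 l' (fun e he => hw.1 e (h1 he))
  have hK0 : 0 ≤ K := le_trans (by positivity) hK
  have h7 : (l'.length : ℤ) * K ≤ n * K := by
    have : (l'.length : ℤ) ≤ n := by exact_mod_cast (by simpa using h2)
    gcongr
  simp only [Prod.fst_sub, Prod.snd_sub] at h4
  linarith

/-! ### Pumps -/

/-- Inserting the cycles `P s` at the times `s ≤ t` of the run, with total effect `v`. -/
structure IsPump (P : ℕ → List (Transition n)) (ℓ t : ℕ) (v : Vec2) : Prop where
  walk : ∀ s, TW ρ.V (ρ.st s) (P s) (ρ.st s)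
  len_le : ∀ s, (P s).length ≤ ℓ
  eq_nil : ∀ s, t < s → P s = []
  sum_nonneg : ∀ s, 0 ≤ ∑ r ∈ Finset.range s, effect (P r)
  pre : ∀ s ≤ t, ∀ k, 0 ≤ ρ.x s + ∑ r ∈ Finset.range s, effect (P r) + effect ((P s).take k)
  total : ∑ r ∈ Finset.range (t + 1), effect (P r) = v

variable {ρ}

theorem IsPump.sum_eq {P : ℕ → List (Transition n)} {ℓ t : ℕ} {v : Vec2} (h : ρ.IsPump P ℓ t v)
    {s : ℕ} (hs : t < s) : ∑ r ∈ Finset.range s, effect (P r) = v := by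
  rw [← h.total]
  symm
  apply Finset.sum_subset (by simpa using hs)
  intro r _ hr
  rw [h.eq_nil r (by simpa using hr), effect_nil]

theorem IsPump.add {P Q : ℕ → List (Transition n)} {ℓ ℓ' t : ℕ} {v w : Vec2}
    (hP : ρ.IsPump P ℓ t v) (hQ : ρ.IsPump Q ℓ' t w) :
    ρ.IsPump (fun s => P s ++ Q s) (ℓ + ℓ') t (v + w) where
  walk s := (hP.walk s).append (hQ.walk s)
  len_le s := by
    rw [List.length_append]; exact add_le_add (hP.len_le s) (hQ.len_le s)
  eq_nil s hs := by simp [hP.eq_nil s hs, hQ.eq_nil s hs]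
  sum_nonneg s := by
    simp only [effect_append, Finset.sum_add_distrib]
    exact add_nonneg (hP.sum_nonneg s) (hQ.sum_nonneg s)
  pre s hs k := by
    simp only [effect_append, Finset.sum_add_distrib, List.take_append]
    by_cases hk : k ≤ (P s).length
    · rw [Nat.sub_eq_zero_of_le hk, List.take_zero, effect_nil]
      have := add_nonneg (hP.pre s hs k) (hQ.sum_nonneg s)
      refine this.trans_eq ?_
      abel
    · rw [List.take_of_length_le (by omega)]
      have := add_nonneg (hQ.pre s hs (k - (P s).length)) (hP.sum_nonneg (s + 1))
      rw [Finset.sum_range_succ] at this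
      refine this.trans_eq ?_
      abel
  total := by
    simp only [effect_append, Finset.sum_add_distrib, hP.total, hQ.total]

theorem IsPump.append {P : ℕ → List (Transition n)} {ℓ t : ℕ} {v : Vec2}
    (hP : ρ.IsPump P ℓ t v) {c : List (Transition n)} (hc : TW ρ.V (ρ.st t) c (ρ.st t))
    (hpre : ∀ k, 0 ≤ ρ.x t + v + effect (c.take k)) (hv : 0 ≤ v + effect c) :
    ρ.IsPump (Function.update P t (P t ++ c)) (ℓ + c.length) t (v + effect c) := by
  have hlow : ∀ s ≤ t, ∑ r ∈ Finset.range s, effect (Function.update P t (P t ++ c) r) =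
      ∑ r ∈ Finset.range s, effect (P r) := by
    intro s hs
    refine Finset.sum_congr rfl fun r hr => ?_
    have := Finset.mem_range.1 hr
    rw [Function.update_of_ne (by omega)]
  have hnil : ∀ s, t < s → Function.update P t (P t ++ c) s = [] := by
    intro s hs
    rw [Function.update_of_ne (by omega), hP.eq_nil s hs]
  have htot : ∑ r ∈ Finset.range (t + 1), effect (Function.update P t (P t ++ c) r) =
      v + effect c := by
    rw [Finset.sum_range_succ, hlow t le_rfl, Function.update_self, effect_append, ← hP.total,
      Finset.sum_range_succ, add_assoc]
  refine ⟨fun s => ?_, fun s => ?_, hnil, fun s => ?_, fun s hs k => ?_, htot⟩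
  · by_cases hs : s = t
    · subst hs; rw [Function.update_self]; exact (hP.walk s).append hc
    · rw [Function.update_of_ne hs]; exact hP.walk s
  · by_cases hs : s = t
    · subst hs; rw [Function.update_self, List.length_append]
      exact Nat.add_le_add_right (hP.len_le s) _
    · rw [Function.update_of_ne hs]; exact (hP.len_le s).trans (Nat.le_add_right _ _)
  · by_cases hs : s ≤ t
    · rw [hlow s hs]; exact hP.sum_nonneg s
    · rw [← Finset.sum_subset (s₁ := Finset.range (t + 1)) (by simpa using hs)
        (fun r _ hr => by rw [hnil r (by simpa using hr), effect_nil]), htot]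
      exact hv
  · rw [hlow s hs]
    by_cases hst : s = t
    · subst hst
      rw [Function.update_self, List.take_append, effect_append]
      by_cases hk : k ≤ (P s).length
      · rw [Nat.sub_eq_zero_of_le hk, List.take_zero, effect_nil, add_zero]
        exact hP.pre s hs k
      · rw [List.take_of_length_le (by omega)]
        refine (hpre (k - (P s).length)).trans_eq ?_
        rw [← hP.total, Finset.sum_range_succ]
        abel
    · rw [Function.update_of_ne hst]
      exact hP.pre s hs k

variable (ρ)

/-- Some pump with cycles of length at most `ℓ` inserted up to time `t` has total effect `v`. -/
def Fwd (ℓ t : ℕ) (v : Vec2) : Prop := ∃ P, ρ.IsPump P ℓ t v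

variable {ρ}

theorem Fwd.nonneg {ℓ t : ℕ} {v : Vec2} (h : ρ.Fwd ℓ t v) : 0 ≤ v := by
  obtain ⟨P, hP⟩ := h
  rw [← hP.total]; exact hP.sum_nonneg _

theorem Fwd.zero {ℓ t : ℕ} (ht : t ≤ ρ.len) : ρ.Fwd ℓ t 0 :=
  ⟨fun _ => [], fun s => TW.nil _, by simp, by simp, by simp [effect_nil], by
    intro s hs k; simpa [effect_nil] using ρ.nonneg s (by omega), by simp [effect_nil]⟩

theorem Fwd.mono_len {ℓ ℓ' t : ℕ} {v : Vec2} (h : ρ.Fwd ℓ t v) (hℓ : ℓ ≤ ℓ') :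
    ρ.Fwd ℓ' t v := by
  obtain ⟨P, hP⟩ := h
  exact ⟨P, hP.walk, fun s => (hP.len_le s).trans hℓ, hP.eq_nil, hP.sum_nonneg, hP.pre, hP.total⟩

theorem Fwd.mono {ℓ t t' : ℕ} {v : Vec2} (h : ρ.Fwd ℓ t v) (htt : t ≤ t') (ht' : t' ≤ ρ.len) :
    ρ.Fwd ℓ t' v := by
  obtain ⟨P, hP⟩ := h
  refine ⟨P, hP.walk, hP.len_le, fun s hs => hP.eq_nil s (by omega), hP.sum_nonneg,
    fun s hs k => ?_, hP.sum_eq (by omega)⟩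
  by_cases hst : s ≤ t
  · exact hP.pre s hst k
  · rw [hP.eq_nil s (by omega), List.take_nil, effect_nil, add_zero]
    exact add_nonneg (ρ.nonneg s (by omega)) (hP.sum_nonneg s)

theorem Fwd.add {ℓ ℓ' t : ℕ} {v w : Vec2} (h : ρ.Fwd ℓ t v) (h' : ρ.Fwd ℓ' t w) :
    ρ.Fwd (ℓ + ℓ') t (v + w) := by
  obtain ⟨P, hP⟩ := h
  obtain ⟨Q, hQ⟩ := h'
  exact ⟨_, hP.add hQ⟩

theorem Fwd.nsmul {ℓ t : ℕ} {v : Vec2} (h : ρ.Fwd ℓ t v) (ht : t ≤ ρ.len) (k : ℕ) :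
    ρ.Fwd (k * ℓ) t (k • v) := by
  induction k with
  | zero => simpa using Fwd.zero ht
  | succ k ih => rw [succ_nsmul, Nat.succ_mul]; exact ih.add h

theorem Fwd.append {ℓ t : ℕ} {v : Vec2} (h : ρ.Fwd ℓ t v) {c : List (Transition n)}
    (hc : TW ρ.V (ρ.st t) c (ρ.st t))
    (hpre : ∀ k, 0 ≤ ρ.x t + v + effect (c.take k)) (hv : 0 ≤ v + effect c) :
    ρ.Fwd (ℓ + c.length) t (v + effect c) := by
  obtain ⟨P, hP⟩ := h
  exact ⟨_, hP.append hc hpre hv⟩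

theorem Fwd.single {t : ℕ} (ht : t ≤ ρ.len) {c : List (Transition n)}
    (hc : TW ρ.V (ρ.st t) c (ρ.st t))
    (hpre : ∀ k, 0 ≤ ρ.x t + effect (c.take k)) (hv : 0 ≤ effect c) :
    ρ.Fwd c.length t (effect c) := by
  simpa using (Fwd.zero (ℓ := 0) ht).append hc (by simpa using hpre) (by simpa using hv)

/-- Short walks are enabled where both counters are large. -/
theorem pre_nonneg_of_large {u : Vec2} {c : List (Transition n)} {B : ℕ}
    (hc : ∀ e ∈ c, e ∈ ρ.V) (hB : c.length ≤ B) (h1 : (B * ρ.M : ℕ) ≤ u.1)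
    (h2 : (B * ρ.M : ℕ) ≤ u.2) (k : ℕ) : 0 ≤ u + effect (c.take k) := by
  obtain ⟨h3, h4⟩ := ρ.normLe.effect_le (l := c.take k) (B := B)
    (fun e he => hc e (List.mem_of_mem_take he)) ((List.length_take_le' _ _).trans hB)
  have := (abs_le.1 h3).1
  have := (abs_le.1 h4).1
  exact ⟨by change (0 : ℤ) ≤ u.1 + _; linarith, by change (0 : ℤ) ≤ u.2 + _; linarith⟩

/-! ### Symmetries -/

/-- Exchanging the two counters. -/
def swap (ρ : Run n) : Run n where
  V := {e | (e.1, e.2.1.swap, e.2.2) ∈ ρ.V}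
  M := ρ.M
  normLe e he := (ρ.normLe _ he).symm
  len := ρ.len
  st := ρ.st
  x t := (ρ.x t).swap
  step t ht := ρ.step t ht
  nonneg t ht := ⟨(ρ.nonneg t ht).2, (ρ.nonneg t ht).1⟩
  start := by rw [ρ.start]; rfl

/-- The time reversal of a run ending with zero counters. -/
def rev (ρ : Run n) (h0 : ρ.x ρ.len = 0) : Run n where
  V := {e | (e.2.2, -e.2.1, e.1) ∈ ρ.V}
  M := ρ.M
  normLe e he := by simpa using ρ.normLe _ he
  len := ρ.len
  st t := ρ.st (ρ.len - t)
  x t := ρ.x (ρ.len - t)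
  step t ht := by
    have := ρ.step (ρ.len - (t + 1)) (by omega)
    rw [show ρ.len - (t + 1) + 1 = ρ.len - t by omega] at this
    simpa using this
  nonneg t ht := ρ.nonneg _ (by omega)
  start := by simpa using h0

/-- Exchanging the counters in a transition. -/
def swapTr (e : Transition n) : Transition n := (e.1, e.2.1.swap, e.2.2)

theorem effect_map_swapTr (l : List (Transition n)) :
    effect (l.map swapTr) = (effect l).swap := by
  induction l with
  | nil => rfl
  | cons e l ih => rw [List.map_cons, effect_cons, effect_cons, ih]; rfl

theorem gwalk_map_swapTr {p q : Fin n} (l : List (Transition n)) :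
    GWalk (fun e : Transition n => e.1) (fun e => e.2.2) p (l.map swapTr) q ↔
      GWalk (fun e : Transition n => e.1) (fun e => e.2.2) p l q := by
  induction l generalizing p with
  | nil => rfl
  | cons e l ih => simp [GWalk, ih, swapTr]

theorem Fwd.of_swap {ℓ t : ℕ} {v : Vec2} (h : ρ.swap.Fwd ℓ t v) : ρ.Fwd ℓ t v.swap := by
  obtain ⟨P, hP⟩ := h
  have hsum : ∀ s, ∑ r ∈ Finset.range s, effect ((P r).map swapTr) =
      (∑ r ∈ Finset.range s, effect (P r)).swap := by
    intro s
    induction s with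
    | zero => rfl
    | succ s ih => rw [Finset.sum_range_succ, Finset.sum_range_succ, ih, effect_map_swapTr]; rfl
  refine ⟨fun s => (P s).map swapTr, fun s => ⟨?_, ?_⟩, fun s => by simpa using hP.len_le s,
    fun s hs => by simp [hP.eq_nil s hs], fun s => ?_, fun s hs k => ?_, ?_⟩
  · intro e he
    obtain ⟨e', he', rfl⟩ := List.mem_map.1 he
    exact (hP.walk s).1 e' he'
  · exact (gwalk_map_swapTr _).2 (hP.walk s).2
  · rw [hsum]; exact ⟨(hP.sum_nonneg s).2, (hP.sum_nonneg s).1⟩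
  · rw [hsum, ← List.map_take, effect_map_swapTr]
    exact ⟨(hP.pre s hs k).2, (hP.pre s hs k).1⟩
  · rw [hsum, hP.total]

/-- Reversing a transition. -/
def revTr (e : Transition n) : Transition n := (e.2.2, -e.2.1, e.1)

theorem effect_map_revTr (l : List (Transition n)) : effect (l.map revTr) = -effect l := by
  induction l with
  | nil => rfl
  | cons e l ih => rw [List.map_cons, effect_cons, effect_cons, ih, neg_add]; rfl

theorem effect_reverse (l : List (Transition n)) : effect l.reverse = effect l := by
  induction l with
  | nil => rfl
  | cons e l ih =>
    rw [List.reverse_cons, effect_append, ih, effect_cons, effect_cons, effect_nil, add_zero,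
      add_comm]

theorem gwalk_reverse {p q : Fin n} {l : List (Transition n)}
    (h : GWalk (fun e : Transition n => e.1) (fun e => e.2.2) p l q) :
      GWalk (fun e : Transition n => e.1) (fun e => e.2.2) q (l.map revTr).reverse p := by
  induction l generalizing p with
  | nil => exact h.symm
  | cons e l ih =>
    rw [List.map_cons, List.reverse_cons]
    exact (ih h.2).append ⟨rfl, h.1⟩

/-- A forward pump and a backward pump with the same total effect combine to a pump of the
whole run with total effect zero. -/
theorem IsPump.combine (h0 : ρ.x ρ.len = 0) {P Q : ℕ → List (Transition n)} {ℓ ℓ' t : ℕ}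
    {m : Vec2} (ht : t ≤ ρ.len) (hP : ρ.IsPump P ℓ t m)
    (hQ : (ρ.rev h0).IsPump Q ℓ' (ρ.len - t) m) :
    ρ.IsPump (fun s => P s ++ if s ≤ ρ.len then ((Q (ρ.len - s)).map revTr).reverse else [])
      (ℓ + ℓ') ρ.len 0 := by
  set R : ℕ → List (Transition n) :=
    fun s => if s ≤ ρ.len then ((Q (ρ.len - s)).map revTr).reverse else [] with hR
  have hReff : ∀ s ≤ ρ.len, effect (R s) = -effect (Q (ρ.len - s)) := by
    intro s hs
    simp only [hR, if_pos hs]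
    rw [effect_reverse, effect_map_revTr]
  have hRsum : ∀ s ≤ ρ.len + 1, ∑ r ∈ Finset.range s, effect (R r) =
      ∑ r ∈ Finset.range (ρ.len + 1 - s), effect (Q r) - m := by
    intro s hs
    induction s with
    | zero =>
      rw [Finset.sum_range_zero, Nat.sub_zero, hQ.sum_eq (by omega), sub_self]
    | succ s ih =>
      rw [Finset.sum_range_succ, ih (by omega), hReff s (by omega),
        show ρ.len + 1 - s = (ρ.len - s) + 1 by omega, Finset.sum_range_succ,
        show ρ.len + 1 - (s + 1) = ρ.len - s by omega]
      abel
  have hlow : ∀ s ≤ t, ∑ r ∈ Finset.range s, effect (R r) = 0 := by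
    intro s hs
    rw [hRsum s (by omega), hQ.sum_eq (by omega), sub_self]
  have hnil : ∀ s, ρ.len < s → P s ++ R s = [] := by
    intro s hs
    simp [hR, hP.eq_nil s (by omega), Nat.not_le.2 hs]
  have htot : ∑ r ∈ Finset.range (ρ.len + 1), effect (P r ++ R r) = 0 := by
    simp only [effect_append, Finset.sum_add_distrib]
    rw [hP.sum_eq (by omega), hRsum _ le_rfl]
    simp
  have hnonneg : ∀ s, 0 ≤ ∑ r ∈ Finset.range s, effect (P r ++ R r) := by
    intro s
    by_cases hs : s ≤ ρ.len + 1
    · simp only [effect_append, Finset.sum_add_distrib]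
      by_cases hst : s ≤ t
      · rw [hlow s hst, add_zero]; exact hP.sum_nonneg s
      · rw [hP.sum_eq (by omega), hRsum s hs, add_sub_cancel]
        exact hQ.sum_nonneg _
    · rw [← Finset.sum_subset (s₁ := Finset.range (ρ.len + 1)) (by simp; omega)
        (fun r _ hr => by rw [hnil r (by simpa using hr), effect_nil]), htot]
  refine ⟨fun s => (hP.walk s).append ?_, fun s => ?_, hnil, hnonneg, fun s hs k => ?_, htot⟩
  · by_cases hs : s ≤ ρ.len
    · simp only [if_pos hs]
      have hw := hQ.walk (ρ.len - s)
      have hst : (ρ.rev h0).st (ρ.len - s) = ρ.st s := by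
        change ρ.st (ρ.len - (ρ.len - s)) = _
        congr 1; omega
      rw [hst] at hw
      refine ⟨fun e he => ?_, gwalk_reverse hw.2⟩
      obtain ⟨e', he', rfl⟩ := List.mem_map.1 (List.mem_reverse.1 he)
      exact hw.1 e' he'
    · simp only [if_neg hs]; exact TW.nil _
  · rw [List.length_append]
    refine add_le_add (hP.len_le s) ?_
    by_cases hs : s ≤ ρ.len
    · simp only [if_pos hs, List.length_reverse, List.length_map]; exact hQ.len_le _
    · simp [if_neg hs]
  · change 0 ≤ ρ.x s + ∑ r ∈ Finset.range s, effect (P r ++ R r) + effect ((P s ++ R s).take k)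
    simp only [effect_append, Finset.sum_add_distrib, List.take_append]
    by_cases hst : s < t
    · have hRs : R s = [] := by simp [hR, hQ.eq_nil (ρ.len - s) (by omega)]
      rw [hRs, List.take_nil, effect_nil, hlow s hst.le, add_zero, add_zero]
      exact hP.pre s hst.le k
    · by_cases hk : s = t ∧ k ≤ (P s).length
      · rw [Nat.sub_eq_zero_of_le hk.2, List.take_zero, effect_nil, hlow s hk.1.le, add_zero,
          add_zero]
        exact hP.pre s hk.1.le k
      · have hPs : ∑ r ∈ Finset.range s, effect (P r) + effect ((P s).take k) = m := by
          by_cases hst' : s = t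
          · rw [List.take_of_length_le (by omega), ← Finset.sum_range_succ, hst', hP.total]
          · rw [hP.eq_nil s (by omega), List.take_nil, effect_nil, add_zero, hP.sum_eq (by omega)]
        have hx : (ρ.rev h0).x (ρ.len - s) = ρ.x s := by
          change ρ.x (ρ.len - (ρ.len - s)) = _
          congr 1; omega
        obtain ⟨j, hj⟩ : ∃ j, effect ((R s).take (k - (P s).length)) =
            effect ((Q (ρ.len - s)).take j) - effect (Q (ρ.len - s)) := by
          simp only [hR, if_pos hs]
          refine ⟨(Q (ρ.len - s)).length - (k - (P s).length), ?_⟩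
          rw [List.take_reverse, effect_reverse, ← List.map_drop, effect_map_revTr,
            List.length_map]
          have := congrArg effect (List.take_append_drop
            ((Q (ρ.len - s)).length - (k - (P s).length)) (Q (ρ.len - s)))
          rw [effect_append] at this
          rw [← this]
          abel
        have := hQ.pre (ρ.len - s) (by omega) j
        rw [hx] at this
        rw [hj, hRsum s (by omega), show ρ.len + 1 - s = (ρ.len - s) + 1 by omega,
          Finset.sum_range_succ, ← hPs]
        refine this.trans_eq ?_
        abel

end Run

/-- A sequence in which every value is close to an earlier one, and in which values of the
same type do not increase, is bounded. -/
theorem record_bound {κ : Type*} [DecidableEq κ] (F : Finset κ) (R : ℕ → Prop) (f : ℕ → ℤ)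
    (c : ℕ → κ) (L σ : ℤ) (hσ : 0 ≤ σ) (hF : ∀ r, R r → c r ∈ F)
    (h1 : ∀ r, R r → f r ≤ L + σ ∨ ∃ r' < r, R r' ∧ f r ≤ f r' + σ)
    (h2 : ∀ r₁ r₂, R r₁ → R r₂ → r₁ < r₂ → c r₁ = c r₂ → L < f r₁ → f r₂ ≤ f r₁)
    (r : ℕ) (hr : R r) : f r ≤ L + σ * F.card := by
  classical
  set G : ℕ → Finset κ :=
    fun r => ((Finset.range (r + 1)).filter (fun s => R s ∧ L < f s)).image c with hG
  have hGm : ∀ r r', r ≤ r' → G r ⊆ G r' := fun r r' h => Finset.image_subset_image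
    (Finset.filter_subset_filter _ (by simpa using h))
  have hGF : ∀ r, G r ⊆ F := by
    intro r k hk
    simp only [hG, Finset.mem_image, Finset.mem_filter] at hk
    obtain ⟨s, ⟨-, hs, -⟩, rfl⟩ := hk
    exact hF s hs
  have hself : ∀ r, R r → L < f r → c r ∈ G r := by
    intro r hr hL
    simp only [hG, Finset.mem_image, Finset.mem_filter]
    exact ⟨r, ⟨by simp, hr, hL⟩, rfl⟩
  have key : ∀ r, R r → f r ≤ L + σ * (G r).card := by
    intro r
    induction r using Nat.strong_induction_on with
    | _ r ih =>
      intro hr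
      by_cases hL : f r ≤ L
      · have : 0 ≤ σ * ((G r).card : ℤ) := by positivity
        linarith
      · push Not at hL
        rcases h1 r hr with h | ⟨r', hr', hRr', h⟩
        · have : 0 < (G r).card := Finset.card_pos.2 ⟨_, hself r hr hL⟩
          have : (1 : ℤ) ≤ (G r).card := by exact_mod_cast this
          nlinarith
        · by_cases hc : c r ∈ G r'
          · have hc' := hc
            simp only [hG, Finset.mem_image, Finset.mem_filter, Finset.mem_range] at hc
            obtain ⟨s, ⟨hs, hRs, hLs⟩, hcs⟩ := hc
            have h3 := h2 s r hRs hr (by omega) hcs hLs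
            have h4 := ih s (by omega) hRs
            have h5 : ((G s).card : ℤ) ≤ (G r).card := by
              exact_mod_cast Finset.card_le_card (hGm s r (by omega))
            nlinarith
          · have h4 := ih r' hr' hRr'
            have h5 : (G r').card + 1 ≤ (G r).card := by
              rw [← Finset.card_insert_of_notMem hc]
              exact Finset.card_le_card (Finset.insert_subset (hself r hr hL) (hGm _ _ hr'.le))
            have h6 : ((G r').card : ℤ) + 1 ≤ (G r).card := by exact_mod_cast h5
            nlinarith
  refine (key r hr).trans ?_
  have : ((G r).card : ℤ) ≤ F.card := by exact_mod_cast Finset.card_le_card (hGF r)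
  nlinarith

theorem nsmul_fst (k : ℕ) (v : Vec2) : (k • v).1 = k * v.1 := by
  rw [Prod.smul_fst, nsmul_eq_mul]

theorem nsmul_snd (k : ℕ) (v : Vec2) : (k • v).2 = k * v.2 := by
  rw [Prod.smul_snd, nsmul_eq_mul]

theorem length_flatten_replicate {E : Type*} (k : ℕ) (l : List E) :
    (List.replicate k l).flatten.length = k * l.length := by
  simp

/-! ### Slopes -/

theorem exists_max_slope (S : Set Vec2) (B : ℤ)
    (hS : ∀ v ∈ S, 0 ≤ v.1 ∧ v.1 ≤ B ∧ 0 < v.2 ∧ v.2 ≤ B) (hne : S.Nonempty) :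
    ∃ v ∈ S, ∀ w ∈ S, w.1 * v.2 ≤ v.1 * w.2 := by
  have hfin : S.Finite := (Set.finite_Icc ((0, 0) : Vec2) (B, B)).subset fun v hv => by
    obtain ⟨h1, h2, h3, h4⟩ := hS v hv
    exact ⟨⟨h1, h3.le⟩, ⟨h2, h4⟩⟩
  obtain ⟨v, hv, hmax⟩ := hfin.exists_maximalFor (fun v : Vec2 => (v.1 : ℚ) / v.2) S hne
  refine ⟨v, hv, fun w hw => ?_⟩
  have h1 : (0 : ℚ) < v.2 := by exact_mod_cast (hS v hv).2.2.1
  have h2 : (0 : ℚ) < w.2 := by exact_mod_cast (hS w hw).2.2.1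
  have h3 : (w.1 : ℚ) / w.2 ≤ v.1 / v.2 := by
    rcases le_total ((w.1 : ℚ) / w.2) (v.1 / v.2) with h | h
    · exact h
    · exact hmax hw h
  rw [div_le_div_iff₀ h2 h1] at h3
  exact_mod_cast h3

/-- If no two vectors of `C` span the positive quadrant, then some positive functional is
nonpositive on `C`. -/
theorem exists_functional (C : Set Vec2) (N : ℤ) (hN : 1 ≤ N)
    (hb : ∀ c ∈ C, |c.1| ≤ N ∧ |c.2| ≤ N) (h1 : ∀ c ∈ C, 0 ≤ c.1 → 0 ≤ c.2 → c = 0)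
    (h2 : ∀ c ∈ C, ∀ c' ∈ C, 0 < c.1 → c.2 < 0 → c'.1 < 0 → 0 < c'.2 →
      c.1 * c'.2 ≤ c.2 * c'.1) :
    ∃ α β : ℤ, 1 ≤ α ∧ α ≤ N ∧ 1 ≤ β ∧ β ≤ N ∧ ∀ c ∈ C, α * c.1 + β * c.2 ≤ 0 := by
  have hneg : ∀ c ∈ C, 0 < c.1 → c.2 < 0 := by
    intro c hc hp
    by_contra h
    have := h1 c hc hp.le (not_lt.1 h)
    rw [this] at hp; exact lt_irrefl _ hp
  by_cases hex : ∃ c ∈ C, 0 < c.1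
  · obtain ⟨c₀, hc₀, hp₀⟩ := hex
    obtain ⟨v, ⟨hv, hv1⟩, hmax⟩ := exists_max_slope {v | (v.1, -v.2) ∈ C ∧ 0 < v.1} N
      (by
        rintro v ⟨hv, hv1⟩
        have h3 := hneg _ hv hv1
        obtain ⟨h4, h5⟩ := hb _ hv
        simp only at h3 h4 h5
        rw [abs_le] at h4 h5
        exact ⟨by omega, by omega, by omega, by omega⟩)
      ⟨(c₀.1, -c₀.2), by simpa using hc₀, hp₀⟩
    have h3 : 0 < v.2 := by simpa using hneg _ hv hv1
    obtain ⟨h4, h5⟩ := hb _ hv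
    simp only at h4 h5
    rw [abs_le] at h4 h5
    refine ⟨v.2, v.1, by omega, by omega, by omega, by omega, fun c hc => ?_⟩
    by_cases hc1 : 0 < c.1
    · have := hmax (c.1, -c.2) ⟨by simpa using hc, hc1⟩
      simp only at this
      nlinarith
    · by_cases hc2 : c.2 ≤ 0
      · nlinarith
      · have hc1' : c.1 < 0 := by
          by_contra h
          have := h1 c hc (by omega) (by omega)
          rw [this] at hc2; exact hc2 le_rfl
        have := h2 _ hv c hc hv1 (by simpa using h3) hc1' (by omega)
        simp only at this
        nlinarith
  · push Not at hex
    refine ⟨N, 1, hN, le_rfl, le_rfl, hN, fun c hc => ?_⟩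
    have h3 := hex c hc
    obtain ⟨h4, h5⟩ := hb _ hc
    rw [abs_le] at h4 h5
    by_cases hc1 : c.1 = 0
    · rw [hc1]
      by_contra h
      have := h1 c hc (by omega) (by omega)
      rw [this] at h; exact h (by simp)
    · have : c.1 ≤ -1 := by omega
      nlinarith

namespace Run

variable {n : ℕ} (ρ : Run n)

/-- The size parameter of a run. -/
def N : ℕ := n * ρ.M

/-- The width of the strips along the axes. -/
def W : ℕ := 14 * ρ.N ^ 3

/-- Both counters are outside the strips along the axes. -/
def Interior (t : ℕ) : Prop := (ρ.W : ℤ) < (ρ.x t).1 ∧ (ρ.W : ℤ) < (ρ.x t).2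

/-- Some counter exceeds `B`. -/
def Big (B : ℕ) (t : ℕ) : Prop := (B : ℤ) < (ρ.x t).1 ∨ (B : ℤ) < (ρ.x t).2

open Classical in
/-- The states visited in the interior up to time `t`. -/
noncomputable def visited (t : ℕ) : Finset (Fin n) :=
  Finset.univ.filter fun q => ∃ s ≤ t, ρ.Interior s ∧ ρ.st s = q

theorem mem_visited {t : ℕ} {q : Fin n} :
    q ∈ ρ.visited t ↔ ∃ s ≤ t, ρ.Interior s ∧ ρ.st s = q := by
  simp [visited]

theorem visited_mono {s t : ℕ} (h : s ≤ t) : ρ.visited s ⊆ ρ.visited t := by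
  intro q hq
  obtain ⟨r, hr, h'⟩ := ρ.mem_visited.1 hq
  exact ρ.mem_visited.2 ⟨r, hr.trans h, h'⟩

theorem card_visited_le (t : ℕ) : (ρ.visited t).card ≤ n := by
  simpa using Finset.card_le_univ (ρ.visited t)

theorem pos_n (ρ : Run n) : 1 ≤ n := (ρ.st 0).pos

variable {ρ}

theorem Big.mono {B B' t : ℕ} (h : ρ.Big B t) (hB : B' ≤ B) : ρ.Big B' t := by
  have : (B' : ℤ) ≤ B := by exact_mod_cast hB
  rcases h with h | h
  · exact Or.inl (by omega)
  · exact Or.inr (by omega)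

/-- The first time at which a counter exceeds `B`. -/
theorem Big.first {B t : ℕ} (h : ρ.Big B t) (ht : t ≤ ρ.len) :
    ∃ a ≤ t, ρ.Big B a ∧ (∀ s < a, ¬ ρ.Big B s) ∧
      (ρ.x a).1 ≤ B + ρ.M ∧ (ρ.x a).2 ≤ B + ρ.M := by
  classical
  have hex : ∃ a, ρ.Big B a := ⟨t, h⟩
  refine ⟨Nat.find hex, Nat.find_min' hex h, Nat.find_spec hex, fun s => Nat.find_min hex, ?_⟩
  have h0 : Nat.find hex ≠ 0 := by
    intro h0
    have := Nat.find_spec hex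
    rw [h0, Big, ρ.start] at this
    simp only [Prod.fst_zero, Prod.snd_zero] at this
    omega
  obtain ⟨a, ha⟩ : ∃ a, Nat.find hex = a + 1 := ⟨Nat.find hex - 1, by omega⟩
  have h1 : ¬ ρ.Big B a := Nat.find_min hex (by omega)
  have h2 : a < ρ.len := by
    have := Nat.find_min' hex h
    omega
  have h3 := ρ.step_fst h2
  have h4 := ρ.step_snd h2
  rw [abs_le] at h3 h4
  rw [Big] at h1
  rw [ha]
  constructor <;> omega

theorem n_le_N (hM : 1 ≤ ρ.M) : n ≤ ρ.N := Nat.le_mul_of_pos_right n hM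

theorem M_le_N : ρ.M ≤ ρ.N := Nat.le_mul_of_pos_left _ ρ.pos_n

theorem one_le_N (hM : 1 ≤ ρ.M) : 1 ≤ ρ.N := hM.trans M_le_N

theorem N_le_W : ρ.N ≤ ρ.W := by
  have : ρ.N ≤ ρ.N ^ 3 := Nat.le_self_pow (by norm_num) _
  rw [W]; omega

theorem cycle_bound {q : Fin n} {c : List (Transition n)} (hc : TW ρ.V q c q)
    (hl : c.length ≤ n) : |(effect c).1| ≤ ρ.N ∧ |(effect c).2| ≤ ρ.N :=
  ρ.normLe.effect_le hc.1 hl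

/-- A short nonnegative cycle in the interior is a pump. -/
theorem Interior.fwd {s : ℕ} (hs : ρ.Interior s) (hsl : s ≤ ρ.len)
    {c : List (Transition n)} (hc : TW ρ.V (ρ.st s) c (ρ.st s)) (hl : c.length ≤ n)
    (h0 : 0 ≤ effect c) : ρ.Fwd n s (effect c) := by
  have hW : (ρ.N : ℤ) ≤ ρ.W := by exact_mod_cast N_le_W
  refine (Fwd.single hsl hc (pre_nonneg_of_large hc.1 hl ?_ ?_) h0).mono_len hl
  · exact hW.trans hs.1.le
  · exact hW.trans hs.2.le

/-- Two cycles at mutually reachable interior states that together span the positive quadrant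
give a pump. -/
theorem tour_fwd (hM : 1 ≤ ρ.M) {s : ℕ} {q : Fin n} (hs : ρ.Interior s) (hsl : s ≤ ρ.len)
    {c c' d d' : List (Transition n)} (hc : TW ρ.V (ρ.st s) c (ρ.st s))
    (hc' : TW ρ.V q c' q) (hd : TW ρ.V (ρ.st s) d q) (hd' : TW ρ.V q d' (ρ.st s))
    (hcl : c.length ≤ n) (hcl' : c'.length ≤ n) (hdl : d.length ≤ n) (hdl' : d'.length ≤ n)
    (h1 : 0 < (effect c).1) (h2 : (effect c).2 < 0) (h3 : (effect c').1 < 0)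
    (h4 : 0 < (effect c').2)
    (h5 : (effect c).2 * (effect c').1 < (effect c).1 * (effect c').2) :
    ∃ v : Vec2, ρ.Fwd (14 * ρ.N ^ 3) s v ∧ v ≠ 0 ∧ v.1 ≤ 14 * (ρ.N : ℤ) ^ 3 ∧
      v.2 ≤ 14 * (ρ.N : ℤ) ^ 3 := by
  have hN1 := one_le_N hM
  obtain ⟨b1, b2⟩ := cycle_bound hc hcl
  obtain ⟨b3, b4⟩ := cycle_bound hc' hcl'
  obtain ⟨b5, b6⟩ := ρ.normLe.effect_le hd.1 hdl
  obtain ⟨b7, b8⟩ := ρ.normLe.effect_le hd'.1 hdl'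
  rw [← N] at b5 b6 b7 b8
  rw [abs_le] at b1 b2 b3 b4 b5 b6 b7 b8
  obtain ⟨k, hk⟩ : ∃ k : ℕ, (k : ℤ) = (effect c').2 - (effect c').1 :=
    ⟨((effect c').2 - (effect c').1).toNat, Int.toNat_of_nonneg (by omega)⟩
  obtain ⟨k', hk'⟩ : ∃ k' : ℕ, (k' : ℤ) = (effect c).1 - (effect c).2 :=
    ⟨((effect c).1 - (effect c).2).toNat, Int.toNat_of_nonneg (by omega)⟩
  set K : ℕ := 2 * ρ.N + 1 with hK
  set τ := (List.replicate (K * k) c).flatten ++ d ++ (List.replicate (K * k') c').flatten ++ d'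
    with hτ
  have hw : TW ρ.V (ρ.st s) τ (ρ.st s) :=
    (((hc.flatten_replicate _).append hd).append (hc'.flatten_replicate _)).append hd'
  have hlen : τ.length ≤ 14 * n * ρ.N ^ 2 := by
    simp only [hτ, List.length_append, length_flatten_replicate]
    have e1 : k ≤ 2 * ρ.N := by omega
    have e2 : k' ≤ 2 * ρ.N := by omega
    have e3 : K * k * c.length ≤ (2 * ρ.N + 1) * (2 * ρ.N) * n := by rw [hK]; gcongr
    have e4 : K * k' * c'.length ≤ (2 * ρ.N + 1) * (2 * ρ.N) * n := by rw [hK]; gcongr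
    have e5 : ρ.N ≤ ρ.N ^ 2 := Nat.le_self_pow (by norm_num) _
    have e6 : (2 * ρ.N + 1) * (2 * ρ.N) * n + n + (2 * ρ.N + 1) * (2 * ρ.N) * n + n ≤
        14 * n * ρ.N ^ 2 := by nlinarith
    omega
  have hW : ρ.W = (14 * n * ρ.N ^ 2) * ρ.M := by
    rw [W, pow_succ]; nth_rewrite 2 [N]; ring
  have hlen' : τ.length ≤ 14 * ρ.N ^ 3 := hlen.trans (by
    have := Nat.mul_le_mul_right (14 * ρ.N ^ 2) (n_le_N hM)
    linarith)
  have hpre := pre_nonneg_of_large (u := ρ.x s) hw.1 hlen (by rw [← hW]; exact hs.1.le)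
    (by rw [← hW]; exact hs.2.le)
  have heff : effect τ = (K * k) • effect c + effect d + (K * k') • effect c' + effect d' := by
    simp only [hτ, effect_append, effect_flatten_replicate]
  have hbd := ρ.normLe.effect_le hw.1 hlen
  rw [← hW, abs_le, abs_le] at hbd
  have hWc : (ρ.W : ℤ) = 14 * (ρ.N : ℤ) ^ 3 := by simp [W]
  have hdet : 2 * (ρ.N : ℤ) + 1 ≤ (2 * (ρ.N : ℤ) + 1) *
      ((effect c).1 * (effect c').2 - (effect c).2 * (effect c').1) :=
    le_mul_of_one_le_right (by positivity) (by linarith)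
  have hv1 : 0 < (effect τ).1 := by
    rw [heff]
    simp only [Prod.fst_add, nsmul_fst]
    push_cast
    rw [hk, hk', hK]
    push_cast
    linarith
  have hv2 : 0 < (effect τ).2 := by
    rw [heff]
    simp only [Prod.snd_add, nsmul_snd]
    push_cast
    rw [hk, hk', hK]
    push_cast
    linarith
  refine ⟨effect τ, (Fwd.single hsl hw hpre ⟨hv1.le, hv2.le⟩).mono_len hlen', ?_, ?_, ?_⟩
  · intro h; rw [h] at hv1; exact lt_irrefl _ hv1
  · rw [← hWc]; exact hbd.1.2
  · rw [← hWc]; exact hbd.2.2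

/-- A walk in the configuration graph of a run. -/
theorem config_walk {p q : Fin n} {u w : Vec2} {l : List ℕ} (hl : ∀ t ∈ l, t < ρ.len)
    (hu : 0 ≤ u)
    (h : GWalk (fun t => (ρ.st t, ρ.x t)) (fun t => (ρ.st (t + 1), ρ.x (t + 1))) (p, u) l (q, w)) :
    TW ρ.V p (l.map ρ.tr) q ∧ effect (l.map ρ.tr) = w - u ∧
      ∀ k, 0 ≤ u + effect ((l.map ρ.tr).take k) := by
  induction l generalizing p u with
  | nil =>
    obtain ⟨rfl, rfl⟩ := Prod.mk.inj h
    exact ⟨TW.nil _, by simp [effect_nil], by simpa [effect_nil] using hu⟩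
  | cons t l ih =>
    obtain ⟨h1, h2⟩ := h
    obtain ⟨rfl, rfl⟩ := Prod.mk.inj h1
    have ht := hl t List.mem_cons_self
    obtain ⟨h3, h4, h5⟩ := ih (fun t ht => hl t (List.mem_cons_of_mem _ ht))
      (ρ.nonneg (t + 1) ht) h2
    refine ⟨⟨?_, ?_⟩, ?_, fun k => ?_⟩
    · intro e he
      rcases List.mem_cons.1 he with rfl | he
      · exact ρ.step t ht
      · exact h3.1 e he
    · exact ⟨rfl, h3.2⟩
    · rw [List.map_cons, effect_cons, h4, tr]
      exact (add_comm _ _).trans (sub_add_sub_cancel _ _ _)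
    · cases k with
      | zero => simpa [effect_nil] using hu
      | succ k =>
        rw [List.map_cons, List.take_succ_cons, effect_cons]
        refine (h5 k).trans_eq ?_
        rw [tr, ← add_assoc]
        congr 1
        exact (add_sub_cancel _ _).symm

/-- A nonnegative return within a box is a pump. -/
theorem return_fwd {B r₁ r₂ : ℕ} (hr : r₁ < r₂) (hr₂ : r₂ ≤ ρ.len) (hst : ρ.st r₁ = ρ.st r₂)
    (hle : ρ.x r₁ ≤ ρ.x r₂) (hB : ∀ t < r₂, ¬ ρ.Big B t) :
    ρ.Fwd (n * (B + 1) ^ 2) r₁ (ρ.x r₂ - ρ.x r₁) := by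
  have hw : ∀ k, r₁ + k ≤ ρ.len →
      GWalk (fun t => (ρ.st t, ρ.x t)) (fun t => (ρ.st (t + 1), ρ.x (t + 1)))
        (ρ.st r₁, ρ.x r₁) (List.range' r₁ k) (ρ.st (r₁ + k), ρ.x (r₁ + k)) := by
    intro k hk
    induction k with
    | zero => rfl
    | succ k ih =>
      rw [List.range'_1_concat]
      exact (ih (by omega)).append ⟨rfl, rfl⟩
  have hw' := hw (r₂ - r₁) (by omega)
  rw [show r₁ + (r₂ - r₁) = r₂ by omega] at hw'
  have hmem : ∀ t ∈ List.range' r₁ (r₂ - r₁), t < r₂ := by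
    intro t ht
    rw [List.mem_range'_1] at ht
    omega
  obtain ⟨l', h1, h2, h3, -⟩ := hw'.shorten
    ((Finset.univ : Finset (Fin n)) ×ˢ (Finset.Icc (0 : ℤ) B ×ˢ Finset.Icc (0 : ℤ) B)) (by
      intro t ht
      have ht' := hmem t ht
      have h4 := hB t ht'
      rw [Big] at h4
      have h5 := ρ.nonneg_fst (t := t) (by omega)
      have h6 := ρ.nonneg_snd (t := t) (by omega)
      simp only [Finset.mem_product, Finset.mem_univ, Finset.mem_Icc, true_and]
      omega) (fun _ => 0) (by simp)
  obtain ⟨h4, h5, h6⟩ := config_walk (fun t ht => (hmem t (h1 ht)).trans_le hr₂)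
    (ρ.nonneg r₁ (by omega)) h3
  have hcard : l'.length ≤ n * (B + 1) ^ 2 := by
    refine h2.trans_eq ?_
    simp only [Finset.card_product, Finset.card_univ, Fintype.card_fin, Int.card_Icc, sub_zero]
    rw [show ((B : ℤ) + 1).toNat = B + 1 by omega]
    ring
  rw [← hst] at h4
  have := (Fwd.single (t := r₁) (by omega) h4 h6 (by rw [h5]; exact sub_nonneg.2 hle)).mono_len
    ((List.length_map _).trans_le hcard)
  rwa [h5] at this

end Run

theorem exists_last (p : ℕ → Prop) (a r : ℕ) :
    (∀ s, a ≤ s → s < r → ¬ p s) ∨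
      ∃ r', a ≤ r' ∧ r' < r ∧ p r' ∧ ∀ s, r' < s → s < r → ¬ p s := by
  induction r with
  | zero => exact Or.inl (by omega)
  | succ r ih =>
    by_cases h : a ≤ r ∧ p r
    · exact Or.inr ⟨r, h.1, by omega, h.2, by omega⟩
    · rcases ih with h' | ⟨r', h1, h2, h3, h4⟩
      · refine Or.inl fun s hs hs' hp => ?_
        by_cases hsr : s = r
        · subst hsr; exact h ⟨hs, hp⟩
        · exact h' s hs (by omega) hp
      · refine Or.inr ⟨r', h1, by omega, h3, fun s hs hs' hp => ?_⟩
        by_cases hsr : s = r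
        · subst hsr; exact h ⟨by omega, hp⟩
        · exact h4 s hs (by omega) hp

namespace Run

variable {n : ℕ} {ρ : Run n}

variable (ρ) in
/-- The scales of counter values. -/
def D (k : ℕ) : ℕ := (600 * ρ.N ^ 6) ^ k

theorem D_pos (hM : 1 ≤ ρ.M) (k : ℕ) : 1 ≤ ρ.D k :=
  Nat.one_le_pow _ _ (by have := one_le_N hM; positivity)

theorem D_ge (ρ : Run n) : 600 * ρ.N ^ 6 ≤ ρ.D (n + 1) :=
  Nat.le_self_pow (by omega) _

theorem N_le_D (ρ : Run n) : 600 * ρ.N ≤ ρ.D (n + 1) :=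
  le_trans (Nat.mul_le_mul_left _ (Nat.le_self_pow (by norm_num) _)) (D_ge ρ)

theorem box_le (hM : 1 ≤ ρ.M) : n * (ρ.D (n + 1) + 1) ^ 2 ≤ ρ.D (n + 1) ^ 3 := by
  have h1 := N_le_D ρ
  have h2 := n_le_N hM
  have h3 := D_pos hM (n + 1)
  generalize ρ.D (n + 1) = D at *
  calc n * (D + 1) ^ 2 ≤ n * (2 * D) ^ 2 := by gcongr; omega
    _ = 4 * n * D ^ 2 := by ring
    _ ≤ D * D ^ 2 := by gcongr; omega
    _ = D ^ 3 := by ring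

theorem n_mul_W_le (hM : 1 ≤ ρ.M) : n * (ρ.W + 1) ≤ 15 * ρ.N ^ 4 := by
  have h1 : 1 ≤ ρ.N ^ 3 := Nat.one_le_pow _ _ (one_le_N hM)
  have h2 := n_le_N hM
  calc n * (ρ.W + 1) ≤ ρ.N * (14 * ρ.N ^ 3 + ρ.N ^ 3) := by
        rw [W]; gcongr
    _ = 15 * ρ.N ^ 4 := by ring

theorem growth_le (hM : 1 ≤ ρ.M) {B : ℕ} (hB : 1 ≤ B) :
    2 * ρ.N * (B + ρ.M) + 4 * ρ.N ^ 2 * (2 * (n * (ρ.W + 1)) + 1) ≤ 600 * ρ.N ^ 6 * B := by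
  have hN1 := one_le_N hM
  have hMN : ρ.M ≤ ρ.N := M_le_N
  have e1 : ρ.N ≤ ρ.N ^ 6 := Nat.le_self_pow (by norm_num) _
  have e2 : ρ.N ^ 2 ≤ ρ.N ^ 6 := Nat.pow_le_pow_right hN1 (by norm_num)
  have e4 := n_mul_W_le hM
  have e5 : 1 ≤ ρ.N ^ 4 := Nat.one_le_pow _ _ hN1
  have e6 : ρ.N ^ 6 ≤ ρ.N ^ 6 * B := Nat.le_mul_of_pos_right _ hB
  calc 2 * ρ.N * (B + ρ.M) + 4 * ρ.N ^ 2 * (2 * (n * (ρ.W + 1)) + 1)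
      ≤ 2 * ρ.N * (B + ρ.N) + 4 * ρ.N ^ 2 * (2 * (15 * ρ.N ^ 4) + ρ.N ^ 4) := by gcongr
    _ = 2 * (ρ.N * B) + 2 * ρ.N ^ 2 + 124 * ρ.N ^ 6 := by ring
    _ ≤ 2 * (ρ.N ^ 6 * B) + 2 * ρ.N ^ 6 + 124 * ρ.N ^ 6 := by gcongr
    _ ≤ 600 * ρ.N ^ 6 * B := by rw [mul_assoc]; omega

set_option maxHeartbeats 800000 in
/-- As long as no new state is visited in the interior and there is no pump, the counters
grow by a bounded factor only. -/
theorem not_big_of_visited_eq (hM : 1 ≤ ρ.M) {T : ℕ} (hT : T ≤ ρ.len)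
    (hfirst : ∀ t < T, ¬ ρ.Big (ρ.D (n + 1)) t)
    (hT1 : (ρ.x T).1 ≤ ρ.D (n + 1) + ρ.M) (hT2 : (ρ.x T).2 ≤ ρ.D (n + 1) + ρ.M)
    (hno : ∀ v s, s ≤ T → ρ.Fwd (ρ.D (n + 1) ^ 3) s v → v.1 ≤ 2 * ρ.D (n + 1) →
      v.2 ≤ 2 * ρ.D (n + 1) → v = 0)
    {a t B : ℕ} (hB : 1 ≤ B) (hat : a ≤ t) (ht : t ≤ T) (hvis : ρ.visited a = ρ.visited t)
    (ha1 : (ρ.x a).1 ≤ B + ρ.M) (ha2 : (ρ.x a).2 ≤ B + ρ.M) :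
    ¬ ρ.Big (600 * ρ.N ^ 6 * B) t := by
  have hN1 := one_le_N hM
  have hMN : ρ.M ≤ ρ.N := M_le_N
  have hDge := D_ge ρ
  have hND := N_le_D ρ
  have hnN := n_le_N hM
  have hDpos := D_pos hM (n + 1)
  have hN36 : ρ.N ^ 3 ≤ ρ.N ^ 6 := Nat.pow_le_pow_right hN1 (by norm_num)
  have hDD : ρ.D (n + 1) ≤ ρ.D (n + 1) ^ 3 := Nat.le_self_pow (by norm_num) _
  have hxT : ∀ r ≤ T, (ρ.x r).1 ≤ ρ.D (n + 1) + ρ.M ∧ (ρ.x r).2 ≤ ρ.D (n + 1) + ρ.M := by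
    intro r hr
    by_cases h : r = T
    · subst h; exact ⟨hT1, hT2⟩
    · have := hfirst r (by omega)
      rw [Big] at this
      constructor <;> omega
  set C : Set Vec2 := {e | ∃ s, a ≤ s ∧ s ≤ t ∧ ρ.Interior s ∧ ∃ c, TW ρ.V (ρ.st s) c (ρ.st s) ∧
    c.length ≤ n ∧ effect c = e} with hC
  have hreach : ∀ s s', a ≤ s → s ≤ t → ρ.Interior s → a ≤ s' → s' ≤ t →
      ∃ d, d.length ≤ n ∧ TW ρ.V (ρ.st s) d (ρ.st s') := by
    intro s s' h1 h2 h3 h4 h5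
    have : ρ.st s ∈ ρ.visited a := by
      rw [hvis]; exact ρ.mem_visited.2 ⟨s, h2, h3, rfl⟩
    obtain ⟨r, hr, -, hrs⟩ := ρ.mem_visited.1 this
    have := ρ.seg_walk (a := r) (b := s') (by omega) (by omega)
    rw [hrs] at this
    exact this.shorten
  obtain ⟨α, β, hα1, hαN, hβ1, hβN, hψ⟩ := exists_functional C ρ.N (by exact_mod_cast hN1)
    (by
      rintro e ⟨s, -, -, -, c, hc, hl, rfl⟩
      exact cycle_bound hc hl)
    (by
      rintro e ⟨s, h1, h2, h3, c, hc, hl, rfl⟩ h4 h5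
      obtain ⟨h6, h7⟩ := cycle_bound hc hl
      rw [abs_le] at h6 h7
      refine hno _ s (by omega) ((h3.fwd (by omega) hc hl ⟨h4, h5⟩).mono_len (by omega)) ?_ ?_
      · omega
      · omega)
    (by
      rintro e ⟨s, h1, h2, h3, c, hc, hl, rfl⟩ e' ⟨s', h1', h2', h3', c', hc', hl', rfl⟩ p1 p2 p3 p4
      by_contra hcon
      obtain ⟨d, hdl, hd⟩ := hreach s s' h1 h2 h3 h1' h2'
      obtain ⟨d', hdl', hd'⟩ := hreach s' s h1' h2' h3' h1 h2
      obtain ⟨v, hv, hv0, hv1, hv2⟩ := tour_fwd hM h3 (by omega) hc hc' hd hd' hl hl' hdl hdl'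
        p1 p2 p3 p4 (not_le.1 hcon)
      have h6 : 14 * (ρ.N : ℤ) ^ 3 ≤ 2 * ρ.D (n + 1) := by
        have : 14 * ρ.N ^ 3 ≤ 2 * ρ.D (n + 1) := by omega
        exact_mod_cast this
      exact hv0 (hno v s (by omega) (hv.mono_len (by omega)) (by omega) (by omega)))
  set ψ : ℕ → ℤ := fun r => α * (ρ.x r).1 + β * (ρ.x r).2 with hψd
  have hK : |α| * ρ.M + |β| * ρ.M ≤ 2 * ρ.N * ρ.M := by
    rw [abs_of_nonneg (by omega), abs_of_nonneg (by omega)]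
    nlinarith
  have hnM : (n : ℤ) * ρ.M = ρ.N := by simp [N]
  have hnK : (n : ℤ) * (2 * ρ.N * ρ.M) = 2 * ρ.N ^ 2 := by
    linear_combination (2 * (ρ.N : ℤ)) * hnM
  have hseg : ∀ b r, a ≤ b → b ≤ r → r ≤ t → (∀ s, b ≤ s → s < r → ρ.Interior s) →
      ψ r ≤ ψ b + 2 * ρ.N ^ 2 := by
    intro b r hab hbr hrt hint
    rw [← hnK]
    refine ρ.linear_le hbr (by omega) α β _ hK fun s h1 h2 c hc hl => ?_
    exact hψ _ ⟨s, by omega, by omega, hint s h1 h2, c, hc, hl, rfl⟩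
  have hstep : ∀ r < t, ψ (r + 1) ≤ ψ r + 2 * ρ.N ^ 2 := by
    intro r hr
    have h1 := (abs_le.1 (ρ.step_fst (t := r) (by omega))).2
    have h2 := (abs_le.1 (ρ.step_snd (t := r) (by omega))).2
    have h3 : α * ((ρ.x (r + 1)).1 - (ρ.x r).1) ≤ ρ.N * ρ.M :=
      mul_le_mul_of_nonneg hαN h1 (by omega) (by positivity)
    have h4 : β * ((ρ.x (r + 1)).2 - (ρ.x r).2) ≤ ρ.N * ρ.M :=
      mul_le_mul_of_nonneg hβN h2 (by omega) (by positivity)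
    have h5 : (ρ.N : ℤ) * ρ.M ≤ ρ.N ^ 2 := by
      have : ρ.N * ρ.M ≤ ρ.N ^ 2 := by rw [sq]; exact Nat.mul_le_mul_left _ hMN
      exact_mod_cast this
    simp only [hψd]
    linarith
  have hψa : ψ a ≤ 2 * ρ.N * (B + ρ.M) := by
    have h1 : α * (ρ.x a).1 ≤ ρ.N * (B + ρ.M) :=
      mul_le_mul hαN ha1 (ρ.nonneg_fst (by omega)) (by omega)
    have h2 : β * (ρ.x a).2 ≤ ρ.N * (B + ρ.M) :=
      mul_le_mul hβN ha2 (ρ.nonneg_snd (by omega)) (by omega)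
    simp only [hψd]
    linarith
  have hrec : ∀ r, a ≤ r → r ≤ t → ψ r ≤ 2 * ρ.N * (B + ρ.M) + 4 * ρ.N ^ 2 ∨
      ∃ r' < r, (a ≤ r' ∧ r' ≤ t ∧ ¬ ρ.Interior r') ∧ ψ r ≤ ψ r' + 4 * ρ.N ^ 2 := by
    intro r har hrt
    rcases exists_last (fun s => ¬ ρ.Interior s) a r with h | ⟨r', h1, h2, h3, h4⟩
    · have := hseg a r le_rfl har hrt (fun s h1 h2 => not_not.1 (h s h1 h2))
      have : (0 : ℤ) ≤ ρ.N ^ 2 := by positivity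
      left; linarith
    · have h5 := hseg (r' + 1) r (by omega) (by omega) hrt
        (fun s h1 h2 => not_not.1 (h4 s (by omega) h2))
      have h6 := hstep r' (by omega)
      exact Or.inr ⟨r', h2, ⟨h1, by omega, h3⟩, by linarith⟩
  have hbound := record_bound
    ((Finset.univ : Finset Bool) ×ˢ ((Finset.univ : Finset (Fin n)) ×ˢ Finset.Icc (0 : ℤ) ρ.W))
    (fun r => a ≤ r ∧ r ≤ t ∧ ¬ ρ.Interior r) ψ
    (fun r => if (ρ.x r).2 ≤ ρ.W then (true, ρ.st r, (ρ.x r).2) else (false, ρ.st r, (ρ.x r).1))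
    (2 * ρ.N * (B + ρ.M)) (4 * ρ.N ^ 2) (by positivity)
    (by
      rintro r ⟨h1, h2, h3⟩
      have h4 := ρ.nonneg_fst (t := r) (by omega)
      have h5 := ρ.nonneg_snd (t := r) (by omega)
      rw [Interior] at h3
      split_ifs with h
      · simp only [Finset.mem_product, Finset.mem_univ, Finset.mem_Icc, true_and]; omega
      · simp only [Finset.mem_product, Finset.mem_univ, Finset.mem_Icc, true_and]; omega)
    (fun r hr => hrec r hr.1 hr.2.1)
    (by
      rintro r₁ r₂ ⟨h1, h2, h3⟩ ⟨h4, h5, h6⟩ h7 h8 -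
      by_contra hcon
      push Not at hcon
      simp only [hψd] at hcon
      have hle : ρ.st r₁ = ρ.st r₂ ∧ ρ.x r₁ ≤ ρ.x r₂ := by
        split_ifs at h8 with h9 h10 h10
        · simp only [Prod.mk.injEq, true_and] at h8
          refine ⟨h8.1, ?_, h8.2.le⟩
          rw [h8.2] at hcon
          by_contra hlt
          nlinarith
        · simp at h8
        · simp at h8
        · simp only [Prod.mk.injEq, true_and] at h8
          refine ⟨h8.1, h8.2.le, ?_⟩
          rw [h8.2] at hcon
          by_contra hlt
          nlinarith
      have hf := return_fwd h7 (by omega) hle.1 hle.2 (fun s hs => hfirst s (by omega))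
      have h9 := hxT r₂ (by omega)
      have h10 := ρ.nonneg_fst (t := r₁) (by omega)
      have h11 := ρ.nonneg_snd (t := r₁) (by omega)
      have h0 := hno _ r₁ (by omega) (hf.mono_len (box_le hM))
        (by simp only [Prod.fst_sub]; omega) (by simp only [Prod.snd_sub]; omega)
      rw [sub_eq_zero.1 h0] at hcon
      exact lt_irrefl _ hcon)
  have hcard : ((((Finset.univ : Finset Bool) ×ˢ
      ((Finset.univ : Finset (Fin n)) ×ˢ Finset.Icc (0 : ℤ) ρ.W)).card : ℕ) : ℤ) =
      2 * (n * (ρ.W + 1)) := by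
    simp only [Finset.card_product, Finset.card_univ, Fintype.card_fin, Int.card_Icc, sub_zero,
      Fintype.card_bool]
    rw [show ((ρ.W : ℤ) + 1).toNat = ρ.W + 1 by omega]
    push_cast; ring
  rw [hcard] at hbound
  have hψt : ψ t ≤ 2 * ρ.N * (B + ρ.M) + 4 * ρ.N ^ 2 * (2 * (n * (ρ.W + 1)) + 1) := by
    rcases hrec t hat le_rfl with h | ⟨r', -, h1, h2⟩
    · have : (0 : ℤ) ≤ 4 * ρ.N ^ 2 * (2 * (n * (ρ.W + 1))) := by positivity
      linarith
    · have := hbound r' h1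
      linarith
  have hfin := growth_le hM hB
  have hfin' : 2 * (ρ.N : ℤ) * (B + ρ.M) + 4 * ρ.N ^ 2 * (2 * (n * (ρ.W + 1)) + 1) ≤
      (600 * ρ.N ^ 6 * B : ℕ) := by exact_mod_cast hfin
  have h1 := ρ.nonneg_fst (t := t) (by omega)
  have h2 := ρ.nonneg_snd (t := t) (by omega)
  have h3 : ψ t ≤ (600 * ρ.N ^ 6 * B : ℕ) := hψt.trans hfin'
  simp only [hψd] at h3
  have h4 : 0 ≤ (α - 1) * (ρ.x t).1 := mul_nonneg (by omega) h1
  have h5 : 0 ≤ (β - 1) * (ρ.x t).2 := mul_nonneg (by omega) h2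
  rintro (h | h) <;> linarith

/-- When a counter becomes large for the first time, there is a nonzero pump. -/
theorem exists_fwd_first (hM : 1 ≤ ρ.M) {T : ℕ} (hT : T ≤ ρ.len)
    (hbig : ρ.Big (ρ.D (n + 1)) T) (hfirst : ∀ t < T, ¬ ρ.Big (ρ.D (n + 1)) t)
    (hT1 : (ρ.x T).1 ≤ ρ.D (n + 1) + ρ.M) (hT2 : (ρ.x T).2 ≤ ρ.D (n + 1) + ρ.M) :
    ∃ v, ρ.Fwd (ρ.D (n + 1) ^ 3) T v ∧ v ≠ 0 ∧ v.1 ≤ 2 * ρ.D (n + 1) ∧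
      v.2 ≤ 2 * ρ.D (n + 1) := by
  by_contra! hcon
  have hno : ∀ v s, s ≤ T → ρ.Fwd (ρ.D (n + 1) ^ 3) s v → v.1 ≤ 2 * ρ.D (n + 1) →
      v.2 ≤ 2 * ρ.D (n + 1) → v = 0 := by
    intro v s hs hv h1 h2
    by_contra h0
    exact absurd h2 (not_le.2 (hcon v (hv.mono hs hT) h0 h1))
  have hcl : ∀ k t, t ≤ T → ρ.Big (ρ.D k) t → k ≤ (ρ.visited t).card := by
    intro k
    induction k with
    | zero => intro t _ _; exact Nat.zero_le _
    | succ k ih =>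
      intro t ht hb
      by_contra hlt
      have hDk : ρ.D (k + 1) = 600 * ρ.N ^ 6 * ρ.D k := by rw [D, D, pow_succ, mul_comm]
      have hle : ρ.D k ≤ ρ.D (k + 1) := by
        rw [hDk]
        exact Nat.le_mul_of_pos_left _ (by have := one_le_N hM; positivity)
      obtain ⟨a, hat, hba, -, ha1, ha2⟩ := (hb.mono hle).first (by omega)
      have h1 := ih a (by omega) hba
      have hvis : ρ.visited a = ρ.visited t :=
        Finset.eq_of_subset_of_card_le (ρ.visited_mono hat) (by omega)
      rw [hDk] at hb
      exact not_big_of_visited_eq hM hT hfirst hT1 hT2 hno (D_pos hM k) hat ht hvis ha1 ha2 hb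
  have h1 := hcl (n + 1) T le_rfl hbig
  have h2 := ρ.card_visited_le T
  omega

end Run

/-! ### Hills -/

section Hills

variable {n : ℕ} {V : Set (Transition n)}

/-- A walk of length `L` given by its states and counter values as functions of time. -/
def Path (V : Set (Transition n)) (L : ℕ) (st : ℕ → Fin n) (z : ℕ → Vec2) : Prop :=
  ∀ t < L, (st t, z (t + 1) - z t, st (t + 1)) ∈ V

theorem Path.exists_walk {L : ℕ} {st : ℕ → Fin n} {z : ℕ → Vec2} (h : Path V L st z) {a : ℕ}
    (k : ℕ) (hk : a + k ≤ L) :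
    ∃ l, TW V (st a) l (st (a + k)) ∧ l.length = k ∧
      (∀ e ∈ l, ∃ t, a ≤ t ∧ t < a + k ∧ e.1 = st t) ∧
      ∀ i ≤ k, effect (l.take i) = z (a + i) - z a := by
  induction k with
  | zero => exact ⟨[], TW.nil _, rfl, by simp, by intro i hi; simp [Nat.le_zero.1 hi, effect_nil]⟩
  | succ k ih =>
    obtain ⟨l, h1, h2, h3, h4⟩ := ih (by omega)
    have hs := h (a + k) (by omega)
    refine ⟨l ++ [(st (a + k), z (a + k + 1) - z (a + k), st (a + k + 1))], h1.append ⟨?_, ?_⟩,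
      by simp [h2], ?_, ?_⟩
    · simpa using hs
    · exact ⟨rfl, rfl⟩
    · intro e he
      rcases List.mem_append.1 he with he | he
      · obtain ⟨t, ht1, ht2, ht3⟩ := h3 e he
        exact ⟨t, ht1, by omega, ht3⟩
      · rw [List.mem_singleton.1 he]
        exact ⟨a + k, by omega, by omega, rfl⟩
    · intro i hi
      by_cases hik : i ≤ k
      · rw [List.take_append_of_le_length (by omega), h4 i hik]
      · rw [List.take_of_length_le (by simp; omega), effect_append]
        have h5 := h4 k le_rfl
        rw [List.take_of_length_le (by omega)] at h5
        rw [h5, effect_cons, effect_nil, add_zero, show i = k + 1 by omega]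
        exact (add_comm _ _).trans (sub_add_sub_cancel _ _ _)

/-- Removing a closed part of a walk. -/
theorem Path.cut {L : ℕ} {st : ℕ → Fin n} {z : ℕ → Vec2} (h : Path V L st z) {i j : ℕ}
    (hij : i ≤ j) (hj : j ≤ L) (hst : st i = st j) :
    ∃ st' z', Path V (L - (j - i)) st' z' ∧ (∀ t ≤ i, st' t = st t ∧ z' t = z t) ∧
      ∀ t ≥ i, st' t = st (t + (j - i)) ∧ z' t = z (t + (j - i)) - (z j - z i) := by
  set st' : ℕ → Fin n := fun t => if t ≤ i then st t else st (t + (j - i)) with hst'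
  set z' : ℕ → Vec2 := fun t => if t ≤ i then z t else z (t + (j - i)) - (z j - z i) with hz'
  have h1 : ∀ t ≤ i, st' t = st t ∧ z' t = z t := fun t ht => by simp [hst', hz', ht]
  have h2 : ∀ t ≥ i, st' t = st (t + (j - i)) ∧ z' t = z (t + (j - i)) - (z j - z i) := by
    intro t ht
    by_cases hti : t = i
    · rw [hti, (h1 i le_rfl).1, (h1 i le_rfl).2, show i + (j - i) = j by omega]
      exact ⟨hst, by abel⟩
    · simp [hst', hz', show ¬ t ≤ i by omega]
  refine ⟨st', z', fun t ht => ?_, h1, h2⟩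
  by_cases hti : t < i
  · rw [(h1 t hti.le).1, (h1 t hti.le).2, (h1 (t + 1) hti).1, (h1 (t + 1) hti).2]
    exact h t (by omega)
  · obtain ⟨e1, e2⟩ := h2 t (by omega)
    obtain ⟨e3, e4⟩ := h2 (t + 1) (by omega)
    rw [e1, e2, e3, e4, sub_sub_sub_cancel_right, show t + 1 + (j - i) = t + (j - i) + 1 by omega]
    exact h _ (by omega)

/-- A walk whose intermediate configurations have second counter above `W` and states in `J`. -/
def Hill (V : Set (Transition n)) (J : Set (Fin n)) (W : ℤ) (L : ℕ) (st : ℕ → Fin n)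
    (z : ℕ → Vec2) : Prop :=
  Path V L st z ∧ ∀ t, 0 < t → t < L → W < (z t).2 ∧ st t ∈ J

variable {J : Set (Fin n)} {g : Vec2}

theorem closed_le (hJ : ∀ q ∈ J, ∀ c, TW V q c q → c.length ≤ n →
      g.2 * (effect c).1 ≤ g.1 * (effect c).2)
    {L : ℕ} {st : ℕ → Fin n} {z : ℕ → Vec2} (h : Path V L st z) {a b : ℕ} (hab : a ≤ b)
    (hb : b ≤ L) (hst : st a = st b) (hmem : ∀ t, a ≤ t → t < b → st t ∈ J) :
    g.2 * (z b - z a).1 ≤ g.1 * (z b - z a).2 := by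
  obtain ⟨l, h1, h2, h3, h4⟩ := h.exists_walk (a := a) (b - a) (by omega)
  rw [show a + (b - a) = b by omega] at h1 h3
  have h5 := h4 (b - a) le_rfl
  rw [List.take_of_length_le (by omega), show a + (b - a) = b by omega] at h5
  have hcl : ∀ c r, c ⊆ l → c.length ≤ (Finset.univ : Finset (Fin n)).card →
      GWalk (fun e : Transition n => e.1) (fun e => e.2.2) r c r →
      (c.map (fun e : Transition n => g.2 * e.2.1.1 + (-g.1) * e.2.1.2)).sum ≤ 0 := by
    intro c r hcs hcl hcw
    rw [effect_linear]
    cases c with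
    | nil => simp [effect_nil]
    | cons e c =>
      obtain ⟨t, ht1, ht2, he⟩ := h3 e (hcs List.mem_cons_self)
      have hr : r = st t := hcw.1.symm.trans he
      have := hJ r (hr ▸ hmem t ht1 ht2) _ ⟨fun e he => h1.1 e (hcs he), hcw⟩ (by simpa using hcl)
      linarith
  obtain ⟨l', e1, e2, e3, e4⟩ := h1.2.shorten Finset.univ (by simp) _ hcl
  rw [← hst] at e3
  have e5 := hcl l' _ e1 e2 e3
  rw [effect_linear, h5] at e4
  linarith

/-- Removing two closed parts of a hill whose effects on the second counter cancel. -/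
theorem Hill.double_cut (hg : 0 < g.2)
    (hJ : ∀ q ∈ J, ∀ c, TW V q c q → c.length ≤ n → g.2 * (effect c).1 ≤ g.1 * (effect c).2)
    {W : ℤ} {L : ℕ} {st : ℕ → Fin n} {z : ℕ → Vec2} (h : Hill V J W L st z) {i j i' j' : ℕ}
    (hi : 0 < i) (hij : i < j) (hji : j ≤ i') (hij' : i' ≤ j') (hj : j' < L)
    (hst : st i = st j) (hst' : st i' = st j') (hz : (z j).2 - (z i).2 = (z i').2 - (z j').2)
    (hmid : ∀ t, j ≤ t → t ≤ i' → W < (z t).2 - ((z j).2 - (z i).2)) :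
    ∃ L' < L, ∃ st' z', Hill V J W L' st' z' ∧ st' 0 = st 0 ∧ st' L' = st L ∧ z' 0 = z 0 ∧
      (z' L').2 = (z L).2 ∧ (z L).1 ≤ (z' L').1 := by
  obtain ⟨st₁, z₁, p₁, q₁, r₁⟩ := h.1.cut hij' hj.le hst'
  obtain ⟨st₂, z₂, p₂, q₂, r₂⟩ := p₁.cut (i := i) (j := j) hij.le (by omega)
    (by rw [(q₁ i (by omega)).1, (q₁ j hji).1, hst])
  rw [(q₁ i (by omega)).2, (q₁ j hji).2] at r₂
  have hB := closed_le hJ h.1 hij.le (by omega) hst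
    (fun t h1 h2 => (h.2 t (by omega) (by omega)).2)
  have hB' := closed_le hJ h.1 hij' hj.le hst'
    (fun t h1 h2 => (h.2 t (by omega) (by omega)).2)
  simp only [Prod.fst_sub, Prod.snd_sub] at hB hB'
  have hend : ∀ t, i ≤ t → i' ≤ t + (j - i) → st₂ t = st (t + (j - i) + (j' - i')) ∧
      z₂ t = z (t + (j - i) + (j' - i')) - (z j' - z i') - (z j - z i) := by
    intro t h1 h2
    rw [(r₂ t h1).1, (r₂ t h1).2, (r₁ _ h2).1, (r₁ _ h2).2]
    exact ⟨rfl, rfl⟩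
  refine ⟨L - (j' - i') - (j - i), by omega, st₂, z₂, ⟨p₂, fun t ht htL => ?_⟩, ?_, ?_, ?_, ?_, ?_⟩
  · by_cases hti : t ≤ i
    · rw [(q₂ t hti).1, (q₂ t hti).2, (q₁ t (by omega)).1, (q₁ t (by omega)).2]
      exact h.2 t ht (by omega)
    · by_cases hti' : t + (j - i) ≤ i'
      · rw [(r₂ t (by omega)).1, (r₂ t (by omega)).2, (q₁ _ hti').1, (q₁ _ hti').2]
        exact ⟨hmid _ (by omega) hti', (h.2 _ (by omega) (by omega)).2⟩
      · rw [(hend t (by omega) (by omega)).1, (hend t (by omega) (by omega)).2]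
        have := h.2 (t + (j - i) + (j' - i')) (by omega) (by omega)
        refine ⟨?_, this.2⟩
        simp only [Prod.snd_sub]
        linarith [this.1]
  · rw [(q₂ 0 (by omega)).1, (q₁ 0 (by omega)).1]
  · rw [(hend _ (by omega) (by omega)).1]
    congr 1; omega
  · rw [(q₂ 0 (by omega)).2, (q₁ 0 (by omega)).2]
  · rw [(hend _ (by omega) (by omega)).2,
      show L - (j' - i') - (j - i) + (j - i) + (j' - i') = L by omega]
    simp only [Prod.snd_sub]
    linarith
  · rw [(hend _ (by omega) (by omega)).2,
      show L - (j' - i') - (j - i) + (j - i) + (j' - i') = L by omega]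
    simp only [Prod.fst_sub]
    have : g.2 * ((z j).1 - (z i).1 + ((z j').1 - (z i').1)) ≤ 0 := by
      have : g.1 * ((z j).2 - (z i).2) + g.1 * ((z j').2 - (z i').2) = 0 := by
        rw [hz]; ring
      linarith
    have := nonpos_of_mul_nonpos_right this hg
    linarith

/-- A high peak of a hill can be lowered. -/
theorem Hill.lower_peak {M : ℕ} (hM : NormLe V M) (hg : 0 < g.2)
    (hJ : ∀ q ∈ J, ∀ c, TW V q c q → c.length ≤ n → g.2 * (effect c).1 ≤ g.1 * (effect c).2)
    {W : ℤ} {L : ℕ} {st : ℕ → Fin n} {z : ℕ → Vec2} (h : Hill V J W L st z)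
    (h0 : (z 0).2 ≤ W) (hL : (z L).2 ≤ W) {p : ℕ} (hp : p ≤ L)
    (hpeak : W + M + (n * M : ℕ) ^ 2 < (z p).2) :
    ∃ L' < L, ∃ st' z', Hill V J W L' st' z' ∧ st' 0 = st 0 ∧ st' L' = st L ∧ z' 0 = z 0 ∧
      (z' L').2 = (z L).2 ∧ (z L).1 ≤ (z' L').1 := by
  have hstep : ∀ t < L, |(z (t + 1)).2 - (z t).2| ≤ M := fun t ht => (hM _ (h.1 t ht)).2
  have hup : ∀ ℓ : ℤ, W + M ≤ ℓ → ℓ < (z p).2 → ∃ a, 0 < a ∧ a < p ∧ (z a).2 ≤ ℓ ∧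
      ℓ - M < (z a).2 ∧ ∀ t, a < t → t ≤ p → ℓ < (z t).2 := by
    intro ℓ h1 h2
    rcases exists_last (fun t => (z t).2 ≤ ℓ) 0 p with h3 | ⟨a, -, ha, ha1, ha2⟩
    · exfalso
      have h4 : p ≠ 0 := by rintro rfl; omega
      exact h3 0 le_rfl (by omega) (by omega)
    · have h5 : ∀ t, a < t → t ≤ p → ℓ < (z t).2 := by
        intro t ht htp
        by_cases htp' : t = p
        · rw [htp']; exact h2
        · exact not_le.1 (ha2 t ht (by omega))
      have h6 := h5 (a + 1) (by omega) (by omega)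
      have h7 := abs_le.1 (hstep a (by omega))
      refine ⟨a, ?_, ha, ha1, by omega, h5⟩
      by_contra h8
      have : a = 0 := by omega
      subst this
      omega
  have hdown : ∀ ℓ : ℤ, W + M ≤ ℓ → ℓ < (z p).2 → ∃ b, p < b ∧ b < L ∧ (z b).2 ≤ ℓ ∧
      ℓ - M < (z b).2 ∧ ∀ t, p ≤ t → t < b → ℓ < (z t).2 := by
    classical
    intro ℓ h1 h2
    have hex : ∃ t, p ≤ t ∧ (z t).2 ≤ ℓ := ⟨L, hp, by omega⟩
    have hs := Nat.find_spec hex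
    have hmin : ∀ t, p ≤ t → t < Nat.find hex → ℓ < (z t).2 := fun t ht1 ht2 => by
      by_contra hc
      exact Nat.find_min hex ht2 ⟨ht1, not_lt.1 hc⟩
    have hle : Nat.find hex ≤ L := Nat.find_min' hex ⟨hp, by omega⟩
    have hne : p < Nat.find hex := by
      rcases Nat.lt_or_ge p (Nat.find hex) with h' | h'
      · exact h'
      · have : Nat.find hex = p := by omega
        rw [this] at hs
        omega
    have h6 := hmin (Nat.find hex - 1) (by omega) (by omega)
    have h7 := abs_le.1 (hstep (Nat.find hex - 1) (by omega))
    rw [show Nat.find hex - 1 + 1 = Nat.find hex by omega] at h7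
    refine ⟨Nat.find hex, hne, ?_, hs.2, by omega, hmin⟩
    by_contra h8
    have h9 : Nat.find hex = L := by omega
    rw [h9] at h6 h7
    omega
  choose! a ha0 hap ha1 ha2 ha3 using hup
  choose! b hbp hbL hb1 hb2 hb3 using hdown
  obtain ⟨k, hk, k', hk', hkk, heq⟩ : ∃ k ∈ Finset.range ((n * M) ^ 2 + 1),
      ∃ k' ∈ Finset.range ((n * M) ^ 2 + 1), k ≠ k' ∧
        (fun k : ℕ => ((st (a (W + M + k)), W + M + k - (z (a (W + M + k))).2),
          (st (b (W + M + k)), W + M + k - (z (b (W + M + k))).2))) k =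
        (fun k : ℕ => ((st (a (W + M + k)), W + M + k - (z (a (W + M + k))).2),
          (st (b (W + M + k)), W + M + k - (z (b (W + M + k))).2))) k' := by
    refine Finset.exists_ne_map_eq_of_card_lt_of_maps_to
      (t := ((Finset.univ : Finset (Fin n)) ×ˢ Finset.Ico (0 : ℤ) M) ×ˢ
        ((Finset.univ : Finset (Fin n)) ×ˢ Finset.Ico (0 : ℤ) M)) ?_ ?_
    · simp only [Finset.card_product, Finset.card_univ, Fintype.card_fin, Int.card_Ico, sub_zero,
        Int.toNat_natCast, Finset.card_range]
      rw [sq]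
      omega
    · intro k hk
      have hk' : k ≤ (n * M) ^ 2 := by
        have := Finset.mem_range.1 (Finset.mem_coe.1 hk)
        omega
      have hk2 : (k : ℤ) ≤ (n * M : ℕ) ^ 2 := by exact_mod_cast hk'
      have e1 : W + (M : ℤ) ≤ W + M + k := by omega
      have e2 : W + (M : ℤ) + k < (z p).2 := by omega
      have f1 := ha1 _ e1 e2
      have f2 := ha2 _ e1 e2
      have f3 := hb1 _ e1 e2
      have f4 := hb2 _ e1 e2
      simp only [Finset.coe_product, Finset.coe_univ, Finset.coe_Ico, Set.mem_prod, Set.mem_univ,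
        Set.mem_Ico, true_and]
      omega
  wlog hlt : k < k' generalizing k k'
  · exact this k' hk' k hk hkk.symm heq.symm (by omega)
  simp only [Prod.mk.injEq] at heq
  obtain ⟨⟨s1, s2⟩, s3, s4⟩ := heq
  have hk2 : ∀ k ∈ Finset.range ((n * M) ^ 2 + 1), W + (M : ℤ) + k < (z p).2 := by
    intro k hk
    have : k ≤ (n * M) ^ 2 := by
      have := Finset.mem_range.1 hk
      omega
    have hk2 : (k : ℤ) ≤ (n * M : ℕ) ^ 2 := by exact_mod_cast this
    omega
  have u1 := hk2 k hk
  have u2 := hk2 k' hk'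
  clear hk2 hkk hk hk' hpeak
  generalize hℓ : W + (M : ℤ) + k = ℓ at *
  generalize hℓ' : W + (M : ℤ) + k' = ℓ' at *
  have hlt' : ℓ < ℓ' := by omega
  have v1 : W + (M : ℤ) ≤ ℓ := by omega
  have v2 : W + (M : ℤ) ≤ ℓ' := by omega
  have w1 := hap ℓ v1 u1
  have w2 := hap ℓ' v2 u2
  have w3 := hbp ℓ v1 u1
  have w4 := hbp ℓ' v2 u2
  have w5 := hbL ℓ v1 u1
  have w6 := ha0 ℓ v1 u1
  have hij : a ℓ < a ℓ' := by
    by_contra hc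
    rcases Nat.eq_or_lt_of_le (not_lt.1 hc) with hc | hc
    · rw [hc] at s2; omega
    · have := ha3 ℓ' v2 u2 _ hc w1.le
      have := ha1 ℓ v1 u1
      omega
  have hij' : b ℓ' ≤ b ℓ := by
    by_contra hc
    have := hb3 ℓ' v2 u2 (b ℓ) (by omega) (by omega)
    have := hb1 ℓ v1 u1
    omega
  have x1 := (h.2 (a ℓ) w6 (by omega)).1
  have x2 := (h.2 (b ℓ) (by omega) w5).1
  refine h.double_cut hg hJ w6 hij (by omega) hij' w5 s1 s3.symm (by omega) fun t ht1 ht2 => ?_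
  rcases Nat.eq_or_lt_of_le ht1 with rfl | ht1
  · omega
  rcases Nat.eq_or_lt_of_le ht2 with rfl | ht2
  · omega
  rcases le_total t p with htp | htp
  · have := ha3 ℓ' v2 u2 t ht1 htp
    omega
  · have := hb3 ℓ' v2 u2 t htp ht2
    omega

/-- A hill can be replaced by a short one reaching at least as far. -/
theorem Hill.shorten {M : ℕ} (hM : NormLe V M) (hg : 0 < g.2)
    (hJ : ∀ q ∈ J, ∀ c, TW V q c q → c.length ≤ n → g.2 * (effect c).1 ≤ g.1 * (effect c).2)
    {W : ℤ} {L : ℕ} {st : ℕ → Fin n} {z : ℕ → Vec2} (h : Hill V J W L st z)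
    (h0 : (z 0).2 ≤ W) (hL : (z L).2 ≤ W) :
    ∃ L' ≤ n * (M + (n * M) ^ 2) + 1, ∃ st' z', Hill V J W L' st' z' ∧ st' 0 = st 0 ∧
      st' L' = st L ∧ z' 0 = z 0 ∧ (z' L').2 = (z L).2 ∧ (z L).1 ≤ (z' L').1 := by
  induction L using Nat.strong_induction_on generalizing st z with
  | _ L ih =>
    suffices hred : L ≤ n * (M + (n * M) ^ 2) + 1 ∨ ∃ L' < L, ∃ st' z', Hill V J W L' st' z' ∧
        st' 0 = st 0 ∧ st' L' = st L ∧ z' 0 = z 0 ∧ (z' L').2 = (z L).2 ∧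
        (z L).1 ≤ (z' L').1 by
      rcases hred with hred | ⟨L₁, hL₁, st₁, z₁, h₁, e1, e2, e3, e4, e5⟩
      · exact ⟨L, hred, st, z, h, rfl, rfl, rfl, rfl, le_rfl⟩
      · obtain ⟨L', hL', st', z', h', f1, f2, f3, f4, f5⟩ :=
          ih L₁ hL₁ h₁ (by rw [e3]; exact h0) (by rw [e4]; exact hL)
        exact ⟨L', hL', st', z', h', f1.trans e1, f2.trans e2, f3.trans e3, f4.trans e4,
          e5.trans f5⟩
    by_cases hpeak : ∃ p ≤ L, W + M + (n * M : ℕ) ^ 2 < (z p).2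
    · obtain ⟨p, hp, hpeak⟩ := hpeak
      exact Or.inr (h.lower_peak hM hg hJ h0 hL hp hpeak)
    push Not at hpeak
    by_cases hlen : L ≤ n * (M + (n * M) ^ 2) + 1
    · exact Or.inl hlen
    right
    obtain ⟨i, hi, j, hj, hij, heq⟩ : ∃ i ∈ Finset.Ico 1 L, ∃ j ∈ Finset.Ico 1 L, i ≠ j ∧
        (fun t => (st t, (z t).2)) i = (fun t => (st t, (z t).2)) j := by
      refine Finset.exists_ne_map_eq_of_card_lt_of_maps_to
        (t := (Finset.univ : Finset (Fin n)) ×ˢ Finset.Ioc W (W + M + (n * M : ℕ) ^ 2)) ?_ ?_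
      · simp only [Finset.card_product, Finset.card_univ, Fintype.card_fin, Int.card_Ioc,
          Nat.card_Ico]
        rw [show W + M + ((n * M : ℕ) : ℤ) ^ 2 - W = (M + (n * M) ^ 2 : ℕ) by push_cast; ring,
          Int.toNat_natCast]
        omega
      · intro t ht
        have ht := Finset.mem_Ico.1 (Finset.mem_coe.1 ht)
        have h1 := h.2 t (by omega) ht.2
        have h2 := hpeak t ht.2.le
        simp only [Finset.coe_product, Finset.coe_univ, Finset.coe_Ioc, Set.mem_prod,
          Set.mem_univ, Set.mem_Ioc, true_and]
        exact ⟨h1.1, h2⟩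
    wlog hlt : i < j generalizing i j
    · exact this j hj i hi hij.symm heq.symm (by omega)
    obtain ⟨e1, e2⟩ := Prod.mk.inj heq
    have hi := Finset.mem_Ico.1 hi
    have hj := Finset.mem_Ico.1 hj
    refine h.double_cut hg hJ (by omega) hlt le_rfl le_rfl hj.2 e1 rfl (by omega)
      fun t ht1 ht2 => ?_
    rw [show t = j by omega]
    have := (h.2 j (by omega) hj.2).1
    omega

end Hills

namespace Run

variable {n : ℕ} (ρ : Run n)

/-! ### Hops along the horizontal strip -/

/-- The second counter is small. -/
def Strip (t : ℕ) : Prop := (ρ.x t).2 ≤ ρ.W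

/-- Consecutive strip times between `a` and `b`. -/
def IsHop (a b : ℕ) (e : ℕ × ℕ) : Prop :=
  a ≤ e.1 ∧ e.1 < e.2 ∧ e.2 ≤ b ∧ ρ.Strip e.1 ∧ ρ.Strip e.2 ∧
    ∀ s, e.1 < s → s < e.2 → ¬ ρ.Strip s

/-- The strip configuration at time `t`, up to its first counter. -/
def typ (t : ℕ) : Fin n × ℤ := (ρ.st t, (ρ.x t).2)

variable {ρ}

theorem IsHop.exists_walk (hM : 1 ≤ ρ.M) {g : Vec2} (hg : 0 < g.2) {J : Set (Fin n)}
    (hJ : ∀ q ∈ J, ∀ c, TW ρ.V q c q → c.length ≤ n → g.2 * (effect c).1 ≤ g.1 * (effect c).2)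
    {a b : ℕ} (hb : b ≤ ρ.len) (hmem : ∀ t, a ≤ t → t ≤ b → ¬ ρ.Strip t → ρ.st t ∈ J)
    {e : ℕ × ℕ} (he : ρ.IsHop a b e) :
    ∃ ω, TW ρ.V (ρ.st e.1) ω (ρ.st e.2) ∧ ω.length ≤ 3 * ρ.N ^ 3 ∧
      (effect ω).2 = (ρ.x e.2).2 - (ρ.x e.1).2 ∧
      (ρ.x e.2).1 - (ρ.x e.1).1 ≤ (effect ω).1 ∧
      ∀ k, 0 ≤ (ρ.x e.1).2 + (effect (ω.take k)).2 := by
  obtain ⟨h1, h2, h3, h4, h5, h6⟩ := he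
  have hh : Hill ρ.V J ρ.W (e.2 - e.1) (fun t => ρ.st (e.1 + t)) (fun t => ρ.x (e.1 + t)) :=
    ⟨fun t ht => ρ.step (e.1 + t) (by omega), fun t ht htL =>
      ⟨not_le.1 (h6 _ (by omega) (by omega)), hmem _ (by omega) (by omega)
        (h6 _ (by omega) (by omega))⟩⟩
  have he2 : e.1 + (e.2 - e.1) = e.2 := by omega
  obtain ⟨L, hL, st, z, hz, e1, e2, e3, e4, e5⟩ := hh.shorten ρ.normLe hg hJ h4
    (by simp only [he2]; exact h5)
  simp only [he2, add_zero] at e1 e2 e3 e4 e5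
  obtain ⟨ω, w1, w2, -, w4⟩ := hz.1.exists_walk (a := 0) L (by omega)
  simp only [zero_add, e1, e2, e3] at w1 w4
  have w5 := w4 L le_rfl
  rw [List.take_of_length_le w2.le] at w5
  refine ⟨ω, w1, ?_, ?_, ?_, fun k => ?_⟩
  · have hN1 := one_le_N hM
    have f1 := n_le_N hM
    have f2 : ρ.M ≤ ρ.N ^ 2 := M_le_N.trans (Nat.le_self_pow (by norm_num) _)
    have f3 : 1 ≤ ρ.N ^ 3 := Nat.one_le_pow _ _ hN1
    have f4 : n * (ρ.M + (n * ρ.M) ^ 2) ≤ ρ.N * (ρ.N ^ 2 + ρ.N ^ 2) := by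
      rw [← N]; gcongr
    rw [w2]
    refine hL.trans ?_
    calc _ ≤ ρ.N * (ρ.N ^ 2 + ρ.N ^ 2) + ρ.N ^ 3 := add_le_add f4 f3
      _ = 3 * ρ.N ^ 3 := by ring
  · rw [w5, Prod.snd_sub, e4]
  · rw [w5, Prod.fst_sub]; linarith
  · have key : ∀ i ≤ L, 0 ≤ (z i).2 := by
      intro i hi
      rcases Nat.eq_zero_or_pos i with rfl | hi0
      · rw [e3]; exact ρ.nonneg_snd (by omega)
      rcases Nat.eq_or_lt_of_le hi with rfl | hi
      · rw [e4]; exact ρ.nonneg_snd (by omega)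
      · have := (hz.2 i hi0 hi).1
        omega
    rcases le_total k L with hk | hk
    · rw [w4 k hk, Prod.snd_sub, add_sub_cancel]; exact key k hk
    · rw [List.take_of_length_le (by omega), w5, Prod.snd_sub, add_sub_cancel]
      exact key L le_rfl

theorem exists_hops {a b : ℕ} (hab : a ≤ b) (ha : ρ.Strip a) (hb : ρ.Strip b) :
    ∃ l : List (ℕ × ℕ), (∀ e ∈ l, ρ.IsHop a b e) ∧
      GWalk (fun e => ρ.typ e.1) (fun e => ρ.typ e.2) (ρ.typ a) l (ρ.typ b) ∧
      (l.map fun e => (ρ.x e.2).1 - (ρ.x e.1).1).sum = (ρ.x b).1 - (ρ.x a).1 := by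
  induction b using Nat.strong_induction_on with
  | _ b ih =>
    rcases Nat.eq_or_lt_of_le hab with rfl | hab
    · exact ⟨[], by simp, rfl, by simp⟩
    rcases exists_last ρ.Strip a b with h | ⟨r, h1, h2, h3, h4⟩
    · exact absurd ha (h a le_rfl hab)
    obtain ⟨l, f1, f2, f3⟩ := ih r h2 h1 h3
    refine ⟨l ++ [(r, b)], ?_, f2.append ⟨rfl, rfl⟩, by simp [f3]⟩
    intro e he
    rcases List.mem_append.1 he with he | he
    · obtain ⟨g1, g2, g3, g4⟩ := f1 e he
      exact ⟨g1, g2, by omega, g4⟩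
    · rw [List.mem_singleton.1 he]
      exact ⟨h1, h2, le_rfl, h3, hb, h4⟩

theorem exists_hop_walk {K : ℕ} {l : List (ℕ × ℕ)} {r r' : Fin n × ℤ}
    (hl : ∀ e ∈ l, ∃ ω, TW ρ.V (ρ.st e.1) ω (ρ.st e.2) ∧ ω.length ≤ K ∧
      (effect ω).2 = (ρ.x e.2).2 - (ρ.x e.1).2 ∧
      (ρ.x e.2).1 - (ρ.x e.1).1 ≤ (effect ω).1 ∧
      ∀ k, 0 ≤ (ρ.x e.1).2 + (effect (ω.take k)).2)
    (h : GWalk (fun e : ℕ × ℕ => ρ.typ e.1) (fun e => ρ.typ e.2) r l r') (hr : 0 ≤ r.2) :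
    ∃ γ, TW ρ.V r.1 γ r'.1 ∧ γ.length ≤ l.length * K ∧ (effect γ).2 = r'.2 - r.2 ∧
      (l.map fun e => (ρ.x e.2).1 - (ρ.x e.1).1).sum ≤ (effect γ).1 ∧
      ∀ k, 0 ≤ r.2 + (effect (γ.take k)).2 := by
  induction l generalizing r with
  | nil =>
    obtain rfl : r = r' := h
    exact ⟨[], TW.nil _, by simp, by simp [effect_nil], by simp [effect_nil],
      by simpa [effect_nil] using hr⟩
  | cons e l ih =>
    obtain ⟨rfl, h⟩ := h
    obtain ⟨ω, w1, w2, w3, w4, w5⟩ := hl e List.mem_cons_self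
    have hr' : 0 ≤ (ρ.typ e.2).2 := by
      have := w5 ω.length
      rw [List.take_length, w3] at this
      change 0 ≤ (ρ.x e.2).2
      linarith
    obtain ⟨γ, g1, g2, g3, g4, g5⟩ := ih (fun e he => hl e (List.mem_cons_of_mem _ he)) h hr'
    simp only [typ] at g1 g3 g5 ⊢
    refine ⟨ω ++ γ, w1.append g1, ?_, ?_, ?_, fun k => ?_⟩
    · rw [List.length_append, List.length_cons, Nat.succ_mul]; omega
    · rw [effect_append, Prod.snd_add, w3, g3]; ring
    · rw [effect_append, Prod.fst_add, List.map_cons, List.sum_cons]; linarith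
    · rw [List.take_append, effect_append, Prod.snd_add]
      by_cases hk : k ≤ ω.length
      · rw [Nat.sub_eq_zero_of_le hk, List.take_zero, effect_nil]
        simpa using w5 k
      · rw [List.take_of_length_le (by omega), w3]
        linarith [g5 (k - ω.length)]

/-- A repetition along the horizontal strip with increasing first counter yields a horizontal
pump. -/
theorem exists_horizontal (hM : 1 ≤ ρ.M) {g : Vec2} (hg : 0 < g.2) {J : Set (Fin n)}
    (hJ : ∀ q ∈ J, ∀ c, TW ρ.V q c q → c.length ≤ n → g.2 * (effect c).1 ≤ g.1 * (effect c).2)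
    {a b : ℕ} (hab : a ≤ b) (hb : b ≤ ρ.len)
    (hmem : ∀ t, a ≤ t → t ≤ b → ¬ ρ.Strip t → ρ.st t ∈ J)
    (hx : ∀ t, a ≤ t → t ≤ b → (45 * ρ.N ^ 8 : ℕ) ≤ (ρ.x t).1)
    (hsa : ρ.Strip a) (hsb : ρ.Strip b) (htyp : ρ.typ a = ρ.typ b)
    (hlt : (ρ.x a).1 < (ρ.x b).1) :
    ∃ h : ℤ, 0 < h ∧ h ≤ (45 * ρ.N ^ 8 : ℕ) ∧ ρ.Fwd (45 * ρ.N ^ 7) b (h, 0) := by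
  obtain ⟨l, h1, h2, h3⟩ := exists_hops hab hsa hsb
  rw [← htyp] at h2
  obtain ⟨l', r, g1, g2, g3, g4⟩ := h2.exists_short_pos
    ((Finset.univ : Finset (Fin n)) ×ˢ Finset.Icc (0 : ℤ) ρ.W) (by
      intro e he
      obtain ⟨f1, f2, f3, f4, -⟩ := h1 e he
      simp only [typ, Finset.mem_product, Finset.mem_univ, Finset.mem_Icc, true_and]
      exact ⟨ρ.nonneg_snd (by omega), f4⟩) (fun e => (ρ.x e.2).1 - (ρ.x e.1).1)
    (by rw [h3]; linarith)
  cases l' with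
  | nil => simp at g4
  | cons e l' =>
    have he := h1 e (g1 List.mem_cons_self)
    obtain rfl : ρ.typ e.1 = r := g3.1
    have hel : e.1 ≤ ρ.len := by
      have := he.2.1
      have := he.2.2.1
      omega
    obtain ⟨γ, w1, w2, w3, w4, w5⟩ := exists_hop_walk (K := 3 * ρ.N ^ 3)
      (fun e he => (h1 e (g1 he)).exists_walk hM hg hJ hb hmem) g3 (ρ.nonneg_snd hel)
    have hlen : γ.length ≤ 45 * ρ.N ^ 7 := by
      refine w2.trans ?_
      have hc : (e :: l').length ≤ 15 * ρ.N ^ 4 := by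
        refine (g2.trans_eq ?_).trans (n_mul_W_le hM)
        simp only [Finset.card_product, Finset.card_univ, Fintype.card_fin, Int.card_Icc, sub_zero]
        congr 1
      calc _ ≤ 15 * ρ.N ^ 4 * (3 * ρ.N ^ 3) := Nat.mul_le_mul_right _ hc
        _ = 45 * ρ.N ^ 7 := by ring
    have hNM : 45 * ρ.N ^ 7 * ρ.M ≤ 45 * ρ.N ^ 8 := by
      have := Nat.mul_le_mul_left (45 * ρ.N ^ 7) (M_le_N (ρ := ρ))
      refine this.trans_eq (by ring)
    have hNM' : ((45 * ρ.N ^ 7 * ρ.M : ℕ) : ℤ) ≤ (45 * ρ.N ^ 8 : ℕ) := by exact_mod_cast hNM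
    have hb1 := ρ.normLe.effect_le w1.1 hlen
    have heff : effect γ = ((effect γ).1, 0) := by
      rw [Prod.ext_iff]
      exact ⟨rfl, by rw [w3]; simp⟩
    have hpos : 0 < (effect γ).1 := lt_of_lt_of_le g4 w4
    refine ⟨(effect γ).1, hpos, ((abs_le.1 hb1.1).2).trans hNM', ?_⟩
    rw [← heff]
    refine ((Fwd.single hel w1 (fun k => ⟨?_, w5 k⟩) ?_).mono_len hlen).mono
      (by have := he.2.1; have := he.2.2.1; omega) hb
    · have h5 := ρ.normLe.effect_le (l := γ.take k) (B := 45 * ρ.N ^ 7)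
        (fun e he => w1.1 e (List.mem_of_mem_take he)) ((List.length_take_le' _ _).trans hlen)
      have h6 := (abs_le.1 h5.1).1
      have h7 := hx e.1 he.1 (by have := he.2.1; have := he.2.2.1; omega)
      change 0 ≤ (ρ.x e.1).1 + (effect (γ.take k)).1
      linarith
    · rw [heff]; exact ⟨hpos.le, le_rfl⟩

end Run

theorem take_flatten_replicate {E : Type*} (K i : ℕ) (c : List E) :
    ∃ j ≤ K, ∃ i', (List.replicate K c).flatten.take i =
      (List.replicate j c).flatten ++ c.take i' := by
  induction K generalizing i with
  | zero => exact ⟨0, le_rfl, 0, by simp⟩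
  | succ K ih =>
    rw [List.replicate_succ, List.flatten_cons, List.take_append]
    by_cases hi : i ≤ c.length
    · exact ⟨0, by omega, i, by simp [Nat.sub_eq_zero_of_le hi]⟩
    · obtain ⟨j, hj, i', h⟩ := ih (i - c.length)
      refine ⟨j + 1, by omega, i', ?_⟩
      rw [h, List.take_of_length_le (by omega), List.replicate_succ, List.flatten_cons,
        List.append_assoc]

namespace Run

variable {n : ℕ} {ρ : Run n}

/-! ### Steep pumps -/

theorem D_two_le (hM : 1 ≤ ρ.M) : 45 * ρ.N ^ 8 ≤ ρ.D (n + 1) := by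
  have hN1 := one_le_N hM
  have h1 : (600 * ρ.N ^ 6) ^ 2 ≤ ρ.D (n + 1) :=
    Nat.pow_le_pow_right (by positivity) (by have := ρ.pos_n; omega)
  refine le_trans ?_ h1
  calc 45 * ρ.N ^ 8 ≤ 360000 * ρ.N ^ 12 := by
        gcongr
        · norm_num
        · norm_num
    _ = (600 * ρ.N ^ 6) ^ 2 := by ring

/-- No horizontal pump up to time `T`. -/
def NoHorizontal (ρ : Run n) (T : ℕ) : Prop :=
  ∀ s ≤ T, ∀ h : ℤ, 0 < h → h ≤ (ρ.D (n + 1) : ℤ) ^ 2 → ¬ ρ.Fwd (ρ.D (n + 1) ^ 4) s (h, 0)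

/-- The pump vectors considered at time `t`. -/
def Cand (ρ : Run n) (t : ℕ) (g : Vec2) : Prop :=
  ρ.Fwd (ρ.D (n + 1) ^ 3) t g ∧ 0 < g.2 ∧ g.1 ≤ 2 * ρ.D (n + 1) ∧ g.2 ≤ 2 * ρ.D (n + 1)

/-- In the absence of horizontal pumps, short cycles in the interior are not flatter than the
flattest pump. -/
theorem cycle_le (hM : 1 ≤ ρ.M) {a s : ℕ} (has : a ≤ s) (hs : s ≤ ρ.len)
    (hvis : ρ.visited s ⊆ ρ.visited a) (hno : ρ.NoHorizontal s) {g : Vec2} (hg : ρ.Cand a g)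
    (hmax : ∀ w, ρ.Cand a w → w.1 * g.2 ≤ g.1 * w.2) (hint : ρ.Interior s)
    {c : List (Transition n)} (hc : TW ρ.V (ρ.st s) c (ρ.st s)) (hl : c.length ≤ n) :
    g.2 * (effect c).1 ≤ g.1 * (effect c).2 := by
  obtain ⟨hgF, hg2, hgb1, hgb2⟩ := hg
  have hg1 : 0 ≤ g.1 := hgF.nonneg.1
  obtain ⟨b1, b2⟩ := cycle_bound hc hl
  rw [abs_le] at b1 b2
  have hD1 := D_pos hM (n + 1)
  have hND := N_le_D ρ
  have hnN := n_le_N hM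
  have hN1 := one_le_N hM
  have hD3 : ρ.D (n + 1) ≤ ρ.D (n + 1) ^ 3 := Nat.le_self_pow (by norm_num) _
  have hD2 : ρ.D (n + 1) ≤ ρ.D (n + 1) ^ 2 := Nat.le_self_pow (by norm_num) _
  have hD4 : ρ.D (n + 1) ≤ ρ.D (n + 1) ^ 4 := Nat.le_self_pow (by norm_num) _
  by_contra hcon
  push Not at hcon
  by_cases h0 : 0 ≤ effect c
  · obtain ⟨h1, h2⟩ := h0
    change 0 ≤ (effect c).1 at h1
    change 0 ≤ (effect c).2 at h2
    have h3 : 0 < (effect c).1 := by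
      have : 0 ≤ g.1 * (effect c).2 := mul_nonneg hg1 h2
      exact pos_of_mul_pos_right (lt_of_le_of_lt this hcon) hg2.le
    obtain ⟨s₀, hs₀, hi₀, hst₀⟩ := ρ.mem_visited.1
      (hvis (ρ.mem_visited.2 ⟨s, le_rfl, hint, rfl⟩))
    have hF : ρ.Fwd n a (effect c) :=
      (hi₀.fwd (by omega) (hst₀ ▸ hc) hl ⟨h1, h2⟩).mono hs₀ (by omega)
    rcases h2.eq_or_lt with h2 | h2
    · refine hno a has _ h3 ?_ ?_
      · have : ((ρ.D (n + 1) : ℕ) : ℤ) ≤ (ρ.D (n + 1) : ℤ) ^ 2 := by exact_mod_cast hD2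
        omega
      · have : effect c = ((effect c).1, 0) := by rw [Prod.ext_iff]; exact ⟨rfl, h2.symm⟩
        rw [← this]
        exact hF.mono_len (by omega)
    · have := hmax _ ⟨hF.mono_len (by omega), h2, by omega, by omega⟩
      linarith
  · have h2 : (effect c).2 < 0 := by
      by_contra h2
      push Not at h2
      have h1 : (effect c).1 < 0 := by
        by_contra h1
        exact h0 ⟨not_lt.1 h1, h2⟩
      nlinarith
    obtain ⟨k, hk⟩ : ∃ k : ℕ, (k : ℤ) = -(effect c).2 :=
      ⟨(-(effect c).2).toNat, Int.toNat_of_nonneg (by omega)⟩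
    obtain ⟨K, hK⟩ : ∃ K : ℕ, (K : ℤ) = g.2 := ⟨g.2.toNat, Int.toNat_of_nonneg (by omega)⟩
    have hkg := (hgF.nsmul (by omega) k).mono has hs
    have hpos : 0 < k * g.1 + g.2 * (effect c).1 := by rw [hk]; linarith
    have heff : k • g + effect (List.replicate K c).flatten =
        (k * g.1 + g.2 * (effect c).1, 0) := by
      rw [effect_flatten_replicate, Prod.ext_iff]
      simp only [Prod.fst_add, Prod.snd_add, nsmul_fst, nsmul_snd, hk, hK]
      exact ⟨trivial, by ring⟩
    have hN' : (ρ.N : ℤ) ≤ ρ.W := by exact_mod_cast N_le_W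
    have hfin := hkg.append (hc.flatten_replicate K) (fun i => by
      obtain ⟨j, hj, i', hi'⟩ := take_flatten_replicate K i c
      rw [hi', effect_append, effect_flatten_replicate]
      have hp := pre_nonneg_of_large (u := ρ.x s) hc.1 hl (hN'.trans hint.1.le)
        (hN'.trans hint.2.le) i'
      have hq : 0 ≤ k • g + j • effect c := by
        have hj' : (j : ℤ) ≤ g.2 := by rw [← hK]; exact_mod_cast hj
        constructor
        · change 0 ≤ (k • g + j • effect c).1
          simp only [Prod.fst_add, nsmul_fst]
          by_cases h1 : 0 ≤ (effect c).1
          · positivity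
          · push Not at h1
            nlinarith
        · change 0 ≤ (k • g + j • effect c).2
          simp only [Prod.snd_add, nsmul_snd, hk]
          nlinarith
      refine (add_nonneg hp hq).trans_eq ?_
      abel) (by rw [heff]; exact ⟨hpos.le, le_rfl⟩)
    rw [heff] at hfin
    have hDN : ((600 * ρ.N : ℕ) : ℤ) ≤ ρ.D (n + 1) := by exact_mod_cast hND
    push_cast at hDN
    have hDpos : (1 : ℤ) ≤ ρ.D (n + 1) := by exact_mod_cast hD1
    refine hno s le_rfl _ hpos ?_ (hfin.mono_len ?_)
    · have e1 : (k : ℤ) * g.1 ≤ ρ.N * (2 * ρ.D (n + 1)) :=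
        mul_le_mul (by omega) hgb1 hg1 (by positivity)
      have e2 : g.2 * (effect c).1 ≤ 2 * ρ.D (n + 1) * ρ.N :=
        (mul_le_mul_of_nonneg_left b1.2 hg2.le).trans
          (mul_le_mul_of_nonneg_right hgb2 (by positivity))
      have e3 := mul_le_mul_of_nonneg_right hDN (Int.natCast_nonneg (ρ.D (n + 1)))
      have e4 : (0 : ℤ) ≤ ρ.N * ρ.D (n + 1) := by positivity
      rw [sq]
      linarith
    · rw [length_flatten_replicate]
      have e1 : k * ρ.D (n + 1) ^ 3 ≤ ρ.N * ρ.D (n + 1) ^ 3 :=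
        Nat.mul_le_mul_right _ (by omega)
      have e2 : K * c.length ≤ 2 * ρ.D (n + 1) * ρ.N :=
        Nat.mul_le_mul (by omega) (by omega)
      generalize ρ.D (n + 1) = D at *
      have e3 : 2 * D * ρ.N ≤ 2 * D ^ 3 * ρ.N := by gcongr
      have e4 : 600 * ρ.N * D ^ 3 ≤ D * D ^ 3 := by gcongr
      calc k * D ^ 3 + K * c.length ≤ ρ.N * D ^ 3 + 2 * D ^ 3 * ρ.N := by omega
        _ = 3 * (ρ.N * D ^ 3) := by ring
        _ ≤ 600 * (ρ.N * D ^ 3) := Nat.mul_le_mul_right _ (by norm_num)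
        _ = 600 * ρ.N * D ^ 3 := by ring
        _ ≤ D * D ^ 3 := e4
        _ = D ^ 4 := by ring

/-- Some pump vector at time `t` is not much steeper than the configuration. -/
def Flat (ρ : Run n) (A : ℤ) (t : ℕ) : Prop :=
  ∃ g, ρ.Cand t g ∧ g.2 * (ρ.x t).1 ≤ g.1 * (ρ.x t).2 + A * g.2

theorem Flat.mono {A A' : ℤ} {t : ℕ} (h : ρ.Flat A t) (hA : A ≤ A') : ρ.Flat A' t := by
  obtain ⟨g, hg, h⟩ := h
  refine ⟨g, hg, h.trans ?_⟩
  have := mul_le_mul_of_nonneg_right hA hg.2.1.le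
  linarith

theorem Flat.exists_max {A : ℤ} {t : ℕ} (ht : t ≤ ρ.len) (h : ρ.Flat A t) :
    ∃ g, ρ.Cand t g ∧ (∀ w, ρ.Cand t w → w.1 * g.2 ≤ g.1 * w.2) ∧
      g.2 * (ρ.x t).1 ≤ g.1 * (ρ.x t).2 + A * g.2 := by
  obtain ⟨v, hv, h⟩ := h
  obtain ⟨g, hg, hmax⟩ := exists_max_slope {g | ρ.Cand t g} (2 * ρ.D (n + 1))
    (fun w hw => ⟨hw.1.nonneg.1, hw.2.2.1, hw.2.1, hw.2.2.2⟩) ⟨v, hv⟩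
  refine ⟨g, hg, hmax, ?_⟩
  have h1 := mul_le_mul_of_nonneg_right (hmax v hv) (ρ.nonneg_snd ht)
  have h2 := mul_le_mul_of_nonneg_right h hg.2.1.le
  have h3 := hv.2.1
  have : v.2 * (g.2 * (ρ.x t).1) ≤ v.2 * (g.1 * (ρ.x t).2 + A * g.2) := by linarith
  exact le_of_mul_le_mul_left this h3

/-- The growth of the slope defect per step. -/
def slack (ρ : Run n) : ℤ := 4 * ρ.D (n + 1) * ρ.M

/-- The growth of the slope defect between strip times. -/
def gap (ρ : Run n) : ℤ := 2 * ρ.D (n + 1) * ρ.W + (n + 1) * ρ.slack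

theorem Cand.step_le {a t : ℕ} {g : Vec2} (hg : ρ.Cand a g) (ht : t < ρ.len) :
    g.2 * (ρ.x (t + 1)).1 - g.1 * (ρ.x (t + 1)).2 ≤
      g.2 * (ρ.x t).1 - g.1 * (ρ.x t).2 + ρ.slack := by
  obtain ⟨hF, h2, h3, h4⟩ := hg
  have h1 : 0 ≤ g.1 := hF.nonneg.1
  have e1 := (abs_le.1 (ρ.step_fst ht)).2
  have e2 := (abs_le.1 (ρ.step_snd ht)).1
  have hMn : (0 : ℤ) ≤ ρ.M := by positivity
  have f1 := mul_le_mul_of_nonneg_left e1 h2.le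
  have f2 := mul_le_mul_of_nonneg_left e2 h1
  have f3 := mul_le_mul_of_nonneg_right h3 hMn
  have f4 := mul_le_mul_of_nonneg_right h4 hMn
  rw [slack]
  linarith

theorem Flat.step {A : ℤ} {t : ℕ} (ht : t < ρ.len) (h : ρ.Flat A t) :
    ρ.Flat (A + ρ.slack) (t + 1) := by
  obtain ⟨g, hg, h⟩ := h
  refine ⟨g, ⟨hg.1.mono (by omega) ht, hg.2⟩, ?_⟩
  have h1 := hg.step_le ht
  have h2 : ρ.slack ≤ ρ.slack * g.2 :=
    le_mul_of_one_le_right (by rw [slack]; positivity) (by have := hg.2.1; omega)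
  linarith

/-- While no new interior state is visited, the slope defect grows by a bounded amount. -/
theorem Flat.phase (hM : 1 ≤ ρ.M) {A : ℤ} {a t : ℕ} (hat : a ≤ t) (ht : t ≤ ρ.len)
    (hvis : ρ.visited a = ρ.visited t) (hno : ρ.NoHorizontal t)
    (hA : (ρ.D (n + 1) : ℤ) ≤ A) (h : ρ.Flat A a) :
    ρ.Flat (A + ρ.gap * (n * (ρ.W + 1) + 1)) t := by
  obtain ⟨g, hg, hmax, hflat⟩ := h.exists_max (by omega)
  have hg2 := hg.2.1
  have hg1 : 0 ≤ g.1 := hg.1.nonneg.1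
  have hWD : ρ.W ≤ ρ.D (n + 1) := by
    have h1 := D_ge ρ
    have h2 : ρ.N ^ 3 ≤ ρ.N ^ 6 := Nat.pow_le_pow_right (one_le_N hM) (by norm_num)
    rw [W]; omega
  have hWD' : (ρ.W : ℤ) ≤ ρ.D (n + 1) := by exact_mod_cast hWD
  have hslack : 0 ≤ ρ.slack := by rw [slack]; positivity
  have hgap : (n + 1 : ℤ) * ρ.slack + 2 * ρ.D (n + 1) * ρ.W = ρ.gap := by rw [gap]; ring
  have hgap0 : 0 ≤ ρ.gap := by rw [gap]; positivity
  obtain ⟨t₀, h1, h2, h3, h4⟩ : ∃ t₀, a ≤ t₀ ∧ t₀ ≤ t ∧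
      (∀ s, t₀ < s → s ≤ t → (ρ.D (n + 1) : ℤ) < (ρ.x s).1) ∧
      g.2 * (ρ.x t₀).1 - g.1 * (ρ.x t₀).2 ≤ A * g.2 := by
    rcases exists_last (fun s => (ρ.x s).1 ≤ ρ.D (n + 1)) a (t + 1) with h | ⟨r, e1, e2, e3, e4⟩
    · exact ⟨a, le_rfl, hat, fun s hs hst => not_le.1 (h s (by omega) (by omega)), by linarith⟩
    · refine ⟨r, e1, by omega, fun s hs hst => not_le.1 (e4 s hs (by omega)), ?_⟩
      have f1 := mul_le_mul_of_nonneg_left (e3.trans hA) hg2.le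
      have f2 := mul_nonneg hg1 (ρ.nonneg_snd (t := r) (by omega))
      linarith
  have hint : ∀ s, t₀ < s → s ≤ t → ¬ ρ.Strip s → ρ.Interior s := fun s hs hst hn =>
    ⟨by have := h3 s hs hst; omega, not_le.1 hn⟩
  have hcyc : ∀ s, t₀ < s → s ≤ t → ¬ ρ.Strip s → ∀ c, TW ρ.V (ρ.st s) c (ρ.st s) →
      c.length ≤ n → g.2 * (effect c).1 ≤ g.1 * (effect c).2 := fun s hs hst hn c hc hl =>
    cycle_le hM (by omega) (by omega) (hvis ▸ ρ.visited_mono hst)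
      (fun s' hs' => hno s' (by omega)) hg hmax (hint s hs hst hn) hc hl
  have hlin : ∀ e r, t₀ ≤ e → e ≤ r → r ≤ t → (∀ s, e < s → s < r → ¬ ρ.Strip s) →
      g.2 * (ρ.x r).1 - g.1 * (ρ.x r).2 ≤
        g.2 * (ρ.x e).1 - g.1 * (ρ.x e).2 + (n + 1) * ρ.slack := by
    intro e r he her hr hs
    rcases Nat.eq_or_lt_of_le her with rfl | her
    · have : 0 ≤ (n + 1 : ℤ) * ρ.slack := by positivity
      linarith
    · have f1 := hg.step_le (t := e) (by omega)
      have f2 := ρ.linear_le (a := e + 1) (b := r) her (by omega) g.2 (-g.1) ρ.slack (by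
        rw [abs_neg, abs_of_pos hg2, abs_of_nonneg hg1, slack]
        have := mul_le_mul_of_nonneg_right hg.2.2.1 (Int.natCast_nonneg ρ.M)
        have := mul_le_mul_of_nonneg_right hg.2.2.2 (Int.natCast_nonneg ρ.M)
        linarith) (fun s hs1 hs2 c hc hl => by
          have := hcyc s (by omega) (by omega) (hs s (by omega) hs2) c hc hl
          linarith)
      linarith
  have hstrip : ∀ r, (t₀ < r ∧ r ≤ t ∧ ρ.Strip r) → g.1 * (ρ.x r).2 ≤ 2 * ρ.D (n + 1) * ρ.W :=
    fun r hr => mul_le_mul hg.2.2.1 hr.2.2 (ρ.nonneg_snd (by omega)) (by positivity)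
  have hdiv : ∀ X Y Z : ℤ, 0 ≤ Z → g.2 * X ≤ g.2 * Y + Z → X ≤ Y + Z := by
    intro X Y Z hZ hX
    by_contra hc
    push Not at hc
    nlinarith
  have hrec : ∀ r, (t₀ < r ∧ r ≤ t ∧ ρ.Strip r) →
      (ρ.x r).1 ≤ A + ρ.gap * (n * (ρ.W + 1)) := by
    intro r hr
    have key := record_bound ((Finset.univ : Finset (Fin n)) ×ˢ Finset.Icc (0 : ℤ) ρ.W)
      (fun r => t₀ < r ∧ r ≤ t ∧ ρ.Strip r) (fun r => (ρ.x r).1) ρ.typ A ρ.gap hgap0 (by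
        rintro r ⟨hr1, hr2, hr3⟩
        simp only [typ, Finset.mem_product, Finset.mem_univ, Finset.mem_Icc, true_and]
        exact ⟨ρ.nonneg_snd (by omega), hr3⟩) (by
        intro r hr
        rcases exists_last ρ.Strip (t₀ + 1) r with he | ⟨e, e1, e2, e3, e4⟩
        · left
          have f1 := hlin t₀ r le_rfl hr.1.le hr.2.1 (fun s hs1 hs2 => he s hs1 hs2)
          have f2 := hstrip r hr
          exact hdiv _ _ _ hgap0 (by linarith)
        · right
          refine ⟨e, e2, ⟨by omega, by omega, e3⟩, ?_⟩
          have f1 := hlin e r (by omega) e2.le hr.2.1 e4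
          have f2 := hstrip r hr
          have f3 := mul_nonneg hg1 (ρ.nonneg_snd (t := e) (by omega))
          exact hdiv _ _ _ hgap0 (by linarith)) (by
        rintro r₁ r₂ ⟨hr1, hr2, hr3⟩ ⟨hr4, hr5, hr6⟩ hlt htyp -
        by_contra hc
        push Not at hc
        have hD2 := D_two_le hM
        have hD2' : ((45 * ρ.N ^ 8 : ℕ) : ℤ) ≤ ρ.D (n + 1) := by exact_mod_cast hD2
        obtain ⟨k, k1, k2, k3⟩ := exists_horizontal hM hg2
          (J := {q | ∃ s, t₀ < s ∧ s ≤ t ∧ ¬ ρ.Strip s ∧ ρ.st s = q})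
          (by
            rintro q ⟨s, s1, s2, s3, rfl⟩ c hc hl
            exact hcyc s s1 s2 s3 c hc hl) hlt.le (by omega)
          (fun s s1 s2 s3 => ⟨s, by omega, by omega, s3, rfl⟩)
          (fun s s1 s2 => hD2'.trans (h3 s (by omega) (by omega)).le) hr3 hr6 htyp hc
        have hDD : (ρ.D (n + 1) : ℤ) ≤ (ρ.D (n + 1) : ℤ) ^ 2 := by
          exact_mod_cast Nat.le_self_pow (n := 2) (by norm_num) (ρ.D (n + 1))
        refine hno r₂ hr5 k k1 (by omega) (k3.mono_len ?_)
        have q1 : ρ.N ^ 7 ≤ ρ.N ^ 8 := Nat.pow_le_pow_right (one_le_N hM) (by norm_num)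
        have q2 : ρ.D (n + 1) ≤ ρ.D (n + 1) ^ 4 := Nat.le_self_pow (by norm_num) _
        omega) r hr
    simpa [Finset.card_product] using key
  refine ⟨g, ⟨hg.1.mono hat ht, hg.2⟩, ?_⟩
  have hm : (0 : ℤ) ≤ ρ.gap * (n * (ρ.W + 1)) := by positivity
  have hm' := mul_nonneg hm hg2.le
  have hgg : ρ.gap ≤ ρ.gap * g.2 := le_mul_of_one_le_right hgap0 (by omega)
  have hDW : (0 : ℤ) ≤ 2 * ρ.D (n + 1) * ρ.W := by positivity
  rcases exists_last ρ.Strip (t₀ + 1) (t + 1) with he | ⟨e, e1, e2, e3, e4⟩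
  · have f1 := hlin t₀ t le_rfl h2 le_rfl (fun s hs1 hs2 => he s hs1 (by omega))
    linarith
  · have f1 := hlin e t (by omega) (by omega) le_rfl (fun s hs1 hs2 => e4 s hs1 (by omega))
    have f2 := mul_nonneg hg1 (ρ.nonneg_snd (t := e) (by omega))
    have f3 := mul_le_mul_of_nonneg_left (hrec e ⟨by omega, by omega, e3⟩) hg2.le
    linarith

/-- The slope defect after all phases. -/
theorem Flat.all (hM : 1 ≤ ρ.M) {a : ℕ} {A : ℤ} (hA : (ρ.D (n + 1) : ℤ) ≤ A)
    (h : ρ.Flat A a) {t : ℕ} (hat : a ≤ t) (ht : t ≤ ρ.len) (hno : ρ.NoHorizontal t) :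
    ρ.Flat (A + ((ρ.visited t).card + 1) *
      (ρ.slack + ρ.gap * (n * (ρ.W + 1) + 1))) t := by
  classical
  have hslack : 0 ≤ ρ.slack := by rw [slack]; positivity
  have hgap0 : 0 ≤ ρ.gap := by rw [gap]; positivity
  have hE : 0 ≤ ρ.gap * (n * (ρ.W + 1) + 1) := by positivity
  induction t using Nat.strong_induction_on with
  | _ t ih =>
    have hex : ∃ b, a ≤ b ∧ ρ.visited b = ρ.visited t := ⟨t, hat, rfl⟩
    obtain ⟨hb1, hb2⟩ := Nat.find_spec hex
    have hbt : Nat.find hex ≤ t := Nat.find_min' hex ⟨hat, rfl⟩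
    have hmin : ∀ s, a ≤ s → s < Nat.find hex → ρ.visited s ≠ ρ.visited t :=
      fun s hs1 hs2 hs3 => Nat.find_min hex hs2 ⟨hs1, hs3⟩
    generalize Nat.find hex = b at *
    rcases Nat.eq_or_lt_of_le hb1 with rfl | hb1
    · refine (h.phase hM hat ht hb2 hno hA).mono ?_
      nlinarith
    · obtain ⟨s, rfl⟩ : ∃ s, b = s + 1 := ⟨b - 1, by omega⟩
      have h1 := ih s (by omega) (by omega) (by omega) (fun s' hs' => hno s' (by omega))
      have hcard : (ρ.visited s).card < (ρ.visited t).card :=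
        Finset.card_lt_card ((ρ.visited_mono (by omega)).ssubset_of_ne
          (hmin s (by omega) (by omega)))
      have hcard' : ((ρ.visited s).card : ℤ) + 1 ≤ (ρ.visited t).card := by exact_mod_cast hcard
      have h2 := (h1.step (by omega)).phase hM hbt ht hb2 hno (by
        have : 0 ≤ (((ρ.visited s).card : ℤ) + 1) *
          (ρ.slack + ρ.gap * (n * (ρ.W + 1) + 1)) := by positivity
        linarith)
      refine h2.mono ?_
      nlinarith

theorem defect_le (hM : 1 ≤ ρ.M) :
    (ρ.D (n + 1) : ℤ) + ρ.M + (n + 1) * (ρ.slack + ρ.gap * (n * (ρ.W + 1) + 1)) ≤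
      (ρ.D (n + 1) : ℤ) ^ 4 := by
  have hN1 : (1 : ℤ) ≤ ρ.N := by exact_mod_cast one_le_N hM
  have hnN : (n : ℤ) ≤ ρ.N := by exact_mod_cast n_le_N hM
  have hMN : (ρ.M : ℤ) ≤ ρ.N := by exact_mod_cast M_le_N (ρ := ρ)
  have hD1 : (1 : ℤ) ≤ ρ.D (n + 1) := by exact_mod_cast D_pos hM (n + 1)
  have hDN : 600 * (ρ.N : ℤ) ^ 6 ≤ ρ.D (n + 1) := by exact_mod_cast D_ge ρ
  have hW : (ρ.W : ℤ) = 14 * (ρ.N : ℤ) ^ 3 := by simp [W]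
  have hm : (n * (ρ.W + 1) : ℤ) ≤ 15 * (ρ.N : ℤ) ^ 4 := by exact_mod_cast n_mul_W_le hM
  have hNnM : (n : ℤ) * ρ.M = ρ.N := by rw [N]; push_cast; ring
  have hs : ρ.slack = 4 * ρ.D (n + 1) * ρ.M := rfl
  have hg : ρ.gap = 2 * ρ.D (n + 1) * ρ.W + (n + 1) * ρ.slack := rfl
  generalize ρ.slack = slack' at *
  generalize ρ.gap = gap' at *
  generalize (ρ.D (n + 1) : ℤ) = D at *
  have hN0 : (0 : ℤ) ≤ ρ.N := by omega
  have hD0 : 0 ≤ D := by omega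
  have hp : ∀ i j : ℕ, i ≤ j → D * (ρ.N : ℤ) ^ i ≤ D * (ρ.N : ℤ) ^ j :=
    fun i j h => mul_le_mul_of_nonneg_left (pow_le_pow_right₀ hN1 h) hD0
  have hslack : slack' ≤ 4 * (D * ρ.N) := by
    have := mul_le_mul_of_nonneg_left hMN hD0
    rw [hs]; linarith
  have hgap : gap' ≤ 36 * (D * (ρ.N : ℤ) ^ 3) := by
    have h1 := mul_le_mul_of_nonneg_left hMN hD0
    have h2 := hp 1 3 (by norm_num)
    have h3 : (n + 1) * slack' = 4 * (D * (n * ρ.M)) + 4 * (D * ρ.M) := by rw [hs]; ring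
    rw [hg, h3, hNnM, hW]
    linarith
  have h1 : gap' * (n * (ρ.W + 1) + 1) ≤ 576 * (D * (ρ.N : ℤ) ^ 7) := by
    have h2 : (1 : ℤ) ≤ (ρ.N : ℤ) ^ 4 := one_le_pow₀ hN1
    calc gap' * (n * (ρ.W + 1) + 1) ≤ 36 * (D * (ρ.N : ℤ) ^ 3) * (16 * (ρ.N : ℤ) ^ 4) :=
          mul_le_mul hgap (by linarith) (by positivity) (by positivity)
      _ = 576 * (D * (ρ.N : ℤ) ^ 7) := by ring
  have h2 : (n + 1) * (slack' + gap' * (n * (ρ.W + 1) + 1)) ≤ 1160 * (D * (ρ.N : ℤ) ^ 8) := by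
    have h3 := hp 1 7 (by norm_num)
    calc (n + 1) * (slack' + gap' * (n * (ρ.W + 1) + 1)) ≤ (n + 1) * (580 * (D * (ρ.N : ℤ) ^ 7)) :=
          mul_le_mul_of_nonneg_left (by linarith) (by positivity)
      _ ≤ 2 * ρ.N * (580 * (D * (ρ.N : ℤ) ^ 7)) :=
          mul_le_mul_of_nonneg_right (by omega) (by positivity)
      _ = 1160 * (D * (ρ.N : ℤ) ^ 8) := by ring
  have h3 : (ρ.M : ℤ) ≤ D * ρ.N := hMN.trans (le_mul_of_one_le_left hN0 hD1)
  have h4 := hp 1 8 (by norm_num)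
  have h5 := hp 0 8 (by norm_num)
  calc D + ρ.M + (n + 1) * (slack' + gap' * (n * (ρ.W + 1) + 1))
      ≤ 1162 * (D * (ρ.N : ℤ) ^ 8) := by linarith
    _ ≤ 360000 * (D * (ρ.N : ℤ) ^ 12) := by
        have := hp 8 12 (by norm_num)
        have : 0 ≤ D * (ρ.N : ℤ) ^ 8 := by positivity
        linarith
    _ = D * (600 * (ρ.N : ℤ) ^ 6) ^ 2 := by ring
    _ ≤ D * D ^ 2 := by gcongr
    _ ≤ D ^ 4 := by
        rw [← pow_succ']
        exact pow_le_pow_right₀ hD1 (by norm_num)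

/-- Every large configuration admits a pump that is not much steeper than it. -/
theorem exists_flat (hM : 1 ≤ ρ.M) {T : ℕ} (hT : T ≤ ρ.len) (hbig : ρ.Big (ρ.D (n + 1)) T) :
    ∃ g : Vec2, ρ.Fwd (ρ.D (n + 1) ^ 4) T g ∧ g ≠ 0 ∧ g.1 ≤ (ρ.D (n + 1) : ℤ) ^ 2 ∧
      g.2 ≤ (ρ.D (n + 1) : ℤ) ^ 2 ∧
      g.2 * (ρ.x T).1 ≤ g.1 * (ρ.x T).2 + (ρ.D (n + 1) : ℤ) ^ 4 * g.2 := by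
  by_cases hno : ρ.NoHorizontal T
  · obtain ⟨a, haT, hab, hamin, ha1, ha2⟩ := hbig.first hT
    obtain ⟨v, hv, hv0, hv1, hv2⟩ := exists_fwd_first hM (haT.trans hT) hab hamin ha1 ha2
    have hD2 : 2 ≤ ρ.D (n + 1) := by
      have := N_le_D ρ
      have := one_le_N hM
      omega
    have hDD : 2 * (ρ.D (n + 1) : ℤ) ≤ (ρ.D (n + 1) : ℤ) ^ 2 := by
      rw [sq]; gcongr; exact_mod_cast hD2
    have h34 : ρ.D (n + 1) ^ 3 ≤ ρ.D (n + 1) ^ 4 := Nat.pow_le_pow_right (by omega) (by norm_num)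
    have hvn : 0 ≤ v.1 ∧ 0 ≤ v.2 := hv.nonneg
    have hvpos : 0 < v.2 := by
      refine lt_of_le_of_ne hvn.2 fun h => ?_
      have he : v = (v.1, 0) := by rw [Prod.ext_iff]; exact ⟨rfl, h.symm⟩
      refine hno a haT v.1 (lt_of_le_of_ne hvn.1 fun h' => hv0 ?_) (hv1.trans hDD) ?_
      · rw [he, ← h']; rfl
      · rw [← he]; exact hv.mono_len h34
    have hflat : ρ.Flat (ρ.D (n + 1) + ρ.M) a := by
      refine ⟨v, ⟨hv, hvpos, hv1, hv2⟩, ?_⟩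
      have f1 := mul_le_mul_of_nonneg_left ha1 hvpos.le
      have f2 := mul_nonneg hvn.1 (ρ.nonneg_snd (t := a) (by omega))
      linarith
    have h := (hflat.all hM (by omega) haT hT hno).mono (A' := (ρ.D (n + 1) : ℤ) ^ 4) (by
      refine le_trans ?_ (defect_le hM)
      have hc : ((ρ.visited T).card : ℤ) ≤ n := by exact_mod_cast ρ.card_visited_le T
      have hE : 0 ≤ ρ.slack + ρ.gap * (n * (ρ.W + 1) + 1) := by
        rw [gap, slack]; positivity
      gcongr)
    obtain ⟨g, ⟨hg, hg2, hg3, hg4⟩, hgf⟩ := h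
    refine ⟨g, hg.mono_len h34, ?_, hg3.trans hDD, hg4.trans hDD, hgf⟩
    rintro rfl
    exact lt_irrefl _ hg2
  · simp only [NoHorizontal] at hno
    push Not at hno
    obtain ⟨s, hs, h, h1, h2, h3⟩ := hno
    refine ⟨(h, 0), h3.mono hs hT, ?_, h2, by positivity, ?_⟩
    · intro he
      have := congrArg Prod.fst he
      simp at this
      omega
    · have := mul_nonneg h1.le (ρ.nonneg_snd hT)
      simpa using this

end Run

/-! ### Cones in the quadrant -/

/-- A vector between two others in the quadrant is a combination of them. -/
theorem exists_combination {p q v : Vec2} {Γ : ℕ} (hΓ : 1 ≤ Γ)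
    (hp : 0 ≤ p) (hq : 0 ≤ q) (hv : 0 ≤ v) (hp0 : p ≠ 0) (hq0 : q ≠ 0)
    (hp1 : p.1 ≤ Γ) (hp2 : p.2 ≤ Γ) (hq1 : q.1 ≤ Γ) (hq2 : q.2 ≤ Γ) (hv1 : v.1 ≤ Γ)
    (hv2 : v.2 ≤ Γ) (h1 : p.2 * v.1 ≤ p.1 * v.2) (h2 : v.2 * q.1 ≤ v.1 * q.2) :
    ∃ a ≤ 2 * Γ ^ 2, ∃ b ≤ 2 * Γ ^ 2, ∃ c ≤ 2 * Γ ^ 2, 0 < c ∧ c • v = a • p + b • q := by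
  obtain ⟨p₁, p₂⟩ := p
  obtain ⟨q₁, q₂⟩ := q
  obtain ⟨v₁, v₂⟩ := v
  obtain ⟨hp3, hp4⟩ : 0 ≤ p₁ ∧ 0 ≤ p₂ := hp
  obtain ⟨hq3, hq4⟩ : 0 ≤ q₁ ∧ 0 ≤ q₂ := hq
  obtain ⟨hv3, hv4⟩ : 0 ≤ v₁ ∧ 0 ≤ v₂ := hv
  simp only at *
  have hΓ' : (1 : ℤ) ≤ Γ := by exact_mod_cast hΓ
  have hbd : ∀ x y z w : ℤ, 0 ≤ x → x ≤ Γ → 0 ≤ y → y ≤ Γ → 0 ≤ z → 0 ≤ w →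
      x * y - z * w ≤ 2 * (Γ : ℤ) ^ 2 := by
    intro x y z w hx hx' hy hy' hz hw
    have := mul_le_mul hx' hy' hy (by positivity)
    have := mul_nonneg hz hw
    nlinarith
  have hsum : ∀ x y : ℤ, x ≤ Γ → y ≤ Γ → x + y ≤ 2 * (Γ : ℤ) ^ 2 := by
    intro x y hx hy
    nlinarith
  have key : ∀ a b c : ℤ, 0 ≤ a → a ≤ 2 * (Γ : ℤ) ^ 2 → 0 ≤ b → b ≤ 2 * (Γ : ℤ) ^ 2 → 0 < c →
      c ≤ 2 * (Γ : ℤ) ^ 2 → c * v₁ = a * p₁ + b * q₁ → c * v₂ = a * p₂ + b * q₂ →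
      ∃ a ≤ 2 * Γ ^ 2, ∃ b ≤ 2 * Γ ^ 2, ∃ c ≤ 2 * Γ ^ 2, 0 < c ∧
        c • ((v₁, v₂) : Vec2) = a • ((p₁, p₂) : Vec2) + b • ((q₁, q₂) : Vec2) := by
    intro a b c ha ha' hb hb' hc hc' e1 e2
    lift a to ℕ using ha
    lift b to ℕ using hb
    lift c to ℕ using hc.le
    refine ⟨a, by exact_mod_cast ha', b, by exact_mod_cast hb', c, by exact_mod_cast hc',
      by exact_mod_cast hc, ?_⟩
    rw [Prod.ext_iff]
    simp only [Prod.fst_add, Prod.snd_add, nsmul_fst, nsmul_snd]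
    exact ⟨e1, e2⟩
  by_cases hdet : 0 < p₁ * q₂ - p₂ * q₁
  · exact key (v₁ * q₂ - v₂ * q₁) (p₁ * v₂ - p₂ * v₁) (p₁ * q₂ - p₂ * q₁) (by linarith)
      (hbd _ _ _ _ hv3 hv1 hq4 hq2 hv4 hq3) (by linarith) (hbd _ _ _ _ hp3 hp1 hv4 hv2 hp4 hv3)
      hdet (hbd _ _ _ _ hp3 hp1 hq4 hq2 hp4 hq3) (by ring) (by ring)
  · have hpp : 0 < p₁ + p₂ := by
      by_contra hc
      exact hp0 (by rw [Prod.ext_iff]; exact ⟨by change p₁ = 0; omega, by change p₂ = 0; omega⟩)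
    have hqq : 0 < q₁ + q₂ := by
      by_contra hc
      exact hq0 (by rw [Prod.ext_iff]; exact ⟨by change q₁ = 0; omega, by change q₂ = 0; omega⟩)
    have hpv : p₁ * v₂ - p₂ * v₁ = 0 := by
      have e1 : (p₁ * q₂ - p₂ * q₁) * (v₁ + v₂) =
        (v₁ * q₂ - v₂ * q₁) * (p₁ + p₂) + (p₁ * v₂ - p₂ * v₁) * (q₁ + q₂) := by ring
      have e2 : (p₁ * q₂ - p₂ * q₁) * (v₁ + v₂) ≤ 0 :=
        mul_nonpos_of_nonpos_of_nonneg (by linarith) (by linarith)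
      have e3 : 0 ≤ (v₁ * q₂ - v₂ * q₁) * (p₁ + p₂) := mul_nonneg (by linarith) hpp.le
      have e4 : (p₁ * v₂ - p₂ * v₁) * (q₁ + q₂) ≤ 0 := by linarith
      have e5 := nonpos_of_mul_nonpos_left e4 hqq
      linarith
    exact key (v₁ + v₂) 0 (p₁ + p₂) (by linarith) (hsum _ _ hv1 hv2) le_rfl (by positivity) hpp
      (hsum _ _ hp1 hp2) (by linarith) (by linarith)

/-- Two pairs of vectors enclosing a common large vector approximately have steepness in
order. -/
theorem steep_le {u p q : Vec2} {A Γ : ℤ} (hA : 0 ≤ A) (hp : 0 ≤ p) (hq : 0 ≤ q)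
    (hp1 : p.1 ≤ Γ) (hp2 : p.2 ≤ Γ) (hq1 : q.1 ≤ Γ) (hq2 : q.2 ≤ Γ)
    (hpu : p.1 * u.2 ≤ p.2 * u.1 + A * p.1) (hqu : q.2 * u.1 ≤ q.1 * u.2 + A * q.2)
    (hu : 2 * A * Γ ^ 2 < u.1 ∨ 2 * A * Γ ^ 2 < u.2) (hu1 : 0 ≤ u.1) (hu2 : 0 ≤ u.2) :
    p.1 * q.2 ≤ p.2 * q.1 := by
  obtain ⟨p₁, p₂⟩ := p
  obtain ⟨q₁, q₂⟩ := q
  obtain ⟨x, y⟩ := u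
  obtain ⟨hp3, hp4⟩ : 0 ≤ p₁ ∧ 0 ≤ p₂ := hp
  obtain ⟨hq3, hq4⟩ : 0 ≤ q₁ ∧ 0 ≤ q₂ := hq
  simp only at *
  by_contra hc
  have hΔ : 1 ≤ p₁ * q₂ - p₂ * q₁ := by linarith [not_le.1 hc]
  have hΓ : 0 ≤ Γ := hp3.trans hp1
  have b1 := mul_le_mul hp1 hq2 hq4 hΓ
  have b2 := mul_le_mul hp2 hq2 hq4 hΓ
  have b3 := mul_le_mul hp1 hq1 hq3 hΓ
  have hy : y ≤ 2 * A * Γ ^ 2 := by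
    have e1 := mul_le_mul_of_nonneg_right hpu hq4
    have e2 := mul_le_mul_of_nonneg_right hqu hp4
    have e3 := mul_le_mul_of_nonneg_right hΔ hu2
    have e4 := mul_le_mul_of_nonneg_left b1 hA
    have e5 := mul_le_mul_of_nonneg_left b2 hA
    linarith
  have hx : x ≤ 2 * A * Γ ^ 2 := by
    have e1 := mul_le_mul_of_nonneg_right hpu hq3
    have e2 := mul_le_mul_of_nonneg_right hqu hp3
    have e3 := mul_le_mul_of_nonneg_right hΔ hu1
    have e4 := mul_le_mul_of_nonneg_left b1 hA
    have e5 := mul_le_mul_of_nonneg_left b3 hA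
    linarith
  omega

namespace Run

variable {n : ℕ} {ρ : Run n}

/-! ### Pumping near the ends -/

/-- The bound on the position of the first inserted cycle. -/
def bound (ρ : Run n) : ℕ := n * (ρ.D (n + 1) ^ 9 + 1) ^ 2

theorem exists_flat_swap (hM : 1 ≤ ρ.M) {T : ℕ} (hT : T ≤ ρ.len)
    (hbig : ρ.Big (ρ.D (n + 1)) T) :
    ∃ g : Vec2, ρ.Fwd (ρ.D (n + 1) ^ 4) T g ∧ g ≠ 0 ∧ g.1 ≤ (ρ.D (n + 1) : ℤ) ^ 2 ∧
      g.2 ≤ (ρ.D (n + 1) : ℤ) ^ 2 ∧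
      g.1 * (ρ.x T).2 ≤ g.2 * (ρ.x T).1 + (ρ.D (n + 1) : ℤ) ^ 4 * g.1 := by
  obtain ⟨g, h1, h2, h3, h4, h5⟩ := exists_flat (ρ := ρ.swap) hM hT (Or.symm hbig)
  refine ⟨g.swap, h1.of_swap, ?_, h4, h3, h5⟩
  intro h
  apply h2
  rw [← Prod.swap_swap g, h]
  rfl

theorem Fwd.combination {ℓ t K : ℕ} {p q : Vec2} (ht : t ≤ ρ.len) (hp : ρ.Fwd ℓ t p)
    (hq : ρ.Fwd ℓ t q) {a b : ℕ} (ha : a ≤ K) (hb : b ≤ K) :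
    ρ.Fwd (2 * K * ℓ) t (a • p + b • q) :=
  ((hp.nsmul ht a).add (hq.nsmul ht b)).mono_len (by
    have := Nat.mul_le_mul_right ℓ ha
    have := Nat.mul_le_mul_right ℓ hb
    linarith)

/-- At a large configuration, some nonzero vector can be pumped forwards and backwards. -/
theorem exists_common (h0 : ρ.x ρ.len = 0) {T : ℕ} (hT : T ≤ ρ.len)
    (hbig : ρ.Big (ρ.D (n + 1) ^ 9) T) :
    ∃ m : Vec2, m ≠ 0 ∧ ρ.Fwd (ρ.D (n + 1) ^ 9) T m ∧
      (ρ.rev h0).Fwd (ρ.D (n + 1) ^ 9) (ρ.len - T) m := by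
  have hM : 1 ≤ ρ.M := by
    obtain ⟨a, -, hab, -, ha1, ha2⟩ := hbig.first hT
    rw [Big] at hab
    omega
  have hD1 := D_pos hM (n + 1)
  have hbig1 := hbig.mono (Nat.le_self_pow (n := 9) (by norm_num) (ρ.D (n + 1)))
  have hxT : (ρ.rev h0).x (ρ.len - T) = ρ.x T := by
    change ρ.x (ρ.len - (ρ.len - T)) = _
    congr 1; omega
  have hbig2 : (ρ.rev h0).Big ((ρ.rev h0).D (n + 1)) (ρ.len - T) := by
    rw [Big, hxT]; exact hbig1
  obtain ⟨g, g1, g2, g3, g4, g5⟩ := exists_flat hM hT hbig1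
  obtain ⟨g', g1', g2', g3', g4', g5'⟩ := exists_flat_swap hM hT hbig1
  obtain ⟨h, h1, h2, h3, h4, h5⟩ := exists_flat (ρ := ρ.rev h0) (T := ρ.len - T) hM
    (Nat.sub_le _ _) hbig2
  obtain ⟨h', h1', h2', h3', h4', h5'⟩ :=
    exists_flat_swap (ρ := ρ.rev h0) (T := ρ.len - T) hM (Nat.sub_le _ _) hbig2
  rw [hxT] at h5 h5'
  change (ρ.rev h0).Fwd (ρ.D (n + 1) ^ 4) _ _ at h1 h1'
  change _ ≤ (ρ.D (n + 1) : ℤ) ^ 2 at h3 h4 h3' h4'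
  change _ ≤ _ + (ρ.D (n + 1) : ℤ) ^ 4 * _ at h5 h5'
  have hD600 : 600 ≤ ρ.D (n + 1) := by
    have := N_le_D ρ
    have := one_le_N hM
    omega
  have hrl : (ρ.rev h0).len = ρ.len := rfl
  have hu1 := ρ.nonneg_fst hT
  have hu2 := ρ.nonneg_snd hT
  rw [Big] at hbig
  generalize ρ.D (n + 1) = D at *
  have hD9 : 2 * (D : ℤ) ^ 4 * ((D : ℤ) ^ 2) ^ 2 ≤ (D ^ 9 : ℕ) := by
    have : 2 * D ^ 8 ≤ D * D ^ 8 := by gcongr; omega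
    calc 2 * (D : ℤ) ^ 4 * ((D : ℤ) ^ 2) ^ 2 = (2 * D ^ 8 : ℕ) := by push_cast; ring
      _ ≤ (D * D ^ 8 : ℕ) := by exact_mod_cast this
      _ = (D ^ 9 : ℕ) := by push_cast; ring
  have hu : 2 * (D : ℤ) ^ 4 * ((D : ℤ) ^ 2) ^ 2 < (ρ.x T).1 ∨
      2 * (D : ℤ) ^ 4 * ((D : ℤ) ^ 2) ^ 2 < (ρ.x T).2 := by omega
  have hK : 2 * (2 * (D ^ 2) ^ 2) * D ^ 4 ≤ D ^ 9 := by
    calc 2 * (2 * (D ^ 2) ^ 2) * D ^ 4 = 4 * D ^ 8 := by ring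
      _ ≤ D * D ^ 8 := by gcongr; omega
      _ = D ^ 9 := by ring
  have hK' : 2 * (D ^ 2) ^ 2 * D ^ 4 ≤ D ^ 9 := le_trans (by nlinarith) hK
  have d1 := steep_le (u := ρ.x T) (by positivity) g1'.nonneg h1.nonneg g3' g4' h3 h4 g5' h5
    hu hu1 hu2
  have d2 := steep_le (u := ρ.x T) (by positivity) h1'.nonneg g1.nonneg h3' h4' g3 g4 h5' g5
    hu hu1 hu2
  have hne : ∀ (c : ℕ) (v : Vec2), 0 < c → v ≠ 0 → c • v ≠ 0 := fun c v hc hv =>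
    smul_ne_zero hc.ne' hv
  have hΓ : 1 ≤ D ^ 2 := Nat.one_le_pow _ _ (by omega)
  have hcast : ((D ^ 2 : ℕ) : ℤ) = (D : ℤ) ^ 2 := by push_cast; rfl
  rw [← hcast] at g3 g4 g3' g4' h3 h4 h3' h4'
  rcases le_total (g.2 * h.1) (g.1 * h.2) with hc | hc
  · obtain ⟨a, ha, b, hb, c, hc, hc0, he⟩ := exists_combination hΓ g1.nonneg g1'.nonneg h1.nonneg
      g2 g2' g3 g4 g3' g4' h3 h4 hc (by linarith)
    refine ⟨c • h, hne c h hc0 h2, ?_, (h1.nsmul (by omega) c).mono_len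
      ((Nat.mul_le_mul_right _ hc).trans hK')⟩
    rw [he]
    exact (g1.combination hT g1' ha hb).mono_len hK
  · obtain ⟨a, ha, b, hb, c, hc, hc0, he⟩ := exists_combination hΓ h1.nonneg h1'.nonneg g1.nonneg
      h2 h2' h3 h4 h3' h4' g3 g4 (by linarith) (by linarith)
    refine ⟨c • g, hne c g hc0 g2, (g1.nsmul hT c).mono_len
      ((Nat.mul_le_mul_right _ hc).trans hK'), ?_⟩
    rw [he]
    exact (h1.combination (by omega) h1' ha hb).mono_len hK

/-- Long runs admit a pump near the start. -/
theorem exists_early (h0 : ρ.x ρ.len = 0) (hlen : ρ.bound ≤ ρ.len) :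
    ∃ P, ρ.IsPump P ρ.bound ρ.len 0 ∧ ∃ s ≤ ρ.bound, P s ≠ [] := by
  set B := ρ.D (n + 1) ^ 9 with hB
  have hBb : B + B ≤ ρ.bound := by
    have h1 : (B + 1) ^ 2 ≤ n * (B + 1) ^ 2 := Nat.le_mul_of_pos_left _ ρ.pos_n
    have h2 : B + B ≤ (B + 1) ^ 2 := by nlinarith
    exact h2.trans h1
  have hmono : ∀ {P ℓ ℓ' t v}, ρ.IsPump P ℓ t v → ℓ ≤ ℓ' → ρ.IsPump P ℓ' t v :=
    fun hP hℓ => ⟨hP.walk, fun s => (hP.len_le s).trans hℓ, hP.eq_nil, hP.sum_nonneg, hP.pre,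
      hP.total⟩
  by_cases hbig : ∃ T ≤ ρ.bound, ρ.Big B T
  · obtain ⟨T, hT, hbig⟩ := hbig
    obtain ⟨m, hm, ⟨P, hP⟩, Q, hQ⟩ := exists_common h0 (hT.trans hlen) hbig
    refine ⟨_, hmono (hP.combine h0 (hT.trans hlen) hQ) hBb, ?_⟩
    by_contra! hcon
    apply hm
    rw [← hP.total]
    refine Finset.sum_eq_zero fun s hs => ?_
    have := hcon s (by have := Finset.mem_range.1 hs; omega)
    rw [(List.append_eq_nil_iff.1 this).1, effect_nil]
  · push Not at hbig
    obtain ⟨i, hi, j, hj, hij, heq⟩ : ∃ i ∈ Finset.range (ρ.bound + 1),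
        ∃ j ∈ Finset.range (ρ.bound + 1), i ≠ j ∧
        (fun t => (ρ.st t, ρ.x t)) i = (fun t => (ρ.st t, ρ.x t)) j := by
      refine Finset.exists_ne_map_eq_of_card_lt_of_maps_to
        (t := (Finset.univ : Finset (Fin n)) ×ˢ
          (Finset.Icc (0 : ℤ) B ×ˢ Finset.Icc (0 : ℤ) B)) ?_ ?_
      · simp only [Finset.card_product, Finset.card_univ, Fintype.card_fin, Int.card_Icc,
          sub_zero, Finset.card_range]
        rw [show ((B : ℤ) + 1).toNat = B + 1 by omega, bound, ← hB, sq]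
        exact Nat.lt_succ_self _
      · intro t ht
        have ht := Finset.mem_range.1 (Finset.mem_coe.1 ht)
        have h1 := hbig t (by omega)
        rw [Big] at h1
        have h2 := ρ.nonneg_fst (t := t) (by omega)
        have h3 := ρ.nonneg_snd (t := t) (by omega)
        simp only [Finset.coe_product, Finset.coe_univ, Finset.coe_Icc, Set.mem_prod,
          Set.mem_univ, Set.mem_Icc, true_and]
        omega
    wlog hlt : i < j generalizing i j
    · exact this j hj i hi hij.symm heq.symm (by omega)
    obtain ⟨e1, e2⟩ := Prod.mk.inj heq
    have hj := Finset.mem_range.1 hj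
    have hw := ρ.seg_walk hlt.le (by omega)
    rw [← e1] at hw
    have heff : effect (ρ.seg i j) = 0 := by rw [ρ.effect_seg hlt.le, e2, sub_self]
    obtain ⟨P, hP⟩ := Fwd.zero (ρ := ρ) (ℓ := 0) (t := i) (by omega)
    have hP' := hP.append hw (fun k => by
      rw [add_zero]
      rcases le_total k (j - i) with hk | hk
      · rw [ρ.take_seg k (by omega), ρ.effect_seg (by omega), add_sub_cancel]
        exact ρ.nonneg _ (by omega)
      · rw [List.take_of_length_le (by rw [seg_length]; exact hk), heff, add_zero]
        exact ρ.nonneg _ (by omega)) (by rw [heff, add_zero])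
    rw [heff, add_zero] at hP'
    obtain ⟨Q, hQ⟩ := Fwd.zero (ρ := ρ.rev h0) (ℓ := 0) (t := ρ.len - i) (Nat.sub_le _ _)
    refine ⟨_, hmono (hP'.combine h0 (by omega) hQ) (by rw [seg_length]; omega), i, by omega, ?_⟩
    rw [Function.update_self]
    intro h
    have := congrArg List.length h
    simp only [List.length_append, seg_length, List.length_nil] at this
    omega

/-- Long runs admit a pump inserting cycles near both ends. -/
theorem exists_pump (h0 : ρ.x ρ.len = 0) (hlen : ρ.bound ≤ ρ.len) :
    ∃ P, ρ.IsPump P (2 * ρ.bound) ρ.len 0 ∧ (∃ s ≤ ρ.bound, P s ≠ []) ∧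
      ∃ s ≤ ρ.len, ρ.len - s ≤ ρ.bound ∧ P s ≠ [] := by
  obtain ⟨P, hP, s, hs, hPs⟩ := exists_early h0 hlen
  have h0' : (ρ.rev h0).x (ρ.rev h0).len = 0 := by
    change ρ.x (ρ.len - ρ.len) = 0
    rw [Nat.sub_self, ρ.start]
  obtain ⟨Q, hQ, r, hr, hQr⟩ := exists_early (ρ := ρ.rev h0) h0' hlen
  change r ≤ ρ.bound at hr
  obtain ⟨R, hR⟩ := Fwd.zero (ρ := ρ) (ℓ := 0) (t := 0) (Nat.zero_le _)
  have h := hP.add (hR.combine h0 (Nat.zero_le _) hQ)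
  rw [add_zero, zero_add] at h
  change ρ.IsPump _ (ρ.bound + ρ.bound) _ _ at h
  rw [← two_mul] at h
  refine ⟨_, h, ⟨s, hs, fun hc => hPs (List.append_eq_nil_iff.1 hc).1⟩,
    ρ.len - r, Nat.sub_le _ _, by omega, fun hc => hQr ?_⟩
  have h1 := (List.append_eq_nil_iff.1 (List.append_eq_nil_iff.1 hc).2).2
  rw [if_pos (Nat.sub_le _ _), List.reverse_eq_nil_iff, List.map_eq_nil_iff,
    show ρ.len - (ρ.len - r) = r by omega] at h1
  exact h1

end Run

/-! ### From indexed runs to paths -/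

section Paths

variable {n : ℕ}

theorem TW.isPath {V : VASS n} {p q : Fin n} {l : List (Transition n)} (h : TW (V : Set _) p l q) :
    IsPath V l := by
  refine ⟨fun e he => h.1 e he, ?_⟩
  have h2 := h.2
  clear h
  induction l generalizing p with
  | nil => exact List.isChain_nil
  | cons e l ih =>
    have h3 := ih h2.2
    cases l with
    | nil => exact List.isChain_singleton e
    | cons f l => exact List.isChain_cons_cons.2 ⟨h2.2.1.symm, h3⟩

theorem TW.startsAt {V : Set (Transition n)} {p q : Fin n} {l : List (Transition n)}
    (h : TW V p l q) : startsAt l p := by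
  intro e he
  cases l with
  | nil => simp at he
  | cons f l =>
    obtain rfl : f = e := by simpa using he
    exact h.2.1

theorem GWalk.getLast {E S : Type*} {src tgt : E → S} {p q : S} {l : List E}
    (h : GWalk src tgt p l q) (hl : l ≠ []) : l.getLast?.map tgt = some q := by
  induction l generalizing p with
  | nil => exact absurd rfl hl
  | cons e l ih =>
    cases l with
    | nil => exact congrArg some h.2
    | cons f l => simpa using ih h.2 (by simp)

theorem TW.isCycle {V : VASS n} {p : Fin n} {l : List (Transition n)} (h : TW (V : Set _) p l p)
    (hl : l ≠ []) : IsCycle V l := by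
  refine ⟨h.isPath, hl, ?_⟩
  rw [h.2.getLast hl]
  cases l with
  | nil => exact absurd rfl hl
  | cons e l => exact congrArg some h.2.1

theorem stateAt_succ {π : List (Transition n)} (q : Fin n) {t : ℕ} (ht : t < π.length) :
    stateAt π q (t + 1) = π[t].2.2 := by
  rw [stateAt, List.take_succ_eq_append_getElem ht, List.getLast?_concat]
  rfl

theorem stateAt_eq {V : VASS n} {π : List (Transition n)} {q : Fin n} (hπ : IsPath V π)
    (hq : startsAt π q) {t : ℕ} (ht : t < π.length) : stateAt π q t = π[t].1 := by
  cases t with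
  | zero =>
    have : q = π[0].1 := (hq π[0] (by rw [List.head?_eq_getElem?]; simp [ht])).symm
    simpa [stateAt] using this
  | succ t =>
    rw [stateAt_succ q (by omega)]
    exact List.isChain_iff_getElem.1 hπ.2 t ht

theorem vecAt_succ_sub {π : List (Transition n)} (u : Vec2) {t : ℕ} (ht : t < π.length) :
    vecAt π u (t + 1) - vecAt π u t = π[t].2.1 := by
  rw [vecAt, vecAt, List.take_succ_eq_append_getElem ht, effect_append, effect_cons, effect_nil,
    add_zero, ← add_assoc, add_sub_cancel_left]

theorem normLe_vassNorm (V : VASS n) : NormLe (V : Set (Transition n)) (vassNorm V) := by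
  intro e he
  have h : vnorm e.2.1 ≤ vassNorm V := Finset.le_sup (f := fun t => vnorm t.2.1) he
  rw [vnorm] at h
  rw [Int.abs_eq_natAbs, Int.abs_eq_natAbs]
  omega

/-- The indexed run of a (0,0)-run. -/
def Run.ofPath {V : VASS n} {π : List (Transition n)} {q : Fin n} (h : IsZeroRun V π q) :
    Run n where
  V := V
  M := vassNorm V
  normLe := normLe_vassNorm V
  len := π.length
  st := stateAt π q
  x := vecAt π 0
  step t ht := by
    rw [stateAt_eq h.1.1 h.1.2.1 ht, vecAt_succ_sub 0 ht, stateAt_succ q ht]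
    exact h.1.1.1 _ (List.getElem_mem ht)
  nonneg := h.1.2.2
  start := by simp [vecAt, effect_nil]

theorem Run.seg_ofPath {V : VASS n} {π : List (Transition n)} {q : Fin n} (h : IsZeroRun V π q) :
    (Run.ofPath h).seg 0 π.length = π := by
  refine List.ext_getElem (by simp [Run.seg_length]) fun t _ ht => ?_
  simp only [Run.seg, List.getElem_map, List.getElem_range', zero_add, one_mul, Run.tr,
    Run.ofPath]
  rw [stateAt_eq h.1.1 h.1.2.1 ht, vecAt_succ_sub 0 ht, stateAt_succ q ht]

end Paths

theorem nonneg_effect_take_append {n : ℕ} {v : Vec2} {a b : List (Transition n)}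
    (ha : ∀ k, 0 ≤ v + effect (a.take k)) (hb : ∀ k, 0 ≤ v + effect a + effect (b.take k))
    (k : ℕ) : 0 ≤ v + effect ((a ++ b).take k) := by
  rw [List.take_append]
  rcases le_total k a.length with hk | hk
  · rw [Nat.sub_eq_zero_of_le hk, List.take_zero, List.append_nil]
    exact ha k
  · rw [List.take_of_length_le hk, effect_append, ← add_assoc]
    exact hb _

theorem pumped_cons_append {n : ℕ} (i : ℕ) (a τ : List (Transition n))
    (τs αs : List (List (Transition n))) :
    pumped i ((a ++ τ) :: τs) αs = a ++ pumped i (τ :: τs) αs := by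
  cases αs <;> simp [pumped]

namespace Run

variable {n : ℕ} {ρ : Run n} {P : ℕ → List (Transition n)} {ℓ : ℕ}

/-- Repeating an inserted cycle keeps the counters nonnegative. -/
theorem IsPump.nonneg_replicate (h : ρ.IsPump P ℓ ρ.len 0) {a : ℕ} (ha : a ≤ ρ.len) (i k : ℕ) :
    0 ≤ ρ.x a + i • ∑ r ∈ Finset.range a, effect (P r) +
      effect ((List.replicate i (P a)).flatten.take k) := by
  obtain ⟨j, hj, k', hk⟩ := take_flatten_replicate i k (P a)
  have h1 := h.sum_nonneg a
  have h2 := h.sum_nonneg (a + 1)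
  rw [Finset.sum_range_succ] at h2
  have h3 := h.pre a ha k'
  rw [hk, effect_append, effect_flatten_replicate]
  generalize ∑ r ∈ Finset.range a, effect (P r) = S at *
  rcases hj.lt_or_eq with hj | rfl
  · obtain ⟨m, rfl⟩ := Nat.exists_eq_add_of_lt hj
    have e : ρ.x a + (j + m + 1) • S + (j • effect (P a) + effect ((P a).take k')) =
        (ρ.x a + S + effect ((P a).take k')) + m • S + j • (S + effect (P a)) := by
      rw [add_smul, add_smul, one_smul, smul_add]; abel
    rw [e]
    exact add_nonneg (add_nonneg h3 (nsmul_nonneg h1 m)) (nsmul_nonneg h2 j)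
  · have hnil : (P a).take k' = [] := by
      have := congrArg List.length hk
      rw [List.length_append] at this
      have h4 := List.length_take_le' k (List.replicate j (P a)).flatten
      exact List.length_eq_zero_iff.1 (by omega)
    have e : ρ.x a + j • S + (j • effect (P a) + effect ((P a).take k')) =
        ρ.x a + j • (S + effect (P a)) := by
      rw [hnil, effect_nil, smul_add, add_zero, add_assoc]
    rw [e]
    exact add_nonneg (ρ.nonneg a ha) (nsmul_nonneg h2 j)

/-- A factorization of the run from time `a` on, with the cycles `P s`, `b ≤ s`, inserted. -/
structure Factors (ρ : Run n) (P : ℕ → List (Transition n)) (a b : ℕ)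
    (τ : List (Transition n)) (τs αs : List (List (Transition n))) : Prop where
  length_eq : τs.length = αs.length
  flatten : τ ++ τs.flatten = ρ.seg a ρ.len
  mem : ∀ α ∈ αs, α ≠ [] ∧ ∃ s, α = P s
  ends : ∀ s, b ≤ s → P s ≠ [] →
    τ.length + a ≤ s ∧ αs ≠ [] ∧ ((τ :: τs).getLastD []).length + s ≤ ρ.len
  walk : ∀ i, TW ρ.V (ρ.st a) (pumped i (τ :: τs) αs) (ρ.st ρ.len)
  nonneg : ∀ i k, 0 ≤ ρ.x a + i • ∑ r ∈ Finset.range b, effect (P r) +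
    effect ((pumped i (τ :: τs) αs).take k)
  total : ∀ i, ρ.x a + i • ∑ r ∈ Finset.range b, effect (P r) +
    effect (pumped i (τ :: τs) αs) = 0

theorem factors_len (h0 : ρ.x ρ.len = 0) (h : ρ.IsPump P ℓ ρ.len 0) :
    ρ.Factors P ρ.len (ρ.len + 1) [] [] [] where
  length_eq := rfl
  flatten := by simp [seg_self]
  mem := by simp
  ends s hs hPs := absurd (h.eq_nil s hs) hPs
  walk i := TW.nil _
  nonneg i k := by simp [pumped, h0, h.total, effect_nil]
  total i := by simp [pumped, h0, h.total, effect_nil]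

theorem Factors.step {a : ℕ} {τ : List (Transition n)} {τs αs : List (List (Transition n))}
    (h : ρ.IsPump P ℓ ρ.len 0) (ha : a < ρ.len) (hf : ρ.Factors P (a + 1) (a + 1) τ τs αs) :
    ρ.Factors P a (a + 1) (ρ.tr a :: τ) τs αs := by
  have hp : ∀ i, pumped i ((ρ.tr a :: τ) :: τs) αs = [ρ.tr a] ++ pumped i (τ :: τs) αs :=
    fun i => pumped_cons_append i [ρ.tr a] τ τs αs
  have hseg : ρ.seg a (a + 1) = [ρ.tr a] := by rw [seg_cons _ (by omega), seg_self]
  have he : effect [ρ.tr a] = ρ.x (a + 1) - ρ.x a := by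
    rw [effect_cons, effect_nil, add_zero, tr]
  have hx : ∀ z : Vec2, ρ.x a + z + effect [ρ.tr a] = ρ.x (a + 1) + z := fun z => by
    rw [he]; abel
  refine ⟨hf.length_eq, ?_, hf.mem, fun s hs hPs => ?_, fun i => ?_, fun i k => ?_, fun i => ?_⟩
  · rw [List.cons_append, hf.flatten, ρ.seg_cons ha]
  · obtain ⟨h1, h2, h3⟩ := hf.ends s hs hPs
    refine ⟨by simp only [List.length_cons]; omega, h2, ?_⟩
    cases τs with
    | nil => exact absurd (List.length_eq_zero_iff.1 hf.length_eq.symm) h2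
    | cons σ τs => simpa using h3
  · rw [hp, ← hseg]
    exact (ρ.seg_walk (Nat.le_succ a) ha).append (hf.walk i)
  · rw [hp]
    refine nonneg_effect_take_append (fun k => ?_) (fun k => ?_) k
    · have hS := nsmul_nonneg (h.sum_nonneg (a + 1)) i
      cases k with
      | zero => simpa [effect_nil] using add_nonneg (ρ.nonneg a ha.le) hS
      | succ k =>
        rw [List.take_of_length_le (by simp), hx]
        exact add_nonneg (ρ.nonneg _ ha) hS
    · rw [hx]; exact hf.nonneg i k
  · rw [hp, effect_append, ← add_assoc, hx, hf.total]

theorem Factors.insert {a : ℕ} {τ : List (Transition n)} {τs αs : List (List (Transition n))}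
    (h : ρ.IsPump P ℓ ρ.len 0) (ha : a ≤ ρ.len) (hf : ρ.Factors P a (a + 1) τ τs αs)
    (hP : P a ≠ []) : ρ.Factors P a a [] (τ :: τs) (P a :: αs) := by
  have hp : ∀ i, pumped i ([] :: τ :: τs) (P a :: αs) =
      (List.replicate i (P a)).flatten ++ pumped i (τ :: τs) αs := fun i => by simp [pumped]
  have he : ∀ i : ℕ, ρ.x a + i • ∑ r ∈ Finset.range a, effect (P r) +
      effect (List.replicate i (P a)).flatten =
      ρ.x a + i • ∑ r ∈ Finset.range (a + 1), effect (P r) := fun i => by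
    rw [effect_flatten_replicate, Finset.sum_range_succ, smul_add, add_assoc]
  refine ⟨by simp [hf.length_eq], by simpa using hf.flatten, ?_, fun s hs hPs => ?_, fun i => ?_,
    fun i k => ?_, fun i => ?_⟩
  · intro α hα
    rcases List.mem_cons.1 hα with rfl | hα
    · exact ⟨hP, a, rfl⟩
    · exact hf.mem α hα
  · refine ⟨by simpa using hs, by simp, ?_⟩
    change ((τ :: τs).getLastD []).length + s ≤ ρ.len
    rcases hs.eq_or_lt with rfl | hs
    · have h1 : (τ :: τs).getLastD [] ∈ τ :: τs := by
        rw [List.getLastD_cons, List.getLastD_eq_getLast?]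
        cases hg : τs.getLast? with
        | none => simp
        | some σ => simp [List.mem_of_getLast? hg]
      have h2 := (List.sublist_flatten_of_mem h1).length_le
      rw [List.flatten_cons, hf.flatten, seg_length] at h2
      omega
    · exact (hf.ends s hs hPs).2.2
  · rw [hp]
    exact ((h.walk a).flatten_replicate i).append (hf.walk i)
  · rw [hp]
    refine nonneg_effect_take_append (h.nonneg_replicate ha i) (fun k => ?_) k
    rw [he]; exact hf.nonneg i k
  · rw [hp, effect_append, ← add_assoc, he, hf.total]

theorem Factors.of_eq_nil {a : ℕ} {τ : List (Transition n)} {τs αs : List (List (Transition n))}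
    (hf : ρ.Factors P a (a + 1) τ τs αs) (hP : P a = []) : ρ.Factors P a a τ τs αs := by
  have he : ∑ r ∈ Finset.range (a + 1), effect (P r) = ∑ r ∈ Finset.range a, effect (P r) := by
    rw [Finset.sum_range_succ, hP, effect_nil, add_zero]
  refine ⟨hf.length_eq, hf.flatten, hf.mem, fun s hs hPs => hf.ends s ?_ hPs, hf.walk, ?_, ?_⟩
  · rcases hs.eq_or_lt with rfl | hs
    · exact absurd hP hPs
    · exact hs
  · rw [← he]; exact hf.nonneg
  · rw [← he]; exact hf.total

theorem exists_factors (h0 : ρ.x ρ.len = 0) (h : ρ.IsPump P ℓ ρ.len 0) :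
    ∃ τ τs αs, ρ.Factors P 0 0 τ τs αs := by
  have hins : ∀ a ≤ ρ.len, (∃ τ τs αs, ρ.Factors P a (a + 1) τ τs αs) →
      ∃ τ τs αs, ρ.Factors P a a τ τs αs := by
    rintro a ha ⟨τ, τs, αs, hf⟩
    by_cases hP : P a = []
    · exact ⟨_, _, _, hf.of_eq_nil hP⟩
    · exact ⟨_, _, _, hf.insert h ha hP⟩
  exact Nat.decreasingInduction (motive := fun a _ => ∃ τ τs αs, ρ.Factors P a a τ τs αs)
    (fun a ha ⟨_, _, _, hf⟩ => hins a ha.le ⟨_, _, _, hf.step h ha⟩)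
    (hins ρ.len le_rfl ⟨_, _, _, factors_len h0 h⟩) (Nat.zero_le ρ.len)

/-- The bound is at most exponential. -/
theorem two_mul_bound_le (ρ : Run n) :
    2 * ρ.bound ≤ ((600 * (n * ρ.M) ^ 6 + 2) ^ 40) ^ n := by
  have hn := ρ.pos_n
  have hD : ρ.D (n + 1) ≤ (600 * (n * ρ.M) ^ 6 + 2) ^ (2 * n) :=
    (Nat.pow_le_pow_left (Nat.le_add_right _ 2) _).trans
      (Nat.pow_le_pow_right (by omega) (by omega))
  have hE : 2 ≤ 600 * (n * ρ.M) ^ 6 + 2 := Nat.le_add_left _ _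
  rw [bound]
  generalize 600 * (n * ρ.M) ^ 6 + 2 = E at *
  have h1 : ρ.D (n + 1) ^ 9 + 1 ≤ 2 * E ^ (18 * n) := by
    have h2 : ρ.D (n + 1) ^ 9 ≤ E ^ (18 * n) := by
      refine (Nat.pow_le_pow_left hD 9).trans_eq ?_
      rw [← pow_mul]; congr 1; ring
    have h3 : 1 ≤ E ^ (18 * n) := Nat.one_le_pow _ _ (by omega)
    omega
  have h4 : n ≤ E ^ n := (Nat.lt_two_pow_self).le.trans (Nat.pow_le_pow_left hE n)
  have h5 : 8 ≤ E ^ (3 * n) :=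
    calc 8 = 2 ^ 3 := rfl
      _ ≤ E ^ 3 := Nat.pow_le_pow_left hE 3
      _ ≤ E ^ (3 * n) := Nat.pow_le_pow_right (by omega) (by omega)
  calc 2 * (n * (ρ.D (n + 1) ^ 9 + 1) ^ 2) ≤ 2 * (E ^ n * (2 * E ^ (18 * n)) ^ 2) := by gcongr
    _ = 8 * (E ^ n * E ^ (36 * n)) := by ring
    _ ≤ E ^ (3 * n) * (E ^ n * E ^ (36 * n)) := by gcongr
    _ = (E ^ 40) ^ n := by ring

end Run

end TwoVASS

open TwoVASS in
/-- Pumping.  There is a polynomial `p` with natural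
coefficients such that every (0,0)-run `τ` of a 2-VASS `V` (with `n` states and
norm `M`) of length greater than `p(nM)ⁿ` factors into `τ = τ₀τ₁⋯τ_k` (k ≥ 1)
such that, for some non-empty cycles `α₁, …, α_k` of length at most `p(nM)ⁿ`,
the path `τ₀ α₁ⁱ τ₁ α₂ⁱ ⋯ α_kⁱ τ_k` is a (0,0)-run for every `i ∈ ℕ`;
moreover `τ₀` and `τ_k` have length at most `p(nM)ⁿ`. -/
theorem pumping :
    ∃ p : Polynomial ℕ, ∀ (n : ℕ) (V : VASS n) (π : List (Transition n)) (q : Fin n),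
      IsZeroRun V π q →
      (p.eval (n * vassNorm V)) ^ n < π.length →
      ∃ (τs αs : List (List (Transition n))),
        τs.length = αs.length + 1 ∧
        1 ≤ αs.length ∧
        π = τs.flatten ∧
        (∀ α ∈ αs, IsCycle V α ∧ α.length ≤ (p.eval (n * vassNorm V)) ^ n) ∧
        (∀ i : ℕ, IsZeroRun V (pumped i τs αs) q) ∧
        (τs.headD []).length ≤ (p.eval (n * vassNorm V)) ^ n ∧
        (τs.getLastD []).length ≤ (p.eval (n * vassNorm V)) ^ n := by
  refine ⟨(600 * Polynomial.X ^ 6 + 2) ^ 40, fun n V π q hπ hlen => ?_⟩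
  set ρ := Run.ofPath hπ with hρ
  have hb := ρ.two_mul_bound_le
  have hp : Polynomial.eval (n * vassNorm V) ((600 * Polynomial.X ^ 6 + 2) ^ 40 : Polynomial ℕ) =
      (600 * (n * ρ.M) ^ 6 + 2) ^ 40 := by
    simp [hρ, Run.ofPath]
  rw [hp] at hlen ⊢
  have hρlen : ρ.len = π.length := rfl
  have h0 : ρ.x ρ.len = 0 := by
    change vecAt π 0 π.length = 0
    rw [vecAt, List.take_length, hπ.2, add_zero]
  obtain ⟨P, hP, ⟨s, hs, hPs⟩, r, hr, hr', hPr⟩ := Run.exists_pump h0 (by omega)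
  obtain ⟨τ, τs, αs, hf⟩ := Run.exists_factors h0 hP
  obtain ⟨h1, h2, -⟩ := hf.ends s (Nat.zero_le s) hPs
  obtain ⟨-, -, h3⟩ := hf.ends r (Nat.zero_le r) hPr
  have hz : ∀ i : ℕ, ρ.x 0 + i • ∑ r ∈ Finset.range 0, effect (P r) = 0 := fun i => by
    simp [ρ.start]
  refine ⟨τ :: τs, αs, by simp [hf.length_eq], List.length_pos_iff.2 h2, ?_, ?_, fun i => ?_,
    ?_, by omega⟩
  · rw [List.flatten_cons, hf.flatten]
    exact (Run.seg_ofPath hπ).symm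
  · intro α hα
    obtain ⟨hne, s, rfl⟩ := hf.mem α hα
    exact ⟨TW.isCycle (V := V) (hP.walk s) hne, (hP.len_le s).trans hb⟩
  · refine ⟨⟨TW.isPath (V := V) (hf.walk i), ?_, fun k _ => ?_⟩, ?_⟩
    · exact (hf.walk i).startsAt
    · have := hf.nonneg i k
      rwa [hz] at this
    · have := hf.total i
      rwa [hz, zero_add] at this
  · change τ.length ≤ _
    omega
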